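/- Let g = s ⋉ h be a finite-dimensional sympathetic complex Lie algebra that is not semisimple, with simple Levi subalgebra s, whose radical h decomposes into 4 simple s-modules satisfying the convention. Then dim_C g ≥ 25. Moreover, dim_C g = 25 if and only if s is isomorphic to sl2(C) and the four irreducible modules have dimensions 7, 5, 7 and 3 (highest weights 6, 4, 6, 2), with Z(h) equal to the 3-dimensional module. -/

import Mathlib

namespace Symp

variable (g : Type*) [LieRing g] [LieAlgebra ℂ g]

/-- A derivation of `g` is inner if it is given by the adjoint action of some element. -/
def IsInnerDer {g : Type*} [LieRing g] [LieAlgebra ℂ g] (D : LieDerivation ℂ g g) : Prop :=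
  ∃ x : g, ∀ y : g, D y = ⁅x, y⁆

/-- `g` is perfect: `[g,g] = g`. -/
def IsPerfectLie : Prop :=
  ⁅(⊤ : LieIdeal ℂ g), (⊤ : LieIdeal ℂ g)⁆ = ⊤

/-- A sympathetic Lie algebra: trivial centre, perfect, all derivations inner. -/
def IsSympathetic : Prop :=
  LieAlgebra.center ℂ g = ⊥ ∧ IsPerfectLie g ∧
    ∀ D : LieDerivation ℂ g g, IsInnerDer D

/-- `s` is a simple Levi subalgebra of `g`: it is a simple Lie algebra and a vector-space
complement to the radical. -/
def IsSimpleLevi (s : LieSubalgebra ℂ g) : Prop :=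
  LieAlgebra.IsSimple ℂ s ∧
    IsCompl s.toSubmodule (LieAlgebra.radical ℂ g).toSubmodule

/-- `s` is a Levi subalgebra of `g` isomorphic to `sl₂(ℂ)`. -/
def IsSl2Levi (s : LieSubalgebra ℂ g) : Prop :=
  Nonempty (s ≃ₗ⁅ℂ⁆ LieAlgebra.SpecialLinear.sl (Fin 2) ℂ) ∧
    IsCompl s.toSubmodule (LieAlgebra.radical ℂ g).toSubmodule

/-- The subspace spanned by all brackets `⁅x, y⁆` with `x ∈ A`, `y ∈ B`. -/
def lieSpan2 (A B : Submodule ℂ g) : Submodule ℂ g :=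
  Submodule.span ℂ {z : g | ∃ x ∈ A, ∃ y ∈ B, z = ⁅x, y⁆}

/-- A subspace of `g` invariant under the bracket action of the subalgebra `s`. -/
def Invariant (s : LieSubalgebra ℂ g) (W : Submodule ℂ g) : Prop :=
  ∀ x ∈ s, ∀ w ∈ W, ⁅x, w⁆ ∈ W

/-- `V` is an irreducible `s`-submodule of `g`. -/
def IsIrreducibleSMod (s : LieSubalgebra ℂ g) (V : Submodule ℂ g) : Prop :=
  V ≠ ⊥ ∧ Invariant g s V ∧
    ∀ W : Submodule ℂ g, W ≤ V → Invariant g s W → W = ⊥ ∨ W = V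

/-- The family `V` is a decomposition of the radical of `g` into irreducible `s`-modules. -/
def IsDecomp (s : LieSubalgebra ℂ g) {k : ℕ} (V : Fin k → Submodule ℂ g) : Prop :=
  (∀ i, IsIrreducibleSMod g s (V i)) ∧ iSupIndep V ∧
    (⨆ i, V i) = (LieAlgebra.radical ℂ g).toSubmodule

/-- The convention: any nonzero bracket of two of the modules equals one of them,
for a unique index. -/
def Convention {k : ℕ} (V : Fin k → Submodule ℂ g) : Prop :=
  ∀ i j, lieSpan2 g (V i) (V j) ≠ ⊥ → ∃! q, lieSpan2 g (V i) (V j) = V q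

/-- The centre `Z(h)` of the radical `h = Rad(g)`, as a subspace of `g`. -/
def centerRad : Submodule ℂ g where
  carrier := {x | x ∈ LieAlgebra.radical ℂ g ∧ ∀ y ∈ LieAlgebra.radical ℂ g, ⁅x, y⁆ = 0}
  add_mem' := by
    rintro a b ⟨ha, ha'⟩ ⟨hb, hb'⟩
    exact ⟨add_mem ha hb, fun y hy => by rw [add_lie, ha' y hy, hb' y hy, add_zero]⟩
  zero_mem' := ⟨zero_mem _, fun y _ => zero_lie y⟩
  smul_mem' := by
    rintro c a ⟨ha, ha'⟩
    exact ⟨SMulMemClass.smul_mem c ha, fun y hy => by rw [smul_lie, ha' y hy, smul_zero]⟩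

/-- The derived subalgebra `[h,h]` of the radical `h = Rad(g)`, as a subspace of `g`. -/
def derivedRad : Submodule ℂ g :=
  lieSpan2 g (LieAlgebra.radical ℂ g).toSubmodule (LieAlgebra.radical ℂ g).toSubmodule

end Symp

/-!
Since `g` is perfect, its radical is nilpotent and the four modules are spread over its lower
central series. If degrees `d i`, not all zero, could be attached to the modules so that the
bracket is additive in them, multiplication by `d i` on `V i` would be a derivation of `g`, and it
would not be inner because the radical acts nilpotently. Together with the Jacobi identity this
leaves only two kinds of bracket tables; in both `V 0` and `V 1` generate the radical, `V 2` is
`[V 0, V 0]` or `[V 0, V 1]`, and `V 3 = [V 0, V 2]` is the last term of the lower central series.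

For `s = 𝔰𝔩₂` the brackets are Clebsch–Gordan maps, and the Jacobi identity on suitable weight
vectors becomes a numerical condition on the four highest weights. Its only solution with weight
sum at most `18` is `(6, 4, 6, 2)`, which gives `dim g = 3 + 7 + 5 + 7 + 3 = 25`.

Every other `s` leads to `dim g > 25`. If `s = 𝔰𝔩₃`, the bracket tables force all weights into the
root lattice (they satisfy a linear system over `ℤ / 3` without nonzero solution), so that every
module has dimension at least `5`. For the remaining `s` one has `dim s ≥ 10`, and every module is
faithful with trace zero action, hence `dim V i ≥ 4`.
-/

namespace Symp

section Subspaces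

variable {g : Type*} [LieRing g] [LieAlgebra ℂ g] {A B C A' B' W : Submodule ℂ g}

lemma lieSpan2_le : lieSpan2 g A B ≤ W ↔ ∀ x ∈ A, ∀ y ∈ B, ⁅x, y⁆ ∈ W :=
  Submodule.span_le.trans
    ⟨fun h x hx y hy => h ⟨x, hx, y, hy, rfl⟩, by rintro h _ ⟨x, hx, y, hy, rfl⟩; exact h x hx y hy⟩

lemma lie_mem_lieSpan2 {x y : g} (hx : x ∈ A) (hy : y ∈ B) : ⁅x, y⁆ ∈ lieSpan2 g A B :=
  Submodule.subset_span ⟨x, hx, y, hy, rfl⟩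

lemma lieSpan2_mono (hA : A ≤ A') (hB : B ≤ B') : lieSpan2 g A B ≤ lieSpan2 g A' B' :=
  lieSpan2_le.2 fun _ hx _ hy => lie_mem_lieSpan2 (hA hx) (hB hy)

lemma lieSpan2_comm (A B : Submodule ℂ g) : lieSpan2 g A B = lieSpan2 g B A := by
  have aux (A B : Submodule ℂ g) : lieSpan2 g A B ≤ lieSpan2 g B A :=
    lieSpan2_le.2 fun x hx y hy => lie_skew x y ▸ neg_mem (lie_mem_lieSpan2 hy hx)
  exact le_antisymm (aux A B) (aux B A)

lemma lieSpan2_eq_bot : lieSpan2 g A B = ⊥ ↔ ∀ x ∈ A, ∀ y ∈ B, ⁅x, y⁆ = 0 := by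
  simp [← le_bot_iff, lieSpan2_le]

lemma lieSpan2_bot (A : Submodule ℂ g) : lieSpan2 g A ⊥ = ⊥ :=
  lieSpan2_eq_bot.2 fun x _ y hy => by rw [(Submodule.mem_bot ℂ).1 hy, lie_zero]

lemma exists_lie_ne_zero_of_lieSpan2_ne_bot (h : lieSpan2 g A B ≠ ⊥) :
    ∃ x ∈ A, ∃ y ∈ B, ⁅x, y⁆ ≠ 0 := by
  simpa [lieSpan2_eq_bot] using h

lemma lieSpan2_iSup_iSup_le {ι κ : Sort*} {A : ι → Submodule ℂ g} {B : κ → Submodule ℂ g} :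
    lieSpan2 g (⨆ i, A i) (⨆ j, B j) ≤ ⨆ i, ⨆ j, lieSpan2 g (A i) (B j) := by
  refine lieSpan2_le.2 fun x hx y hy => ?_
  induction hx using Submodule.iSup_induction' with
  | mem i x hx =>
    induction hy using Submodule.iSup_induction' with
    | mem j y hy =>
      exact Submodule.mem_iSup_of_mem i (Submodule.mem_iSup_of_mem j (lie_mem_lieSpan2 hx hy))
    | zero => simp
    | add y y' _ _ hy hy' => simpa only [lie_add] using add_mem hy hy'
  | zero => simp
  | add x x' _ _ hx hx' => simpa only [add_lie] using add_mem hx hx'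

lemma lieSpan2_lieSpan2_le (A B C : Submodule ℂ g) :
    lieSpan2 g (lieSpan2 g A B) C ≤
      lieSpan2 g A (lieSpan2 g B C) ⊔ lieSpan2 g B (lieSpan2 g A C) := by
  refine lieSpan2_le.2 fun x hx c hc => ?_
  induction hx using Submodule.span_induction with
  | mem x hx =>
    obtain ⟨a, ha, b, hb, rfl⟩ := hx
    rw [lie_lie]
    exact sub_mem (Submodule.mem_sup_left (lie_mem_lieSpan2 ha (lie_mem_lieSpan2 hb hc)))
      (Submodule.mem_sup_right (lie_mem_lieSpan2 hb (lie_mem_lieSpan2 ha hc)))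
  | zero => simp
  | add x y _ _ hx hy => simpa only [add_lie] using add_mem hx hy
  | smul t x _ hx => simpa only [smul_lie] using Submodule.smul_mem _ t hx

lemma IsIrreducibleSMod.le_of_mem {s : LieSubalgebra ℂ g} {v : g} (hA : IsIrreducibleSMod g s A)
    (hB : Invariant g s B) (hv : v ≠ 0) (hvA : v ∈ A) (hvB : v ∈ B) : A ≤ B := by
  refine inf_eq_left.1 ((hA.2.2 (A ⊓ B) inf_le_left fun x hx w hw =>
    ⟨hA.2.1 x hx w hw.1, hB x hx w hw.2⟩).resolve_left fun h0 => hv ?_)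
  exact (Submodule.mem_bot ℂ).1 (h0 ▸ ⟨hvA, hvB⟩)

end Subspaces

section NilpotentRadical

open LieAlgebra LieModule Module

variable {g : Type*} [LieRing g] [LieAlgebra ℂ g]

lemma toSubmodule_lie (I J : LieIdeal ℂ g) :
    (⁅I, J⁆ : LieIdeal ℂ g).toSubmodule = lieSpan2 g I.toSubmodule J.toSubmodule := by
  refine (LieSubmodule.lieIdeal_oper_eq_linear_span' J I).trans (congrArg (Submodule.span ℂ) ?_)
  ext z
  exact exists_congr fun x => and_congr_right fun _ => exists_congr fun y =>
    and_congr_right fun _ => eq_comm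

lemma toSubmodule_lcs_succ (I : LieIdeal ℂ g) (n : ℕ) :
    (I.lcs g (n + 1)).toSubmodule = lieSpan2 g I.toSubmodule (I.lcs g n).toSubmodule := by
  rw [LieIdeal.lcs_succ, toSubmodule_lie]

lemma lieSpan2_lcs_le (I : LieIdeal ℂ g) (m n : ℕ) :
    lieSpan2 g (I.lcs g m).toSubmodule (I.lcs g n).toSubmodule ≤ (I.lcs g (m + n)).toSubmodule := by
  induction m generalizing n with
  | zero => exact lieSpan2_le.2 fun x _ y hy => by simpa using lie_mem_right ℂ g _ x y hy
  | succ m ih =>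
    rw [toSubmodule_lcs_succ]
    refine (lieSpan2_lieSpan2_le _ _ _).trans (sup_le ?_ ?_)
    · rw [show m + 1 + n = m + n + 1 by ring, toSubmodule_lcs_succ]
      exact lieSpan2_mono le_rfl (ih n)
    · rw [show m + 1 + n = m + (n + 1) by ring, ← toSubmodule_lcs_succ]
      exact ih (n + 1)

lemma antitone_lcs (I : LieIdeal ℂ g) (M : Type*) [AddCommGroup M] [Module ℂ M]
    [LieRingModule g M] : Antitone (I.lcs M) :=
  antitone_nat_of_succ_le fun n => LieIdeal.lcs_succ I M n ▸ LieSubmodule.lie_le_right _ _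

lemma IsPerfectLie.lcs_radical_one (hg : IsPerfectLie g) {s : LieSubalgebra ℂ g}
    (hs : IsCompl s.toSubmodule (radical ℂ g).toSubmodule) :
    (radical ℂ g).lcs g 1 = radical ℂ g := by
  have hle : (radical ℂ g).lcs g 1 ≤ radical ℂ g := by
    simpa using LieSubmodule.lie_le_left (radical ℂ g) (⊤ : LieIdeal ℂ g)
  have hcover : s.toSubmodule ⊔ ((radical ℂ g).lcs g 1).toSubmodule = ⊤ := by
    have lie_rad {x y : g} (hx : x ∈ radical ℂ g) :
        ⁅x, y⁆ ∈ ((radical ℂ g).lcs g 1).toSubmodule := by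
      rw [toSubmodule_lcs_succ]
      exact lie_mem_lieSpan2 hx trivial
    rw [eq_top_iff, ← LieSubmodule.top_toSubmodule (R := ℂ) (L := g), ← hg, toSubmodule_lie]
    refine lieSpan2_le.2 fun x _ y _ => ?_
    obtain ⟨a, r, ha, hr, rfl⟩ := Submodule.codisjoint_iff_exists_add_eq.1 hs.codisjoint x
    obtain ⟨b, t, hb, ht, rfl⟩ := Submodule.codisjoint_iff_exists_add_eq.1 hs.codisjoint y
    rw [add_lie, lie_add, ← lie_skew a t]
    exact add_mem (add_mem (Submodule.mem_sup_left (s.lie_mem ha hb))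
      (Submodule.mem_sup_right (neg_mem (lie_rad ht)))) (Submodule.mem_sup_right (lie_rad hr))
  refine (LieSubmodule.toSubmodule_injective (?_ : _ = _))
  exact eq_of_le_of_inf_le_of_sup_le hle (hs.symm.inf_eq_bot ▸ bot_le)
    (by rw [sup_comm _ s.toSubmodule, sup_comm _ s.toSubmodule, hcover]; exact le_top)

lemma IsPerfectLie.trace_toEnd_eq_zero (hg : IsPerfectLie g) (M : Type*) [AddCommGroup M]
    [Module ℂ M] [LieRingModule g M] [LieModule ℂ g M] (x : g) :
    LinearMap.trace ℂ M (toEnd ℂ g M x) = 0 := by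
  refine trace_toEnd_eq_zero_of_mem_lcs ℂ g M le_rfl (x := x) ?_
  rw [lowerCentralSeries_succ, lowerCentralSeries_zero, hg]
  trivial

variable [FiniteDimensional ℂ g]

lemma IsPerfectLie.exists_radical_lie_eq_zero (hg : IsPerfectLie g) (M : Type*) [AddCommGroup M]
    [Module ℂ M] [LieRingModule g M] [LieModule ℂ g M] [FiniteDimensional ℂ M] [Nontrivial M] :
    ∃ v : M, v ≠ 0 ∧ ∀ x ∈ radical ℂ g, ⁅x, v⁆ = 0 := by
  obtain ⟨χ, hχ⟩ := exists_nontrivial_weightSpace_of_isSolvable ℂ (radical ℂ g) M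
  let W : LieSubmodule ℂ g M := weightSpaceOfIsLieTower ℂ M χ
  have : Nontrivial W := hχ
  have lie_eq (x : radical ℂ g) (w : M) (hw : w ∈ W) : ⁅(x : g), w⁆ = χ x • w :=
    (mem_weightSpace (M := M) χ w).1 hw x
  have χ_eq_zero (x : radical ℂ g) : χ x = 0 := by
    have hx : toEnd ℂ g W x = χ x • (1 : End ℂ W) := by
      ext w; simpa using lie_eq x w w.2
    simpa [hx, (Module.finrank_pos (R := ℂ) (M := W)).ne'] using
      hg.trace_toEnd_eq_zero W (x : g)
  obtain ⟨v, hv⟩ := exists_ne (0 : W)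
  refine ⟨v, by simpa using hv, fun x hx => ?_⟩
  simpa [χ_eq_zero] using lie_eq ⟨x, hx⟩ v v.2

lemma IsPerfectLie.exists_lcs_radical_eq_bot (hg : IsPerfectLie g) (M : Type*) [AddCommGroup M]
    [Module ℂ M] [LieRingModule g M] [LieModule ℂ g M] [FiniteDimensional ℂ M] :
    ∃ n, (radical ℂ g).lcs M n = ⊥ := by
  have := LieSubmodule.wellFoundedLT_of_isArtinian ℂ g M
  obtain ⟨n, hn⟩ := WellFoundedGT.monotone_chain_condition
    (⟨fun n => OrderDual.toDual ((radical ℂ g).lcs M n), fun _ _ h => antitone_lcs _ M h⟩ :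
      ℕ →o (LieSubmodule ℂ g M)ᵒᵈ)
  have hn : (radical ℂ g).lcs M n = ⁅radical ℂ g, (radical ℂ g).lcs M n⁆ :=
    (congrArg OrderDual.ofDual (hn (n + 1) n.le_succ)).trans (LieIdeal.lcs_succ ..)
  set N := (radical ℂ g).lcs M n
  refine ⟨n, ?_⟩
  by_contra hN
  have : Nontrivial N := (LieSubmodule.nontrivial_iff_ne_bot ℂ g M).2 hN
  -- A functional on `N` killed by the radical vanishes on `⁅radical, N⁆ = N`.
  obtain ⟨φ, hφ, hφ_lie⟩ := hg.exists_radical_lie_eq_zero (Dual ℂ N)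
  have hle : N.toSubmodule ≤ (LinearMap.ker φ).map N.toSubmodule.subtype := by
    conv_lhs => rw [hn, LieSubmodule.lieIdeal_oper_eq_linear_span']
    rw [Submodule.span_le]
    rintro _ ⟨x, hx, m, hm, rfl⟩
    refine ⟨⟨⁅x, m⁆, N.lie_mem hm⟩, ?_, rfl⟩
    have hφ_apply := congrArg (fun ψ : Dual ℂ N => ψ ⟨m, hm⟩) (hφ_lie x hx)
    have hφ_lie_eq : φ ⁅x, (⟨m, hm⟩ : N)⁆ = 0 := by simpa using hφ_apply
    exact hφ_lie_eq
  refine hφ (LinearMap.ext fun m => ?_)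
  obtain ⟨m', hm', h⟩ := hle m.2
  rwa [← Subtype.ext h]

end NilpotentRadical

section Decomposition

open LieAlgebra Module

variable {g : Type*} [LieRing g] [LieAlgebra ℂ g] {k : ℕ} {s : LieSubalgebra ℂ g}
  {V : Fin k → Submodule ℂ g}

/-- The standing situation: a sympathetic Lie algebra with a simple Levi subalgebra `s` and a
decomposition `V` of its radical into simple `s`-modules satisfying the convention. -/
structure IsSympatheticDecomp (s : LieSubalgebra ℂ g) (V : Fin k → Submodule ℂ g) : Prop where
  isSympathetic : IsSympathetic g
  isSimpleLevi : IsSimpleLevi g s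
  isDecomp : IsDecomp g s V
  convention : Convention g V

namespace IsSympatheticDecomp

lemma comp_perm (h : IsSympatheticDecomp s V) (e : Equiv.Perm (Fin k)) :
    IsSympatheticDecomp s (V ∘ e) where
  isSympathetic := h.isSympathetic
  isSimpleLevi := h.isSimpleLevi
  isDecomp := ⟨fun i => h.isDecomp.1 (e i), h.isDecomp.2.1.comp e.injective,
    (e.iSup_comp (g := V)).trans h.isDecomp.2.2⟩
  convention := fun i j hij => by
    obtain ⟨q, hq, huniq⟩ := h.convention (e i) (e j) hij
    exact ⟨e.symm q, by simpa using hq, fun p hp => by simpa using congrArg e.symm (huniq (e p) hp)⟩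

lemma ne_bot (h : IsSympatheticDecomp s V) (i : Fin k) : V i ≠ ⊥ := (h.isDecomp.1 i).1

lemma lie_mem (h : IsSympatheticDecomp s V) {i : Fin k} {x v : g} (hx : x ∈ s) (hv : v ∈ V i) :
    ⁅x, v⁆ ∈ V i :=
  (h.isDecomp.1 i).2.1 x hx v hv

lemma le_radical (h : IsSympatheticDecomp s V) (i : Fin k) : V i ≤ (radical ℂ g).toSubmodule :=
  h.isDecomp.2.2 ▸ le_iSup V i

lemma mem_of_le_biSup (h : IsSympatheticDecomp s V) {q : Fin k} {S : Set (Fin k)}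
    (hq : V q ≤ ⨆ i ∈ S, V i) : q ∈ S := by
  by_contra hS
  exact h.ne_bot q (disjoint_self.1 ((h.isDecomp.2.1.disjoint_biSup hS).mono_right hq))

lemma injective (h : IsSympatheticDecomp s V) : Function.Injective V :=
  h.isDecomp.2.1.injective h.ne_bot

lemma lieSpan2_eq_bot_or_exists (h : IsSympatheticDecomp s V) (i j : Fin k) :
    lieSpan2 g (V i) (V j) = ⊥ ∨ ∃ q, lieSpan2 g (V i) (V j) = V q :=
  or_iff_not_imp_left.2 fun hij => (h.convention i j hij).exists

lemma levi_sup_iSup_eq_top (h : IsSympatheticDecomp s V) : s.toSubmodule ⊔ ⨆ i, V i = ⊤ :=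
  h.isDecomp.2.2 ▸ h.isSimpleLevi.2.sup_eq_top

lemma eq_top_of_le (h : IsSympatheticDecomp s V) {W : Submodule ℂ g} (hs : s.toSubmodule ≤ W)
    (hV : ∀ i, V i ≤ W) : W = ⊤ :=
  top_le_iff.1 (h.levi_sup_iSup_eq_top ▸ sup_le hs (iSup_le hV))

lemma eq_top_of_lie_mem (h : IsSympatheticDecomp s V) {W : Submodule ℂ g} (hs : s.toSubmodule ≤ W)
    (hsV : ∀ i, ∀ x ∈ s, ∀ v ∈ V i, ⁅x, v⁆ ∈ W) (hVV : ∀ i j, lieSpan2 g (V i) (V j) ≤ W) :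
    W = ⊤ := by
  have lie_mem (x y : g) : ⁅x, y⁆ ∈ W := by
    have hx : x ∈ s.toSubmodule ⊔ ⨆ i, V i := h.levi_sup_iSup_eq_top ▸ trivial
    have hy : y ∈ s.toSubmodule ⊔ ⨆ i, V i := h.levi_sup_iSup_eq_top ▸ trivial
    have lie_mem_levi (x : g) (hx : x ∈ s) (v : g) (hv : v ∈ ⨆ i, V i) : ⁅x, v⁆ ∈ W :=
      (iSup_le fun i v hv => hsV i x hx v hv : ⨆ i, V i ≤ W.comap (ad ℂ g x)) hv
    obtain ⟨a, ha, v, hv, rfl⟩ := Submodule.mem_sup.1 hx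
    obtain ⟨b, hb, w, hw, rfl⟩ := Submodule.mem_sup.1 hy
    rw [add_lie, lie_add, lie_add, ← lie_skew v b]
    exact add_mem (add_mem (hs (s.lie_mem ha hb)) (lie_mem_levi a ha w hw))
      (add_mem (neg_mem (lie_mem_levi b hb v hv))
        ((lieSpan2_iSup_iSup_le.trans (iSup₂_le hVV)) (lie_mem_lieSpan2 hv hw)))
  rw [← top_le_iff, ← LieSubmodule.top_toSubmodule (R := ℂ) (L := g), ← h.isSympathetic.2.1,
    toSubmodule_lie]
  exact lieSpan2_le.2 fun x _ y _ => lie_mem x y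

lemma isCompl_levi_sup (h : IsSympatheticDecomp s V) (i : Fin k) :
    IsCompl (V i) ((⨆ j ≠ i, V j) ⊔ s.toSubmodule) := by
  refine (h.isDecomp.2.1 i).isCompl_sup_right_of_isCompl_sup_left ?_
  rw [← iSup_split_single, h.isDecomp.2.2]
  exact h.isSimpleLevi.2.symm

/-- The projection of `g` onto the simple module `V i` along `s` and the other modules. -/
noncomputable def proj (h : IsSympatheticDecomp s V) (i : Fin k) : g →ₗ[ℂ] g :=
  Submodule.projection _ _ (h.isCompl_levi_sup i)

lemma proj_mem (h : IsSympatheticDecomp s V) (i : Fin k) (x : g) : h.proj i x ∈ V i :=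
  Submodule.projection_apply_mem _ x

lemma proj_apply_self (h : IsSympatheticDecomp s V) {i : Fin k} {v : g} (hv : v ∈ V i) :
    h.proj i v = v :=
  Submodule.projection_apply_of_mem_left _ hv

lemma proj_apply_of_ne (h : IsSympatheticDecomp s V) {i j : Fin k} (hij : j ≠ i) {v : g}
    (hv : v ∈ V j) : h.proj i v = 0 :=
  (Submodule.projection_apply_eq_zero_iff _).2
    (Submodule.mem_sup_left (Submodule.mem_iSup_of_mem j (Submodule.mem_iSup_of_mem hij hv)))

lemma proj_apply_levi (h : IsSympatheticDecomp s V) (i : Fin k) {x : g} (hx : x ∈ s) :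
    h.proj i x = 0 :=
  (Submodule.projection_apply_eq_zero_iff _).2 (Submodule.mem_sup_right hx)

lemma proj_lie (h : IsSympatheticDecomp s V) (i : Fin k) {x : g} (hx : x ∈ s) (y : g) :
    h.proj i ⁅x, y⁆ = ⁅x, h.proj i y⁆ := by
  have hcomm : h.proj i ∘ₗ ad ℂ g x = ad ℂ g x ∘ₗ h.proj i := by
    refine LinearMap.eqLocus_eq_top.1 (h.eq_top_of_le (fun y hy => ?_) (fun j v hv => ?_))
    · simp [h.proj_apply_levi i hy, h.proj_apply_levi i (s.lie_mem hx hy)]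
    · obtain rfl | hij := eq_or_ne j i
      · simp [h.proj_apply_self hv, h.proj_apply_self (h.lie_mem hx hv)]
      · simp [h.proj_apply_of_ne hij hv, h.proj_apply_of_ne hij (h.lie_mem hx hv)]
  exact LinearMap.congr_fun hcomm y

lemma exists_lie_ne_zero_of_lieSpan2_ne (h : IsSympatheticDecomp s V) {i : Fin k}
    (hi : ∀ a b, lieSpan2 g (V a) (V b) ≠ V i) : ∃ x ∈ s, ∃ v ∈ V i, ⁅x, v⁆ ≠ 0 := by
  by_contra! htriv
  have hker : LinearMap.ker (h.proj i) = ⊤ := by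
    refine h.eq_top_of_lie_mem (fun x hx => h.proj_apply_levi i hx) (fun j x hx v hv => ?_)
      (fun a b => ?_)
    · obtain rfl | hij := eq_or_ne j i
      · simp [htriv x hx v hv]
      · exact h.proj_apply_of_ne hij (h.lie_mem hx hv)
    · obtain hab | ⟨q, hab⟩ := h.lieSpan2_eq_bot_or_exists a b
      · exact hab ▸ bot_le
      · exact hab ▸ fun v hv => h.proj_apply_of_ne (by rintro rfl; exact hi a b hab) hv
  refine h.ne_bot i ((Submodule.eq_bot_iff _).2 fun v hv => ?_)
  exact (h.proj_apply_self hv).symm.trans (hker ▸ trivial : v ∈ LinearMap.ker (h.proj i))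

lemma exists_lie_ne_zero_of_lieSpan2_eq_bot (h : IsSympatheticDecomp s V) {i : Fin k}
    (hi : ∀ j, lieSpan2 g (V j) (V i) = ⊥) : ∃ x ∈ s, ∃ v ∈ V i, ⁅x, v⁆ ≠ 0 := by
  by_contra! htriv
  refine h.ne_bot i ((Submodule.eq_bot_iff _).2 fun v hv => ?_)
  have hker : ad ℂ g v = 0 :=
    LinearMap.ker_eq_top.1 <| h.eq_top_of_le (fun x hx => by simp [← lie_skew v x, htriv x hx v hv])
      (fun j w hw => by simp [← lie_skew v w, lieSpan2_eq_bot.1 (hi j) w hw v hv])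
  have hv' : v ∈ center ℂ g := (LieModule.mem_maxTrivSubmodule ..).2 fun x => by
    rw [← lie_skew, ← ad_apply ℂ, hker, LinearMap.zero_apply, neg_zero]
  simpa [h.isSympathetic.1] using hv'

lemma mem_radical_of_centralizes (h : IsSympatheticDecomp s V) {x : g}
    (hx : ∀ y ∈ s, ⁅x, y⁆ = 0) : x ∈ radical ℂ g := by
  have := h.isSimpleLevi.1
  obtain ⟨y, r, hy, hr, rfl⟩ :=
    Submodule.codisjoint_iff_exists_add_eq.1 h.isSimpleLevi.2.codisjoint x
  have hlie (z : g) (hz : z ∈ s) : ⁅y, z⁆ = 0 := by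
    refine Submodule.disjoint_def.1 h.isSimpleLevi.2.disjoint _ (s.lie_mem hy hz) ?_
    rw [eq_neg_of_add_eq_zero_left ((add_lie y r z).symm.trans (hx z hz))]
    exact neg_mem (lie_mem_left ℂ g _ r z hr)
  have hcenter : (⟨y, hy⟩ : s) ∈ center ℂ s :=
    (LieModule.mem_maxTrivSubmodule ..).2 fun z => Subtype.ext <| by
      simpa [hlie z z.2] using (lie_skew (z : g) y).symm
  rw [center_eq_bot] at hcenter
  obtain rfl : y = 0 := congrArg Subtype.val ((LieSubmodule.mem_bot _).1 hcenter)
  simpa using hr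

lemma exists_forall_eq_lie (h : IsSympatheticDecomp s V) (D : g →ₗ[ℂ] g) (hs : ∀ x ∈ s, D x = 0)
    (hsV : ∀ i, ∀ x ∈ s, ∀ v ∈ V i, D ⁅x, v⁆ = ⁅x, D v⁆)
    (hVV : ∀ i j, ∀ v ∈ V i, ∀ w ∈ V j, D ⁅v, w⁆ = ⁅v, D w⁆ + ⁅D v, w⁆) :
    ∃ x ∈ radical ℂ g, (∀ y ∈ s, ⁅x, y⁆ = 0) ∧ ∀ y, D y = ⁅x, y⁆ := by
  let ad' : g →ₗ[ℂ] g →ₗ[ℂ] g := (LieModule.toEnd ℂ g g : g →ₗ[ℂ] Module.End ℂ g)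
  have hW : LinearMap.eqLocus (LinearMap.llcomp ℂ g g g D ∘ₗ ad')
      ((LinearMap.llcomp ℂ g g g).flip D ∘ₗ ad' + ad' ∘ₗ D) = ⊤ := by
    refine h.eq_top_of_le (fun x hx => LinearMap.eqLocus_eq_top.1 (h.eq_top_of_le ?_ ?_))
      (fun i v hv => LinearMap.eqLocus_eq_top.1 (h.eq_top_of_le ?_ ?_))
    · intro y hy
      simp [ad', hs x hx, hs y hy, hs _ (s.lie_mem hx hy)]
    · intro i v hv
      simp [ad', hs x hx, hsV i x hx v hv]
    · intro x hx
      have hDv : D ⁅v, x⁆ = ⁅D v, x⁆ := by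
        rw [← lie_skew, map_neg, hsV i x hx v hv, lie_skew]
      simp [ad', hs x hx, hDv]
    · intro j w hw
      simp [ad', hVV i j v hv w hw]
  let δ : LieDerivation ℂ g g :=
    { toLinearMap := D
      leibniz' := fun x y => by
        have hx := LinearMap.eqLocus_eq_top.1 hW
        rw [← lie_skew y (D x), sub_neg_eq_add]
        simpa [ad'] using LinearMap.congr_fun (LinearMap.congr_fun hx x) y }
  obtain ⟨x, hx⟩ := h.isSympathetic.2.2 δ
  have hxs (y : g) (hy : y ∈ s) : ⁅x, y⁆ = 0 := (hx y).symm.trans (hs y hy)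
  exact ⟨x, h.mem_radical_of_centralizes hxs, hxs, hx⟩

end IsSympatheticDecomp
end Decomposition

section Levels

open LieAlgebra Module

variable {g : Type*} [LieRing g] [LieAlgebra ℂ g] {k : ℕ} {s : LieSubalgebra ℂ g}
  {V : Fin k → Submodule ℂ g}

/-- `[V i, V j]` is homogeneous for the degrees `d`: it vanishes or it is a module of degree
`d i + d j`. A family of degrees homogeneous for all pairs is a grading of the radical. -/
def IsHomogeneous (V : Fin k → Submodule ℂ g) (d : Fin k → ℕ) (i j : Fin k) : Prop :=
  lieSpan2 g (V i) (V j) = ⊥ ∨ ∃ q, lieSpan2 g (V i) (V j) = V q ∧ d q = d i + d j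

/-- `ℓ i` is the level of `V i`: the depth of `V i` in the lower central series
`(radical ℂ g).lcs g 1 = h, (radical ℂ g).lcs g 2 = [h, h], …` of the radical `h`. -/
def IsLevel (V : Fin k → Submodule ℂ g) (ℓ : Fin k → ℕ) : Prop :=
  ∀ i n, V i ≤ ((radical ℂ g).lcs g n).toSubmodule ↔ n ≤ ℓ i

lemma level_add_le {ℓ : Fin k → ℕ} (hℓ : IsLevel V ℓ) {i j q : Fin k}
    (hq : lieSpan2 g (V i) (V j) = V q) :
    ℓ i + ℓ j ≤ ℓ q :=
  (hℓ q _).1 <| hq ▸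
    (lieSpan2_mono ((hℓ i _).2 le_rfl) ((hℓ j _).2 le_rfl)).trans (lieSpan2_lcs_le _ _ _)

namespace IsSympatheticDecomp

lemma eq_zero_of_isHomogeneous [FiniteDimensional ℂ g] (h : IsSympatheticDecomp s V) {d : Fin k → ℕ}
    (hd : ∀ i j, IsHomogeneous V d i j) : d = 0 := by
  let D : g →ₗ[ℂ] g := ∑ i, (d i : ℂ) • h.proj i
  have D_apply {i : Fin k} {v : g} (hv : v ∈ V i) : D v = (d i : ℂ) • v := by
    rw [LinearMap.sum_apply, Finset.sum_eq_single i _ (by simp)]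
    · simp [h.proj_apply_self hv]
    · exact fun j _ hji => by simp [h.proj_apply_of_ne hji.symm hv]
  obtain ⟨x, hx, -, hDx⟩ : ∃ x ∈ radical ℂ g, (∀ y ∈ s, ⁅x, y⁆ = 0) ∧ ∀ y, D y = ⁅x, y⁆ := by
    refine h.exists_forall_eq_lie D (fun x hx => ?_) (fun i x hx v hv => ?_)
      (fun i j v hv w hw => ?_)
    · simp [D, h.proj_apply_levi _ hx]
    · rw [D_apply hv, D_apply (h.lie_mem hx hv), lie_smul]
    · have hvw := lie_mem_lieSpan2 hv hw
      rw [D_apply hv, D_apply hw, lie_smul, smul_lie, ← add_smul]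
      obtain hij | ⟨q, hij, hq⟩ := hd i j
      · simp [(Submodule.mem_bot ℂ).1 (hij ▸ hvw)]
      · rw [D_apply (hij ▸ hvw), hq, Nat.cast_add, add_comm]
  funext i
  by_contra hi
  obtain ⟨v, hv, hv0⟩ := Submodule.exists_mem_ne_zero_of_ne_bot (h.ne_bot i)
  have hlie : ⁅x, v⁆ = (d i : ℂ) • v := (hDx v).symm.trans (D_apply hv)
  -- `v` is an eigenvector of `ad x`, `x` in the radical, for the eigenvalue `d i ≠ 0`.
  have mem_lcs (n : ℕ) : v ∈ (radical ℂ g).lcs g n := by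
    induction n with
    | zero => simp
    | succ n ih =>
      rw [LieIdeal.lcs_succ, ← inv_smul_smul₀ (Nat.cast_ne_zero.2 hi : (d i : ℂ) ≠ 0) v, ← hlie]
      exact Submodule.smul_mem _ _ (LieSubmodule.lie_mem_lie hx ih)
  obtain ⟨n, hn⟩ := h.isSympathetic.2.1.exists_lcs_radical_eq_bot g
  exact hv0 (by simpa [hn] using mem_lcs n)

lemma exists_isLevel [FiniteDimensional ℂ g] (h : IsSympatheticDecomp s V) : ∃ ℓ, IsLevel V ℓ := by
  obtain ⟨N, hN⟩ := h.isSympathetic.2.1.exists_lcs_radical_eq_bot g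
  have exists_level (i : Fin k) :
      ∃ l, ∀ n, V i ≤ ((radical ℂ g).lcs g n).toSubmodule ↔ n ≤ l := by
    let P (n : ℕ) : Prop := V i ≤ ((radical ℂ g).lcs g n).toSubmodule
    have antitone {m n : ℕ} (hmn : m ≤ n) (hn : P n) : P m := hn.trans (antitone_lcs _ g hmn)
    have not_P : ¬ P N := fun hP => h.ne_bot i (le_bot_iff.1 (by simpa [P, hN] using hP))
    classical
    refine ⟨Nat.findGreatest P N, fun n => ⟨fun hn => Nat.le_findGreatest ?_ hn,
      fun hn => antitone hn (Nat.findGreatest_spec (P := P) (Nat.zero_le N) (by simp [P]))⟩⟩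
    exact le_of_not_ge fun hNn => not_P (antitone hNn hn)
  choose ℓ hℓ using exists_level
  exact ⟨ℓ, hℓ⟩

variable {ℓ : Fin k → ℕ}

lemma lcs_one (h : IsSympatheticDecomp s V) :
    ((radical ℂ g).lcs g 1).toSubmodule = ⨆ i, V i := by
  rw [h.isSympathetic.2.1.lcs_radical_one h.isSimpleLevi.2, h.isDecomp.2.2]

lemma one_le_level (h : IsSympatheticDecomp s V) (hℓ : IsLevel V ℓ) (i : Fin k) : 1 ≤ ℓ i :=
  (hℓ i 1).1 (h.lcs_one ▸ le_iSup V i)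

lemma lcs_succ_eq_iSup (h : IsSympatheticDecomp s V) (n : ℕ) :
    ((radical ℂ g).lcs g (n + 1)).toSubmodule =
      ⨆ i : {i // V i ≤ ((radical ℂ g).lcs g (n + 1)).toSubmodule}, V i := by
  refine le_antisymm ?_ (iSup_le Subtype.prop)
  induction n with
  | zero =>
    rw [zero_add, h.lcs_one]
    exact iSup_le fun i => le_iSup (fun i : {i // V i ≤ ⨆ j, V j} => V i) ⟨i, le_iSup V i⟩
  | succ n ih =>
    rw [toSubmodule_lcs_succ, ← h.isDecomp.2.2]
    refine (lieSpan2_mono le_rfl ih).trans (lieSpan2_iSup_iSup_le.trans (iSup₂_le fun i j => ?_))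
    have hle : lieSpan2 g (V i) (V j) ≤
        lieSpan2 g (⨆ i, V i) ((radical ℂ g).lcs g (n + 1)).toSubmodule :=
      lieSpan2_mono (le_iSup V i) j.2
    obtain hij | ⟨q, hij⟩ := h.lieSpan2_eq_bot_or_exists i j
    · exact hij ▸ bot_le
    · rw [hij] at hle ⊢
      exact le_iSup_of_le ⟨q, hle⟩ le_rfl

lemma exists_lieSpan2_eq_of_one_lt_level (h : IsSympatheticDecomp s V) (hℓ : IsLevel V ℓ)
    {q : Fin k} (hq : 1 < ℓ q) :
    ∃ i j, ℓ i = 1 ∧ ℓ j + 1 = ℓ q ∧ lieSpan2 g (V i) (V j) = V q := by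
  obtain ⟨n, hn⟩ : ∃ n, ℓ q = n + 2 := ⟨ℓ q - 2, by lia⟩
  let S : Set (Fin k) := {p | ∃ i j, n + 1 ≤ ℓ j ∧ lieSpan2 g (V i) (V j) = V p}
  have hqS : V q ≤ ⨆ p ∈ S, V p := by
    refine ((hℓ q (n + 2)).2 hn.ge).trans ?_
    rw [toSubmodule_lcs_succ, ← h.isDecomp.2.2, h.lcs_succ_eq_iSup]
    refine lieSpan2_iSup_iSup_le.trans (iSup₂_le fun i j => ?_)
    obtain hij | ⟨p, hij⟩ := h.lieSpan2_eq_bot_or_exists i j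
    · exact hij ▸ bot_le
    · exact hij ▸ le_biSup V (show p ∈ S from ⟨i, j, (hℓ j _).1 j.2, hij⟩)
  obtain ⟨i, j, hj, hij⟩ := h.mem_of_le_biSup hqS
  have hadd := level_add_le hℓ hij
  have hi := h.one_le_level hℓ i
  exact ⟨i, j, by lia, by lia, hij⟩

end IsSympatheticDecomp
end Levels

section FourModules

open LieAlgebra Module

variable {g : Type*} [LieRing g] [LieAlgebra ℂ g]

namespace IsSympatheticDecomp

section Levels

variable {k : ℕ} {s : LieSubalgebra ℂ g} {V : Fin k → Submodule ℂ g} {ℓ : Fin k → ℕ}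

lemma exists_level_eq (h : IsSympatheticDecomp s V) (hℓ : IsLevel V ℓ) (q : Fin k) {n : ℕ}
    (hn : 1 ≤ n) (hnq : n ≤ ℓ q) : ∃ p, ℓ p = n := by
  induction hm : ℓ q - n generalizing n with
  | zero => exact ⟨q, by lia⟩
  | succ m ih =>
    obtain ⟨p, hp⟩ := ih (n := n + 1) (by lia) (by lia) (by lia)
    obtain ⟨-, j, -, hj, -⟩ := h.exists_lieSpan2_eq_of_one_lt_level hℓ (q := p) (by lia)
    exact ⟨j, by lia⟩

lemma level_le_card_image (h : IsSympatheticDecomp s V) (hℓ : IsLevel V ℓ) (q : Fin k) :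
    ℓ q ≤ (Finset.univ.image ℓ).card := by
  rw [← Nat.add_sub_cancel (ℓ q) 1, ← Nat.card_Icc]
  refine Finset.card_le_card fun n hn => ?_
  obtain ⟨hn, hnq⟩ := Finset.mem_Icc.1 hn
  simpa using h.exists_level_eq hℓ q hn hnq

lemma injective_level (h : IsSympatheticDecomp s V) (hℓ : IsLevel V ℓ)
    (hone : ∀ i j, ℓ i = 1 → ℓ j = 1 → i = j) : Function.Injective ℓ := by
  intro p q hpq
  induction hn : ℓ p using Nat.strong_induction_on generalizing p q with
  | _ n ih =>
    have hp := h.one_le_level hℓ p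
    obtain hp1 | hp1 := hp.eq_or_lt
    · exact hone p q hp1.symm (hpq ▸ hp1.symm)
    obtain ⟨i, j, hi, hj, hij⟩ := h.exists_lieSpan2_eq_of_one_lt_level hℓ hp1
    obtain ⟨i', j', hi', hj', hij'⟩ := h.exists_lieSpan2_eq_of_one_lt_level hℓ (hpq ▸ hp1)
    obtain rfl : i = i' := hone i i' hi hi'
    obtain rfl : j = j' := ih (ℓ j) (by lia) (by lia) rfl
    exact h.injective (hij.symm.trans hij')

lemma exists_level_skip [FiniteDimensional ℂ g] [NeZero k] (h : IsSympatheticDecomp s V)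
    (hℓ : IsLevel V ℓ) : ∃ i j q, lieSpan2 g (V i) (V j) = V q ∧ ℓ i + ℓ j < ℓ q := by
  by_contra! hskip
  have hzero : ℓ = 0 := h.eq_zero_of_isHomogeneous fun i j =>
    (h.lieSpan2_eq_bot_or_exists i j).imp_right fun ⟨q, hq⟩ =>
      ⟨q, hq, (hskip i j q hq).antisymm (level_add_le hℓ hq)⟩
  simpa [hzero] using h.one_le_level hℓ 0

lemma level_add_le_of_lieSpan2_eq (h : IsSympatheticDecomp s V) (hℓ : IsLevel V ℓ)
    (hone : ∀ i j, ℓ i = 1 → ℓ j = 1 → i = j) {i j q : Fin k} (hi : ℓ i = 1)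
    (hq : lieSpan2 g (V i) (V j) = V q) : ℓ q ≤ ℓ i + ℓ j := by
  by_contra! hskip
  have hj := h.one_le_level hℓ j
  obtain ⟨p, hp⟩ := h.exists_level_eq hℓ q (n := ℓ j + 1) (by lia) (by lia)
  obtain ⟨i', j', hi', hj', hp'⟩ := h.exists_lieSpan2_eq_of_one_lt_level hℓ (q := p) (by lia)
  obtain rfl : i = i' := hone i i' hi hi'
  obtain rfl : j = j' := h.injective_level hℓ hone (by lia)
  obtain rfl : q = p := h.injective (hq.symm.trans hp')
  lia

end Levels

variable {s : LieSubalgebra ℂ g} {V : Fin 4 → Submodule ℂ g} {ℓ : Fin 4 → ℕ}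

lemma exists_ne_level_eq_one [FiniteDimensional ℂ g] (h : IsSympatheticDecomp s V)
    (hℓ : IsLevel V ℓ) : ∃ i j, i ≠ j ∧ ℓ i = 1 ∧ ℓ j = 1 := by
  by_contra! hcon
  have hone (i j : Fin 4) (hi : ℓ i = 1) (hj : ℓ j = 1) : i = j :=
    by_contra fun hij => hcon i j hij hi hj
  obtain ⟨i, j, q, hq, hskip⟩ := h.exists_level_skip hℓ
  have hi : ℓ i ≠ 1 := fun hi => by
    have := h.level_add_le_of_lieSpan2_eq hℓ hone hi hq
    lia
  have hj : ℓ j ≠ 1 := fun hj => by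
    have := h.level_add_le_of_lieSpan2_eq hℓ hone hj (lieSpan2_comm (V i) (V j) ▸ hq)
    lia
  have hi1 := h.one_le_level hℓ i
  have hj1 := h.one_le_level hℓ j
  have hq4 : ℓ q ≤ 4 := (h.level_le_card_image hℓ q).trans Finset.card_image_le
  lia

lemma exists_perm_isLevel [FiniteDimensional ℂ g] (h : IsSympatheticDecomp s V) :
    ∃ e : Equiv.Perm (Fin 4), IsLevel (V ∘ e) ![1, 1, 2, 3] := by
  obtain ⟨ℓ, hℓ⟩ := h.exists_isLevel
  obtain ⟨a, b, hab, ha, hb⟩ := h.exists_ne_level_eq_one hℓ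
  have level_le (q : Fin 4) : ℓ q ≤ 3 := by
    have hlt : (Finset.univ.image ℓ).card < 4 := by
      refine lt_of_le_of_ne Finset.card_image_le fun hcard => hab ?_
      exact Finset.card_image_iff.1 hcard (by simp) (by simp) (ha.trans hb.symm)
    exact Nat.le_of_lt_succ ((h.level_le_card_image hℓ q).trans_lt hlt)
  obtain ⟨i, j, z, -, hz⟩ := h.exists_level_skip hℓ
  have hi := h.one_le_level hℓ i
  have hj := h.one_le_level hℓ j
  replace hz : ℓ z = 3 := by have := level_le z; lia
  obtain ⟨c, hc⟩ := h.exists_level_eq hℓ z (n := 2) (by lia) (by lia)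
  have hinj : Function.Injective ![a, b, c, z] := by
    intro p q hpq
    have hℓpq := congrArg ℓ hpq
    fin_cases p <;> fin_cases q <;> simp_all
  refine ⟨Equiv.ofBijective _ (Finite.injective_iff_bijective.1 hinj), fun p n => ?_⟩
  have hp : ![1, 1, 2, 3] p = ℓ (![a, b, c, z] p) := by fin_cases p <;> simp [*]
  exact hp ▸ hℓ _ n

end IsSympatheticDecomp
end FourModules

section BracketTable

open LieAlgebra Module

variable {g : Type*} [LieRing g] [LieAlgebra ℂ g] {s : LieSubalgebra ℂ g}
  {V : Fin 4 → Submodule ℂ g}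

/-- The four modules have levels `1, 1, 2, 3`, and the bracket table obeys the resulting
constraints; the two generating modules are ordered so that `[V 0, V 2] = V 3`. -/
structure IsLeveledDecomp (s : LieSubalgebra ℂ g) (V : Fin 4 → Submodule ℂ g) : Prop
    extends IsSympatheticDecomp s V where
  lie_three : ∀ i, lieSpan2 g (V i) (V 3) = ⊥
  lie_two_two : lieSpan2 g (V 2) (V 2) = ⊥
  lie_zero_two : lieSpan2 g (V 0) (V 2) = V 3
  lie_one_two : lieSpan2 g (V 1) (V 2) = ⊥ ∨ lieSpan2 g (V 1) (V 2) = V 3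
  ne_generator : ∀ i j, lieSpan2 g (V i) (V j) ≠ V 0 ∧ lieSpan2 g (V i) (V j) ≠ V 1
  exists_eq_two : lieSpan2 g (V 0) (V 0) = V 2 ∨ lieSpan2 g (V 0) (V 1) = V 2 ∨
    lieSpan2 g (V 1) (V 1) = V 2

lemma IsSympatheticDecomp.isLeveledDecomp (h : IsSympatheticDecomp s V)
    (hℓ : IsLevel V ![1, 1, 2, 3]) (h02 : lieSpan2 g (V 0) (V 2) = V 3) :
    IsLeveledDecomp s V where
  toIsSympatheticDecomp := h
  lie_zero_two := h02
  lie_three i := (h.lieSpan2_eq_bot_or_exists i 3).resolve_right fun ⟨q, hq⟩ => by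
    have := level_add_le hℓ hq
    fin_cases i <;> fin_cases q <;> simp at this
  lie_two_two := (h.lieSpan2_eq_bot_or_exists 2 2).resolve_right fun ⟨q, hq⟩ => by
    have := level_add_le hℓ hq
    fin_cases q <;> simp at this
  lie_one_two := (h.lieSpan2_eq_bot_or_exists 1 2).imp_right fun ⟨q, hq⟩ => by
    have := level_add_le hℓ hq
    fin_cases q <;> simp_all
  ne_generator i j := by
    constructor <;> intro hq <;> have := level_add_le hℓ hq <;>
      fin_cases i <;> fin_cases j <;> simp at this
  exists_eq_two := by
    obtain ⟨i, j, hi, hj, hij⟩ := h.exists_lieSpan2_eq_of_one_lt_level hℓ (q := 2) (by simp)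
    have := lieSpan2_comm (V 0) (V 1)
    fin_cases i <;> fin_cases j <;> simp_all

lemma IsSympatheticDecomp.exists_isLeveledDecomp [FiniteDimensional ℂ g]
    (h : IsSympatheticDecomp s V) : ∃ e : Equiv.Perm (Fin 4), IsLeveledDecomp s (V ∘ e) := by
  obtain ⟨e, hℓ⟩ := h.exists_perm_isLevel
  have he := h.comp_perm e
  obtain ⟨i, j, hi, hj, hij⟩ := he.exists_lieSpan2_eq_of_one_lt_level hℓ (q := 3) (by simp)
  obtain rfl : j = 2 := by fin_cases j <;> simp_all
  obtain rfl | rfl : i = 0 ∨ i = 1 := by fin_cases i <;> simp_all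
  · exact ⟨e, he.isLeveledDecomp hℓ hij⟩
  · refine ⟨(Equiv.swap 0 1).trans e, (he.comp_perm (Equiv.swap 0 1)).isLeveledDecomp ?_ hij⟩
    intro i n
    rw [Function.comp_apply, hℓ]
    fin_cases i <;> rfl

namespace IsLeveledDecomp

lemma swap (h : IsLeveledDecomp s V) (h12 : lieSpan2 g (V 1) (V 2) = V 3) :
    IsLeveledDecomp s (V ∘ Equiv.swap 0 1) where
  toIsSympatheticDecomp := h.toIsSympatheticDecomp.comp_perm _
  lie_three i := h.lie_three _
  lie_two_two := h.lie_two_two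
  lie_zero_two := h12
  lie_one_two := Or.inr h.lie_zero_two
  ne_generator i j := (h.ne_generator _ _).symm
  exists_eq_two := by
    obtain h00 | h01 | h11 := h.exists_eq_two
    · exact .inr (.inr h00)
    · exact .inr (.inl ((lieSpan2_comm _ _).trans h01))
    · exact .inl h11

lemma lie_eq_bot_or_two_or_three (h : IsLeveledDecomp s V) (i j : Fin 4) :
    lieSpan2 g (V i) (V j) = ⊥ ∨ lieSpan2 g (V i) (V j) = V 2 ∨ lieSpan2 g (V i) (V j) = V 3 := by
  refine (h.lieSpan2_eq_bot_or_exists i j).imp_right fun ⟨q, hq⟩ => ?_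
  have := h.ne_generator i j
  fin_cases q <;> tauto

lemma not_grading [FiniteDimensional ℂ g] (h : IsLeveledDecomp s V) (d : Fin 4 → ℕ) (hd : d ≠ 0)
    (h00 : IsHomogeneous V d 0 0) (h01 : IsHomogeneous V d 0 1) (h11 : IsHomogeneous V d 1 1)
    (h02 : IsHomogeneous V d 0 2) (h12 : IsHomogeneous V d 1 2) : False := by
  have symm {i j : Fin 4} (hij : IsHomogeneous V d i j) : IsHomogeneous V d j i := by
    rwa [IsHomogeneous, lieSpan2_comm, add_comm]
  have h3 (i : Fin 4) : IsHomogeneous V d i 3 := .inl (h.lie_three i)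
  have h22 : IsHomogeneous V d 2 2 := .inl h.lie_two_two
  exact hd (h.eq_zero_of_isHomogeneous fun
    | 0, 0 => h00 | 0, 1 => h01 | 0, 2 => h02 | 0, 3 => h3 0
    | 1, 0 => symm h01 | 1, 1 => h11 | 1, 2 => h12 | 1, 3 => h3 1
    | 2, 0 => symm h02 | 2, 1 => symm h12 | 2, 2 => h22 | 2, 3 => h3 2
    | 3, 0 => symm (h3 0) | 3, 1 => symm (h3 1) | 3, 2 => symm (h3 2) | 3, 3 => h3 3)

end IsLeveledDecomp

/-- The bracket table of the algebras that survive in dimension `25`: `[V 0, V 0]` is again a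
module of the second level, so that Jacobi on `V 0` is a cyclic identity. -/
structure IsCyclicTable (V : Fin 4 → Submodule ℂ g) : Prop where
  lie_zero_zero : lieSpan2 g (V 0) (V 0) = V 2
  lie_zero_one : lieSpan2 g (V 0) (V 1) = V 3
  lie_one_one : lieSpan2 g (V 1) (V 1) = V 3
  lie_one_two : lieSpan2 g (V 1) (V 2) = ⊥

/-- The remaining bracket tables: `[V 0, V 1] = V 2` and `[[V 0, V 0], V 1] = 0`, so that by
Jacobi `⁅x, ⁅x', y⁆⁆` is symmetric in `x, x' ∈ V 0` for `y ∈ V 1`. -/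
structure IsSymmetricTable (V : Fin 4 → Submodule ℂ g) : Prop where
  lie_zero_one : lieSpan2 g (V 0) (V 1) = V 2
  lie_lie_zero_zero_one : lieSpan2 g (lieSpan2 g (V 0) (V 0)) (V 1) = ⊥
  lie_eq : ((lieSpan2 g (V 0) (V 0) = V 2 ∨ lieSpan2 g (V 0) (V 0) = V 3) ∧
      lieSpan2 g (V 1) (V 1) = V 3) ∨
    (lieSpan2 g (V 0) (V 0) = V 3 ∧ lieSpan2 g (V 1) (V 2) = V 3)

namespace IsLeveledDecomp

lemma lie_lie_one_eq_bot (h : IsLeveledDecomp s V) (h12 : lieSpan2 g (V 1) (V 2) = ⊥)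
    (i j : Fin 4) : lieSpan2 g (lieSpan2 g (V i) (V j)) (V 1) = ⊥ := by
  rw [lieSpan2_comm]
  obtain hij | hij | hij := h.lie_eq_bot_or_two_or_three i j <;>
    simp [hij, h12, h.lie_three, lieSpan2_bot]

lemma lie_one_one_ne (h : IsLeveledDecomp s V) (h12 : lieSpan2 g (V 1) (V 2) = ⊥) :
    lieSpan2 g (V 1) (V 1) ≠ V 2 := fun h11 => by
  have h110 := lieSpan2_lieSpan2_le (V 1) (V 1) (V 0)
  rw [h11, lieSpan2_comm (V 2), h.lie_zero_two, lieSpan2_comm (V 1) (lieSpan2 g _ _),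
    h.lie_lie_one_eq_bot h12, sup_bot_eq, le_bot_iff] at h110
  exact h.ne_bot 3 h110

lemma not_grading_of_lie_one_two_eq_bot [FiniteDimensional ℂ g] (h : IsLeveledDecomp s V)
    (h12 : lieSpan2 g (V 1) (V 2) = ⊥) (a b c z : ℕ) (ha : a ≠ 0) (hz : z = a + c)
    (h00 : IsHomogeneous V ![a, b, c, z] 0 0) (h01 : IsHomogeneous V ![a, b, c, z] 0 1)
    (h11 : IsHomogeneous V ![a, b, c, z] 1 1) : False :=
  h.not_grading ![a, b, c, z] (fun h0 => ha (congrFun h0 0)) h00 h01 h11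
    (.inr ⟨3, h.lie_zero_two, hz⟩) (.inl h12)

lemma lie_one_one_eq_three [FiniteDimensional ℂ g] (h : IsLeveledDecomp s V)
    (h12 : lieSpan2 g (V 1) (V 2) = ⊥) : lieSpan2 g (V 1) (V 1) = V 3 := by
  have not_grading := h.not_grading_of_lie_one_two_eq_bot h12
  obtain h11 | h11 | h11 := h.lie_eq_bot_or_two_or_three 1 1
  · exfalso
    obtain h00 | h01 | h11' := h.exists_eq_two
    · obtain h01 | h01 | h01 := h.lie_eq_bot_or_two_or_three 0 1
      · exact not_grading 1 0 2 3 one_ne_zero rfl (.inr ⟨2, h00, rfl⟩) (.inl h01) (.inl h11)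
      · exact not_grading 1 1 2 3 one_ne_zero rfl (.inr ⟨2, h00, rfl⟩) (.inr ⟨2, h01, rfl⟩)
          (.inl h11)
      · exact not_grading 1 2 2 3 one_ne_zero rfl (.inr ⟨2, h00, rfl⟩) (.inr ⟨3, h01, rfl⟩)
          (.inl h11)
    · obtain h00 | h00 | h00 := h.lie_eq_bot_or_two_or_three 0 0
      · exact not_grading 1 1 2 3 one_ne_zero rfl (.inl h00) (.inr ⟨2, h01, rfl⟩) (.inl h11)
      · exact not_grading 1 1 2 3 one_ne_zero rfl (.inr ⟨2, h00, rfl⟩) (.inr ⟨2, h01, rfl⟩)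
          (.inl h11)
      · exact not_grading 1 0 1 2 one_ne_zero rfl (.inr ⟨3, h00, rfl⟩) (.inr ⟨2, h01, rfl⟩)
          (.inl h11)
    · exact h.lie_one_one_ne h12 h11'
  · exact (h.lie_one_one_ne h12 h11).elim
  · exact h11

lemma table_of_lie_one_two_eq_bot [FiniteDimensional ℂ g] (h : IsLeveledDecomp s V)
    (h12 : lieSpan2 g (V 1) (V 2) = ⊥) : IsCyclicTable V ∨ IsSymmetricTable V := by
  have not_grading := h.not_grading_of_lie_one_two_eq_bot h12
  have h11 := h.lie_one_one_eq_three h12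
  have h0011 := h.lie_lie_one_eq_bot h12 0 0
  obtain h00 | h01 | h11' := h.exists_eq_two
  · obtain h01 | h01 | h01 := h.lie_eq_bot_or_two_or_three 0 1
    · exact (not_grading 2 3 4 6 two_ne_zero rfl (.inr ⟨2, h00, rfl⟩) (.inl h01)
        (.inr ⟨3, h11, rfl⟩)).elim
    · exact .inr ⟨h01, h0011, .inl ⟨.inl h00, h11⟩⟩
    · exact .inl ⟨h00, h01, h11, h12⟩
  · obtain h00 | h00 | h00 := h.lie_eq_bot_or_two_or_three 0 0
    · exact (not_grading 1 2 3 4 one_ne_zero rfl (.inl h00) (.inr ⟨2, h01, rfl⟩)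
        (.inr ⟨3, h11, rfl⟩)).elim
    · exact .inr ⟨h01, h0011, .inl ⟨.inl h00, h11⟩⟩
    · exact .inr ⟨h01, h0011, .inl ⟨.inr h00, h11⟩⟩
  · exact (h.lie_one_one_ne h12 h11').elim

lemma lie_zero_one_eq_two (h : IsLeveledDecomp s V) (h12 : lieSpan2 g (V 1) (V 2) = V 3) :
    lieSpan2 g (V 0) (V 1) = V 2 := by
  by_contra h01
  have lie_eq_bot (i : Fin 4) : lieSpan2 g (V i) (lieSpan2 g (V 0) (V 1)) = ⊥ := by
    obtain h01' | h01' | h01' := h.lie_eq_bot_or_two_or_three 0 1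
    · rw [h01', lieSpan2_bot]
    · exact (h01 h01').elim
    · rw [h01', h.lie_three]
  -- If `V 2 = [V i, V i]` then by Jacobi it commutes with the other generating module `V j`.
  have not_eq {i j : Fin 4} (hii : lieSpan2 g (V i) (V i) = V 2)
      (hj : lieSpan2 g (V j) (V 2) = V 3)
      (hij : lieSpan2 g (V i) (V j) = lieSpan2 g (V 0) (V 1)) : False := by
    have hiij := lieSpan2_lieSpan2_le (V i) (V i) (V j)
    rw [hii, lieSpan2_comm, hj, hij, lie_eq_bot, sup_bot_eq, le_bot_iff] at hiij
    exact h.ne_bot 3 hiij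
  obtain h00 | h01' | h11 := h.exists_eq_two
  · exact not_eq h00 h12 rfl
  · exact h01 h01'
  · exact not_eq h11 h.lie_zero_two (lieSpan2_comm _ _)

lemma isSymmetricTable (h : IsLeveledDecomp s V) (h01 : lieSpan2 g (V 0) (V 1) = V 2)
    (h00 : lieSpan2 g (V 0) (V 0) = V 3) (h12 : lieSpan2 g (V 1) (V 2) = V 3) :
    IsSymmetricTable V :=
  ⟨h01, by rw [h00, lieSpan2_comm, h.lie_three], .inr ⟨h00, h12⟩⟩

lemma exists_perm_table_of_lie_one_two_eq [FiniteDimensional ℂ g] (h : IsLeveledDecomp s V)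
    (h12 : lieSpan2 g (V 1) (V 2) = V 3) :
    ∃ e : Equiv.Perm (Fin 4), IsLeveledDecomp s (V ∘ e) ∧ IsSymmetricTable (V ∘ e) := by
  have h01 := h.lie_zero_one_eq_two h12
  by_cases h00 : lieSpan2 g (V 0) (V 0) = V 3
  · exact ⟨1, h, h.isSymmetricTable h01 h00 h12⟩
  by_cases h11 : lieSpan2 g (V 1) (V 1) = V 3
  · exact ⟨Equiv.swap 0 1, h.swap h12,
      (h.swap h12).isSymmetricTable ((lieSpan2_comm _ _).trans h01) h11 h.lie_zero_two⟩
  have homogeneous (i : Fin 4) (hd : ![1, 1, 2, 3] i = 1) (hi : lieSpan2 g (V i) (V i) ≠ V 3) :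
      IsHomogeneous V ![1, 1, 2, 3] i i :=
    (h.lie_eq_bot_or_two_or_three i i).imp_right fun hii => ⟨2, hii.resolve_right hi, by simp [hd]⟩
  exact (h.not_grading ![1, 1, 2, 3] (by simp) (homogeneous 0 rfl h00)
    (.inr ⟨2, h01, rfl⟩) (homogeneous 1 rfl h11) (.inr ⟨3, h.lie_zero_two, rfl⟩)
    (.inr ⟨3, h12, rfl⟩)).elim

end IsLeveledDecomp

lemma IsSympatheticDecomp.exists_perm_table [FiniteDimensional ℂ g]
    (h : IsSympatheticDecomp s V) : ∃ e : Equiv.Perm (Fin 4),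
      IsLeveledDecomp s (V ∘ e) ∧ (IsCyclicTable (V ∘ e) ∨ IsSymmetricTable (V ∘ e)) := by
  obtain ⟨e, he⟩ := h.exists_isLeveledDecomp
  obtain h12 | h12 := he.lie_one_two
  · exact ⟨e, he, he.table_of_lie_one_two_eq_bot h12⟩
  · obtain ⟨e', he', htable⟩ := he.exists_perm_table_of_lie_one_two_eq h12
    exact ⟨e'.trans e, he', .inr htable⟩

end BracketTable

section Homs

variable {g : Type*} [LieRing g] [LieAlgebra ℂ g] {k : ℕ} {s : LieSubalgebra ℂ g}
  {V : Fin k → Submodule ℂ g}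

lemma IsSympatheticDecomp.exists_forall_eq_lie_of_hom (h : IsSympatheticDecomp s V) {i j : Fin k}
    (hi : ∀ a b, lieSpan2 g (V a) (V b) ≠ V i) (hj : ∀ a, lieSpan2 g (V a) (V j) = ⊥)
    {φ : g →ₗ[ℂ] g} (hφ : ∀ v ∈ V i, φ v ∈ V j) (hφs : ∀ x ∈ s, ∀ v ∈ V i, φ ⁅x, v⁆ = ⁅x, φ v⁆) :
    ∃ x : g, (∀ y ∈ s, ⁅x, y⁆ = 0) ∧ ∀ v ∈ V i, φ v = ⁅x, v⁆ := by
  let D : g →ₗ[ℂ] g := φ ∘ₗ h.proj i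
  have D_mem (y : g) : D y ∈ V j := hφ _ (h.proj_mem i y)
  have D_lie (x) (hx : x ∈ s) (y : g) : D ⁅x, y⁆ = ⁅x, D y⁆ := by
    simp only [D, LinearMap.comp_apply, h.proj_lie i hx, hφs x hx _ (h.proj_mem i y)]
  obtain ⟨x, -, hxs, hDx⟩ : ∃ x ∈ LieAlgebra.radical ℂ g, (∀ y ∈ s, ⁅x, y⁆ = 0) ∧
      ∀ y, D y = ⁅x, y⁆ := by
    refine h.exists_forall_eq_lie D (fun x hx => ?_) (fun _ x hx v _ => D_lie x hx v)
      (fun a b v hv w hw => ?_)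
    · simp [D, h.proj_apply_levi i hx]
    · have hDw := lieSpan2_eq_bot.1 (hj a) v hv _ (D_mem w)
      have hDv := lieSpan2_eq_bot.1 (hj b) w hw _ (D_mem v)
      rw [hDw, ← lie_skew (D v), hDv, neg_zero, add_zero]
      have hvw := lie_mem_lieSpan2 hv hw
      obtain hab | ⟨q, hab⟩ := h.lieSpan2_eq_bot_or_exists a b
      · have hvw0 : ⁅v, w⁆ = 0 := (Submodule.mem_bot ℂ).1 (hab ▸ hvw)
        rw [hvw0, map_zero]
      · rw [LinearMap.comp_apply, h.proj_apply_of_ne (by rintro rfl; exact hi a b hab) (hab ▸ hvw),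
          map_zero]
  exact ⟨x, hxs, fun v hv => by rw [← hDx, LinearMap.comp_apply, h.proj_apply_self hv]⟩

end Homs

section Sl2Modules

open LieModule Module IsSl2Triple

variable {g : Type*} [LieRing g] [LieAlgebra ℂ g] {s : LieSubalgebra ℂ g} {h e f : g}

lemma forall_mem_toLieSubalgebra {t : IsSl2Triple h e f} {W : Submodule ℂ g} (he : e ∈ W)
    (hf : f ∈ W) (hh : h ∈ W) : ∀ x ∈ t.toLieSubalgebra ℂ, x ∈ W := by
  have hle : Submodule.span ℂ {e, f, h} ≤ W := Submodule.span_le.2 <| by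
    rintro _ (rfl | rfl | rfl) <;> assumption
  exact fun x hx => hle hx

/-- The vector `fⁱ v` of the `⟨e, f, h⟩`-module `g`. -/
def lower (f : g) (i : ℕ) (v : g) : g := (toEnd ℂ g g f ^ i) v

lemma lower_zero (f v : g) : lower f 0 v = v := rfl

lemma lower_succ (f : g) (i : ℕ) (v : g) : lower f (i + 1) v = ⁅f, lower f i v⁆ := by
  simp [lower, pow_succ']

lemma lower_mem {V : Submodule ℂ g} (hV : ∀ w ∈ V, ⁅f, w⁆ ∈ V) {v : g} (hv : v ∈ V) (i : ℕ) :
    lower f i v ∈ V := by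
  induction i with
  | zero => exact hv
  | succ i ih => exact lower_succ f i v ▸ hV _ ih

/-- `V` is the simple module of highest weight `n` of an `sl₂`-triple, generated by its highest
weight vector `v`. -/
structure IsHighestWeight (t : IsSl2Triple h e f) (V : Submodule ℂ g) (n : ℕ) (v : g) : Prop where
  primitive : t.HasPrimitiveVectorWith v (n : ℂ)
  lower_mem : ∀ i, lower f i v ∈ V
  le_span : V ≤ Submodule.span ℂ (Set.range fun i : Fin (n + 1) => lower f i v)

lemma exists_lie_eq_smul_of_maximal_re [FiniteDimensional ℂ g] {W : Submodule ℂ g} (hW : W ≠ ⊥)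
    (hinv : ∀ w ∈ W, ⁅h, w⁆ ∈ W) : ∃ μ : ℂ, (∃ w ∈ W, w ≠ 0 ∧ ⁅h, w⁆ = μ • w) ∧
      ∀ ν : ℂ, μ.re < ν.re → ∀ w ∈ W, ⁅h, w⁆ = ν • w → w = 0 := by
  let T : Module.End ℂ W := (toEnd ℂ g g h).restrict hinv
  have : Nontrivial W := Submodule.nontrivial_iff_ne_bot.2 hW
  have hne : (Set.univ : Set T.Eigenvalues).Nonempty := ⟨default, trivial⟩
  obtain ⟨μ, -, hμ⟩ := Set.exists_max_image Set.univ (fun μ : T.Eigenvalues => (μ : ℂ).re)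
    Set.finite_univ hne
  refine ⟨μ, ?_, fun ν hν w hw hwν => by_contra fun hw0 => ?_⟩
  · obtain ⟨w, hw⟩ := End.HasEigenvalue.exists_hasEigenvector (f := T) (μ := (μ : ℂ)) μ.2
    exact ⟨w, w.2, by simpa using hw.2, congrArg Subtype.val hw.apply_eq_smul⟩
  · have hv : T.HasEigenvalue ν := End.hasEigenvalue_of_hasEigenvector (x := ⟨w, hw⟩)
      ⟨End.mem_eigenspace_iff.2 (Subtype.ext hwν), by simpa using hw0⟩
    exact (hμ ⟨ν, hv⟩ trivial).not_gt hν

variable {t : IsSl2Triple h e f} {V W U : Submodule ℂ g} {m n p : ℕ} {v w u : g}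

lemma lower_eq_zero_of_primitive [FiniteDimensional ℂ g] (P : t.HasPrimitiveVectorWith v (n : ℂ))
    {i : ℕ} (hi : n < i) : lower f i v = 0 := by
  induction i, hi using Nat.le_induction with
  | base => exact P.pow_toEnd_f_eq_zero_of_eq_nat rfl
  | succ i _ ih => rw [lower_succ, ih, lie_zero]

namespace IsHighestWeight

lemma lie_h (H : IsHighestWeight t V n v) (i : ℕ) :
    ⁅h, lower f i v⁆ = ((n : ℂ) - 2 * i) • lower f i v :=
  H.primitive.lie_h_pow_toEnd_f i

lemma lie_e_zero (H : IsHighestWeight t V n v) : ⁅e, lower f 0 v⁆ = 0 := H.primitive.lie_e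

lemma lie_e_succ (H : IsHighestWeight t V n v) (i : ℕ) :
    ⁅e, lower f (i + 1) v⁆ = (((i : ℂ) + 1) * (n - i)) • lower f i v :=
  H.primitive.lie_e_pow_succ_toEnd_f i

lemma lower_ne_zero (H : IsHighestWeight t V n v) {i : ℕ} (hi : i ≤ n) : lower f i v ≠ 0 :=
  H.primitive.pow_toEnd_f_ne_zero_of_eq_nat rfl hi

lemma linearIndependent (H : IsHighestWeight t V n v) :
    LinearIndependent ℂ fun i : Fin (n + 1) => lower f i v := by
  refine End.eigenvectors_linearIndependent' (toEnd ℂ g g h)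
    (fun i : Fin (n + 1) => (n : ℂ) - 2 * i) (fun i j hij => ?_) _ fun i =>
    ⟨End.mem_eigenspace_iff.2 (H.lie_h i), H.lower_ne_zero (Nat.lt_succ_iff.1 i.2)⟩
  have : ((i : ℕ) : ℂ) = (j : ℕ) := by linear_combination (-1 / 2 : ℂ) * hij
  exact Fin.ext (mod_cast this)

lemma span_eq (H : IsHighestWeight t V n v) :
    Submodule.span ℂ (Set.range fun i : Fin (n + 1) => lower f i v) = V :=
  le_antisymm (Submodule.span_le.2 (Set.range_subset_iff.2 fun i => H.lower_mem i)) H.le_span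

lemma le_of_lower_mem (H : IsHighestWeight t V n v) (hW : ∀ i, lower f i v ∈ W) : V ≤ W :=
  H.le_span.trans (Submodule.span_le.2 (Set.range_subset_iff.2 fun i => hW i))

lemma finrank_eq (H : IsHighestWeight t V n v) : finrank ℂ V = n + 1 := by
  rw [← H.span_eq, finrank_span_eq_card H.linearIndependent, Fintype.card_fin]

lemma exists_eq_smul_lower (H : IsHighestWeight t V n v) {x : g} (hx : x ∈ V) {μ : ℂ}
    (hμ : ⁅h, x⁆ = μ • x) (hx0 : x ≠ 0) :
    ∃ i ≤ n, μ = n - 2 * i ∧ ∃ c : ℂ, x = c • lower f i v := by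
  obtain ⟨c, rfl⟩ := (Submodule.mem_span_range_iff_exists_fun ℂ).1 (H.le_span hx)
  have hsum : ∑ i : Fin (n + 1), (c i * ((n : ℂ) - 2 * (i : ℕ) - μ)) • lower f i v = 0 := by
    simp only [mul_sub _ _ μ, sub_smul, mul_smul, ← H.lie_h, Finset.sum_sub_distrib]
    simp only [← lie_smul, ← lie_sum, hμ, smul_comm _ μ, ← Finset.smul_sum, sub_self]
  have hc (i : Fin (n + 1)) (hi : c i ≠ 0) : μ = n - 2 * (i : ℕ) := by
    have hi0 := Fintype.linearIndependent_iff.1 H.linearIndependent _ hsum i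
    linear_combination -(mul_eq_zero.1 hi0).resolve_left hi
  obtain ⟨i, hi⟩ : ∃ i, c i ≠ 0 := by
    by_contra! h0
    exact hx0 (by simp [h0])
  refine ⟨i, Nat.lt_succ_iff.1 i.2, hc i hi, c i, ?_⟩
  refine Finset.sum_eq_single i (fun j _ hji => ?_) (by simp)
  have hcj : c j = 0 := by
    by_contra hj
    have : ((i : ℕ) : ℂ) = (j : ℕ) := by
      linear_combination (1 / 2 : ℂ) * (hc j hj).symm.trans (hc i hi)
    exact hji (Fin.ext (mod_cast this.symm))
  rw [hcj, zero_smul]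

lemma exists_eq_smul_lower_of_lie_h (H : IsHighestWeight t V n v) {x : g} (hx : x ∈ V) {i : ℕ}
    (hi : ⁅h, x⁆ = ((n : ℂ) - 2 * i) • x) : ∃ c : ℂ, x = c • lower f i v := by
  obtain rfl | hx0 := eq_or_ne x 0
  · exact ⟨0, (zero_smul ℂ _).symm⟩
  obtain ⟨j, -, hj, hc⟩ := H.exists_eq_smul_lower hx hi hx0
  obtain rfl : i = j := by
    have : (i : ℂ) = j := by linear_combination (-1 / 2 : ℂ) * hj
    exact_mod_cast this
  exact hc

lemma exists_eq_smul_of_lie_e_eq_zero (H : IsHighestWeight t V n v) {x : g} (hx : x ∈ V) {μ : ℂ}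
    (hμ : ⁅h, x⁆ = μ • x) (he : ⁅e, x⁆ = 0) (hx0 : x ≠ 0) : μ = n ∧ ∃ c : ℂ, c ≠ 0 ∧ x = c • v := by
  obtain ⟨i, hi, rfl, c, rfl⟩ := H.exists_eq_smul_lower hx hμ hx0
  have hc : c ≠ 0 := fun hc => hx0 (by rw [hc, zero_smul])
  cases i with
  | zero => exact ⟨by simp, c, hc, rfl⟩
  | succ i =>
    have hne : ((i : ℂ) + 1) * (n - i) ≠ 0 :=
      mul_ne_zero (Nat.cast_add_one_ne_zero i)
        (sub_ne_zero.2 (Nat.cast_injective.ne (Nat.ne_of_gt hi)))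
    rw [lie_smul, H.lie_e_succ] at he
    exact (smul_ne_zero hc (smul_ne_zero hne (H.lower_ne_zero (Nat.le_of_succ_le hi))) he).elim

lemma lower_eq_zero [FiniteDimensional ℂ g] (H : IsHighestWeight t V n v) {i : ℕ} (hi : n < i) :
    lower f i v = 0 :=
  lower_eq_zero_of_primitive H.primitive hi

end IsHighestWeight

lemma invariant_span_lower {μ : ℂ} (P : t.HasPrimitiveVectorWith v μ) :
    Invariant g (t.toLieSubalgebra ℂ) (Submodule.span ℂ (Set.range fun i => lower f i v)) := by
  set S := Submodule.span ℂ (Set.range fun i => lower f i v)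
  have lower_mem_S (i : ℕ) : lower f i v ∈ S := Submodule.subset_span ⟨i, rfl⟩
  have lie_mem_S {x : g} (hx : ∀ i, ⁅x, lower f i v⁆ ∈ S) (y : g) (hy : y ∈ S) : ⁅x, y⁆ ∈ S :=
    (Submodule.span_le (p := S.comap (toEnd ℂ g g x))).2 (Set.range_subset_iff.2 hx) hy
  intro x hx y hy
  rw [← lie_skew, neg_mem_iff]
  refine forall_mem_toLieSubalgebra (W := S.comap (toEnd ℂ g g y)) ?_ ?_ ?_ x hx <;>
    rw [Submodule.mem_comap, toEnd_apply_apply, ← lie_skew, neg_mem_iff]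
  · refine lie_mem_S (fun i => ?_) y hy
    cases i with
    | zero => exact (P.lie_e : ⁅e, lower f 0 v⁆ = 0) ▸ S.zero_mem
    | succ i => exact P.lie_e_pow_succ_toEnd_f i ▸ S.smul_mem _ (lower_mem_S i)
  · exact lie_mem_S (fun i => lower_succ f i v ▸ lower_mem_S (i + 1)) y hy
  · exact lie_mem_S (fun i => P.lie_h_pow_toEnd_f i ▸ S.smul_mem _ (lower_mem_S i)) y hy

lemma exists_isHighestWeight [FiniteDimensional ℂ g]
    (hV : IsIrreducibleSMod g (t.toLieSubalgebra ℂ) V) : ∃ n v, IsHighestWeight t V n v := by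
  have mem_span {x : g} (hx : x ∈ ({e, f, h} : Set g)) : x ∈ t.toLieSubalgebra ℂ :=
    Submodule.subset_span hx
  have ⟨hV0, hinv, _⟩ := hV
  obtain ⟨μ, ⟨v, hv, hv0, hvμ⟩, hmax⟩ :=
    exists_lie_eq_smul_of_maximal_re hV0 (hinv h (mem_span (by simp)))
  have hev : ⁅e, v⁆ = 0 := by
    refine hmax (μ + 2) (by simp) _ (hinv e (mem_span (by simp)) v hv) ?_
    rw [leibniz_lie, t.lie_h_e_smul ℂ, hvμ, lie_smul, smul_lie, ← add_smul, add_comm]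
  have P : t.HasPrimitiveVectorWith v μ := ⟨hv0, hvμ, hev⟩
  obtain ⟨n, rfl⟩ := P.exists_nat
  have hle := hV.le_of_mem (invariant_span_lower P) hv0 hv (Submodule.subset_span ⟨0, rfl⟩)
  refine ⟨n, v, P, lower_mem (hinv f (mem_span (by simp))) hv,
    hle.trans (Submodule.span_le.2 (Set.range_subset_iff.2 fun i => ?_))⟩
  obtain hi | hi := lt_or_ge i (n + 1)
  · exact Submodule.subset_span ⟨⟨i, hi⟩, rfl⟩
  · rw [lower_eq_zero_of_primitive P hi]
    exact Submodule.zero_mem _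

end Sl2Modules

section ClebschGordan

open LieModule Module

variable {g : Type*} [LieRing g] [LieAlgebra ℂ g] {h e f : g} {t : IsSl2Triple h e f}
  {V W U : Submodule ℂ g} {m n p k : ℕ} {v w u : g}

/-- The coefficients of a bracket of simple `sl₂`-modules `V_m × V_n → V_p` with
`m + n = p + 2 k`, normalised so that `⁅v, fᵏ w⁆ = u` for the highest weight vectors `v`, `w`, `u`:
then `⁅fⁱ v, fʲ w⁆ = cgCoeff n p k i j • fⁱ⁺ʲ⁻ᵏ u`. -/
def cgCoeff (n p k : ℕ) : ℕ → ℕ → ℚ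
  | 0, j => j.choose k * (n - k).descFactorial (j - k) / p.descFactorial (j - k)
  | i + 1, j => cgCoeff n p k i j - cgCoeff n p k i (j + 1)

lemma cgCoeff_of_lt {i j : ℕ} (hij : i + j < k) : cgCoeff n p k i j = 0 := by
  induction i generalizing j with
  | zero => simp [cgCoeff, Nat.choose_eq_zero_of_lt (by lia : j < k)]
  | succ i ih => rw [cgCoeff, ih (by lia), ih (by lia), sub_zero]

lemma cgCoeff_antidiagonal (n p : ℕ) {i j : ℕ} (hij : i + j = k) :
    cgCoeff n p k i j = (-1) ^ i := by
  induction i generalizing j with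
  | zero => simp [cgCoeff, (zero_add j).symm.trans hij]
  | succ i ih => rw [cgCoeff, cgCoeff_of_lt (by lia), ih (by lia), zero_sub, pow_succ, mul_neg_one]

lemma cgCoeff_zero_succ (hk : k ≤ n) {r : ℕ} (hr : r < p) :
    cgCoeff n p k 0 (k + r + 1) * ((r + 1) * (p - r)) =
      (k + r + 1) * (n - (k + r : ℕ)) * cgCoeff n p k 0 (k + r) := by
  have hchoose : ((k + r + 1).choose k : ℚ) * (r + 1) = (k + r).choose k * (k + r + 1) := by
    have := Nat.add_one_mul_choose_eq (k + r) r
    rw [Nat.choose_symm_of_eq_add (by lia : k + r + 1 = k + (r + 1)), Nat.choose_symm_add]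
    exact_mod_cast (this.symm.trans (mul_comm _ _))
  have hdesc : ((n - k).descFactorial (r + 1) : ℚ) =
      (n - (k + r : ℕ)) * (n - k).descFactorial r := by
    rw [Nat.descFactorial_succ]
    obtain hrn | hrn := le_or_gt r (n - k)
    · push_cast [Nat.cast_sub hrn, Nat.cast_sub hk]
      ring
    · simp [Nat.descFactorial_eq_zero_iff_lt.2 hrn]
  have hp : (p.descFactorial (r + 1) : ℚ) = (p - r) * p.descFactorial r := by
    rw [Nat.descFactorial_succ, Nat.cast_mul, Nat.cast_sub hr.le]
  have hp0 : (p.descFactorial r : ℚ) ≠ 0 := by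
    exact_mod_cast (Nat.descFactorial_eq_zero_iff_lt.not.2 hr.le.not_gt)
  have hpr : (p : ℚ) - r ≠ 0 := sub_ne_zero.2 (mod_cast hr.ne')
  simp only [cgCoeff, add_assoc k r 1, Nat.add_sub_cancel_left, hdesc, hp]
  rw [← add_assoc, mul_comm ((r : ℚ) + 1)]
  field_simp
  linear_combination ((n : ℚ) - (k + r : ℕ)) * (n - k).descFactorial r * hchoose

namespace IsHighestWeight

lemma lie_lower_succ (i j : ℕ) : ⁅lower f (i + 1) v, lower f j w⁆ =
    ⁅f, ⁅lower f i v, lower f j w⁆⁆ - ⁅lower f i v, lower f (j + 1) w⁆ := by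
  rw [lower_succ, lower_succ, leibniz_lie f, add_sub_cancel_right]

lemma lieSpan2_eq_bot (Hv : IsHighestWeight t V m v) (Hw : IsHighestWeight t W n w)
    (h0 : ∀ j, ⁅v, lower f j w⁆ = 0) : lieSpan2 g V W = ⊥ := by
  have hij (i j : ℕ) : ⁅lower f i v, lower f j w⁆ = 0 := by
    induction i generalizing j with
    | zero => exact h0 j
    | succ i ih => rw [lie_lower_succ, ih, ih, lie_zero, sub_zero]
  have hW (i : ℕ) : W ≤ LinearMap.ker (toEnd ℂ g g (lower f i v)) :=
    Hw.le_of_lower_mem fun j => LinearMap.mem_ker.2 (hij i j)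
  refine Symp.lieSpan2_eq_bot.2 fun x hx y hy => ?_
  have hV : V ≤ LinearMap.ker (toEnd ℂ g g y) := Hv.le_of_lower_mem fun i =>
    LinearMap.mem_ker.2 <| by
      rw [toEnd_apply_apply, ← lie_skew]
      exact neg_eq_zero.2 (hW i hy)
  rw [← lie_skew]
  exact neg_eq_zero.2 (hV hx)

lemma lie_h_lie_lower (Hv : IsHighestWeight t V m v) (Hw : IsHighestWeight t W n w) (j : ℕ) :
    ⁅h, ⁅v, lower f j w⁆⁆ = ((m : ℂ) + n - 2 * j) • ⁅v, lower f j w⁆ := by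
  rw [leibniz_lie, Hv.primitive.lie_h, Hw.lie_h, smul_lie, lie_smul, ← add_smul, add_sub_assoc]

lemma lie_e_lie_lower_succ (Hv : IsHighestWeight t V m v) (Hw : IsHighestWeight t W n w) (j : ℕ) :
    ⁅e, ⁅v, lower f (j + 1) w⁆⁆ = (((j : ℂ) + 1) * (n - j)) • ⁅v, lower f j w⁆ := by
  rw [leibniz_lie, Hv.primitive.lie_e, zero_lie, zero_add, Hw.lie_e_succ, lie_smul]

lemma exists_lie_lower_eq_smul [FiniteDimensional ℂ g] (Hv : IsHighestWeight t V m v)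
    (Hw : IsHighestWeight t W n w) (Hu : IsHighestWeight t U p u)
    (hU : ∀ j, ⁅v, lower f j w⁆ ∈ U) (hne : lieSpan2 g V W ≠ ⊥) :
    ∃ k ≤ n, m + n = p + 2 * k ∧ (∀ j < k, ⁅v, lower f j w⁆ = 0) ∧
      ∃ c : ℂ, c ≠ 0 ∧ ⁅v, lower f k w⁆ = c • u := by
  classical
  have hex : ∃ k, ⁅v, lower f k w⁆ ≠ 0 := by
    by_contra! h0
    exact hne (Hv.lieSpan2_eq_bot Hw h0)
  have hmin (j : ℕ) (hj : j < Nat.find hex) : ⁅v, lower f j w⁆ = 0 :=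
    not_not.1 (Nat.find_min hex hj)
  have hk := Nat.find_spec hex
  set k := Nat.find hex
  have hek : ⁅e, ⁅v, lower f k w⁆⁆ = 0 := by
    obtain hk0 | hj := k.eq_zero_or_eq_succ_pred
    · rw [hk0, leibniz_lie, Hv.primitive.lie_e, Hw.lie_e_zero, zero_lie, lie_zero, add_zero]
    · rw [hj, lie_e_lie_lower_succ Hv Hw, hmin k.pred (by lia), smul_zero]
  obtain ⟨hkp, c⟩ := Hu.exists_eq_smul_of_lie_e_eq_zero (hU k) (Hv.lie_h_lie_lower Hw k) hek hk
  have hsum : ((m + n : ℕ) : ℂ) = (p + 2 * k : ℕ) := by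
    push_cast
    linear_combination hkp
  refine ⟨k, not_lt.1 fun hnk => hk ?_, mod_cast hsum, hmin, c⟩
  rw [Hw.lower_eq_zero hnk, lie_zero]

lemma lie_lower_eq_smul_cgCoeff_zero [FiniteDimensional ℂ g] (Hv : IsHighestWeight t V m v)
    (Hw : IsHighestWeight t W n w) (Hu : IsHighestWeight t U p u)
    (hU : ∀ j, ⁅v, lower f j w⁆ ∈ U) (hkn : k ≤ n) (hsum : m + n = p + 2 * k) {c : ℂ}
    (hc : ⁅v, lower f k w⁆ = c • u) (r : ℕ) :
    ⁅v, lower f (k + r) w⁆ = (c * (cgCoeff n p k 0 (k + r) : ℚ)) • lower f r u := by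
  induction r with
  | zero => simp [hc, cgCoeff, lower_zero]
  | succ r ih =>
    obtain ⟨d, hd⟩ := Hu.exists_eq_smul_lower_of_lie_h (hU (k + r + 1)) (i := r + 1) <| by
      have : (m : ℂ) + n = p + 2 * k := mod_cast hsum
      rw [Hv.lie_h_lie_lower Hw, this]
      push_cast
      congr 1
      ring
    obtain hr | hr := le_or_gt p r
    · rw [← add_assoc, hd, Hu.lower_eq_zero (by lia), smul_zero, smul_zero]
    have hr0 : ((r : ℂ) + 1) * (p - r) ≠ 0 :=
      mul_ne_zero (Nat.cast_add_one_ne_zero r) (sub_ne_zero.2 (mod_cast hr.ne'))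
    have he := Hv.lie_e_lie_lower_succ Hw (k + r)
    rw [hd, lie_smul, Hu.lie_e_succ, ih, smul_smul, smul_smul] at he
    have he' := smul_left_injective ℂ (Hu.lower_ne_zero hr.le) he
    have hrec : ((cgCoeff n p k 0 (k + r + 1) : ℚ) : ℂ) * ((r + 1) * (p - r)) =
      (k + r + 1) * (n - (k + r : ℕ)) * (cgCoeff n p k 0 (k + r) : ℚ) :=
      mod_cast cgCoeff_zero_succ hkn hr
    rw [← add_assoc, hd]
    congr 1
    refine mul_right_cancel₀ hr0 ?_
    push_cast at he' hrec ⊢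
    linear_combination he' - c * hrec

theorem exists_lie_lower_lower_eq_smul [FiniteDimensional ℂ g] (Hv : IsHighestWeight t V m v)
    (Hw : IsHighestWeight t W n w) (Hu : IsHighestWeight t U p u) (hVW : lieSpan2 g V W = U) :
    ∃ k ≤ n, m + n = p + 2 * k ∧ ∃ c : ℂ, c ≠ 0 ∧ ∀ i j,
      ⁅lower f i v, lower f j w⁆ = (c * (cgCoeff n p k i j : ℚ)) • lower f (i + j - k) u := by
  have hU (j : ℕ) : ⁅v, lower f j w⁆ ∈ U :=
    hVW ▸ lie_mem_lieSpan2 (Hv.lower_mem 0) (Hw.lower_mem j)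
  have hne : lieSpan2 g V W ≠ ⊥ := by
    rintro h0
    exact Hu.lower_ne_zero p.zero_le ((Submodule.mem_bot ℂ).1 (h0 ▸ hVW ▸ Hu.lower_mem 0))
  obtain ⟨k, hkn, hsum, hlt, c, hc0, hc⟩ := Hv.exists_lie_lower_eq_smul Hw Hu hU hne
  refine ⟨k, hkn, hsum, c, hc0, fun i => ?_⟩
  induction i with
  | zero =>
    intro j
    obtain hj | hj := lt_or_ge j k
    · rw [lower_zero, hlt j hj, cgCoeff_of_lt (by lia), Rat.cast_zero, mul_zero, zero_smul]
    · obtain ⟨r, rfl⟩ := Nat.exists_eq_add_of_le hj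
      rw [lower_zero, Hv.lie_lower_eq_smul_cgCoeff_zero Hw Hu hU hkn hsum hc, zero_add,
        Nat.add_sub_cancel_left]
  | succ i ih =>
    intro j
    rw [lie_lower_succ, ih, ih, lie_smul, ← lower_succ, cgCoeff,
      show i + (j + 1) - k = i + 1 + j - k by lia]
    obtain hij | hij := lt_or_ge (i + j) k
    · simp [cgCoeff_of_lt hij]
    · rw [show i + j - k + 1 = i + 1 + j - k by lia, ← sub_smul, Rat.cast_sub, mul_sub]

end IsHighestWeight
end ClebschGordan

section Numerics

/-- The Clebsch–Gordan condition for a nonzero `sl₂`-equivariant map `V_m × V_n → V_p`. -/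
abbrev IsAdmissible (m n p : ℕ) : Prop :=
  m ≤ n + p ∧ n ≤ m + p ∧ p ≤ m + n ∧ Even (m + n + p)

/-- The condition for a nonzero alternating `sl₂`-equivariant map `V_m × V_m → V_p`: exchanging the
arguments of the map `V_m × V_m → V_p` with `m + m = p + 2 k` multiplies it by `(-1) ^ k`. -/
abbrev IsAlternating (m p : ℕ) : Prop :=
  IsAdmissible m m p ∧ Odd ((m + m - p) / 2)

/-- The coefficient of the highest weight vector of `V_z` in `⁅fⁱ v, ⁅fʲ v, fˡ w⁆⁆`, up to a scalar
independent of `i`, `j`, `l`, where `v ∈ V_a`, `w ∈ V_b` are highest weight vectors, the inner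
bracket takes values in `V_c` with `a + b = c + 2 k₁`, and the outer one in `V_z` with
`a + c = z + 2 k₂`. -/
def doubleCoeff (b c z k₁ k₂ i j l : ℕ) : ℚ :=
  cgCoeff b c k₁ j l * cgCoeff c z k₂ i (j + l - k₁)

/-- The identity `⁅x, ⁅y, w⁆⁆ = ⁅y, ⁅x, w⁆⁆` for `x, y ∈ V_a` and `w ∈ V_b`, tested on the
weight vectors for which both sides are highest weight vectors. -/
abbrev SymmetricJacobi (a b c z k₁ k₂ : ℕ) : Prop :=
  ∀ i < a + 1, ∀ j < i, i + j ≤ k₁ + k₂ →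
    doubleCoeff b c z k₁ k₂ i j (k₁ + k₂ - i - j) = doubleCoeff b c z k₁ k₂ j i (k₁ + k₂ - i - j)

/-- The identity `⁅x, ⁅y, w⁆⁆ + ⁅y, ⁅w, x⁆⁆ + ⁅w, ⁅x, y⁆⁆ = 0` for `x, y, w ∈ V_a`, tested on the
weight vectors for which the terms are highest weight vectors. -/
abbrev CyclicJacobi (a c z k₁ k₂ : ℕ) : Prop :=
  ∀ i < a + 1, ∀ j < a + 1, i + j ≤ k₁ + k₂ →
    doubleCoeff a c z k₁ k₂ i j (k₁ + k₂ - i - j) + doubleCoeff a c z k₁ k₂ j (k₁ + k₂ - i - j) i +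
      doubleCoeff a c z k₁ k₂ (k₁ + k₂ - i - j) i j = 0

/-- The numerical conditions on the highest weights `a, b, c, z` of the modules of a symmetric
table. -/
def IsSymmetricWeight (a b c z : ℕ) : Prop :=
  1 ≤ a ∧ 1 ≤ b ∧ 1 ≤ z ∧ (a = z → c = 0) ∧ IsAdmissible a b c ∧ IsAdmissible a c z ∧
    ((IsAlternating a c ∨ IsAlternating a z) ∧ IsAlternating b z ∨
      IsAlternating a z ∧ IsAdmissible b c z) ∧
    SymmetricJacobi a b c z ((a + b - c) / 2) ((a + c - z) / 2)

/-- The numerical conditions on the highest weights `a, b, c, z` of the modules of a cyclic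
table. -/
def IsCyclicWeight (a b c z : ℕ) : Prop :=
  1 ≤ a ∧ 1 ≤ b ∧ 1 ≤ z ∧ (a = z → c = 0) ∧ IsAlternating a c ∧ IsAdmissible a c z ∧
    IsAdmissible a b z ∧ IsAlternating b z ∧
    CyclicJacobi a c z ((a + a - c) / 2) ((a + c - z) / 2)

instance (a b c z : ℕ) : Decidable (IsSymmetricWeight a b c z) := by
  unfold IsSymmetricWeight; infer_instance

instance (a b c z : ℕ) : Decidable (IsCyclicWeight a b c z) := by
  unfold IsCyclicWeight; infer_instance

lemma not_isSymmetricWeight {a b c z : ℕ} (hsum : a + b + c + z ≤ 18) :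
    ¬ IsSymmetricWeight a b c z := by
  have hall : ∀ a < 19, ∀ b < 19 - a, ∀ c < 19 - a - b, ∀ z < 19 - a - b - c,
      ¬ IsSymmetricWeight a b c z := by
    decide +kernel
  exact hall a (by lia) b (by lia) c (by lia) z (by lia)

set_option synthInstance.maxSize 1000 in
lemma IsCyclicWeight.eq {a b c z : ℕ} (hsum : a + b + c + z ≤ 18) (hw : IsCyclicWeight a b c z) :
    a = 6 ∧ b = 4 ∧ c = 6 ∧ z = 2 := by
  have hall : ∀ a < 19, ∀ b < 19 - a, ∀ c < 19 - a - b, ∀ z < 19 - a - b - c,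
      IsCyclicWeight a b c z → a = 6 ∧ b = 4 ∧ c = 6 ∧ z = 2 := by
    decide +kernel
  exact hall a (by lia) b (by lia) c (by lia) z (by lia) hw

end Numerics

section Annihilators

variable {g : Type*} [LieRing g] [LieAlgebra ℂ g] {k : ℕ} {s : LieSubalgebra ℂ g}
  {U W : Submodule ℂ g} {V : Fin k → Submodule ℂ g}

lemma IsIrreducibleSMod.eq_zero_of_forall_lie_eq_zero (hU : IsIrreducibleSMod g s U)
    (hW : Invariant g s W) (hUW : lieSpan2 g U W ≠ ⊥) {u : g} (hu : u ∈ U)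
    (h0 : ∀ w ∈ W, ⁅u, w⁆ = 0) : u = 0 := by
  let A : Submodule ℂ g := ⨅ w ∈ W, LinearMap.ker (LieModule.toEnd ℂ g g w)
  have mem_A (v : g) : v ∈ A ↔ ∀ w ∈ W, ⁅w, v⁆ = 0 := by simp [A]
  have hA : Invariant g s A := fun x hx v hv => by
    rw [mem_A] at hv ⊢
    intro w hw
    rw [leibniz_lie, hv w hw, lie_zero, add_zero, ← lie_skew w x, neg_lie, hv _ (hW x hx w hw),
      neg_zero]
  by_contra hu0
  have hUA := hU.le_of_mem hA hu0 hu <| (mem_A u).2 fun w hw => by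
    rw [← lie_skew, h0 w hw, neg_zero]
  refine hUW (lieSpan2_eq_bot.2 fun v hv w hw => ?_)
  rw [← lie_skew, (mem_A v).1 (hUA hv) w hw, neg_zero]

lemma IsIrreducibleSMod.eq_zero_of_fixed (hU : IsIrreducibleSMod g s U)
    (hsU : ∃ x ∈ s, ∃ v ∈ U, ⁅x, v⁆ ≠ 0) {u : g} (hu : u ∈ U) (h0 : ∀ x ∈ s, ⁅u, x⁆ = 0) :
    u = 0 := by
  refine hU.eq_zero_of_forall_lie_eq_zero (W := s.toSubmodule) (fun x hx y hy => s.lie_mem hx hy)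
    (fun hUs => ?_) hu h0
  obtain ⟨x, hx, v, hv, hne⟩ := hsU
  exact hne (lieSpan2_eq_bot.1 (lieSpan2_comm U s.toSubmodule ▸ hUs) x hx v hv)

lemma IsSympatheticDecomp.eq_sum_proj (h : IsSympatheticDecomp s V) {x : g}
    (hx : x ∈ LieAlgebra.radical ℂ g) : x = ∑ i, h.proj i x := by
  have hle : ⨆ i, V i ≤ LinearMap.eqLocus LinearMap.id (∑ i, h.proj i) :=
    iSup_le fun i v hv => by
      rw [LinearMap.mem_eqLocus, LinearMap.sum_apply, LinearMap.id_apply,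
        Fintype.sum_eq_single i fun j hji => h.proj_apply_of_ne hji.symm hv, h.proj_apply_self hv]
  simpa using hle (h.isDecomp.2.2 ▸ hx : x ∈ ⨆ i, V i)

lemma IsSympatheticDecomp.eq_zero_of_centralizes (h : IsSympatheticDecomp s V)
    (hsV : ∀ i, ∃ x ∈ s, ∃ v ∈ V i, ⁅x, v⁆ ≠ 0) {x : g} (hx : ∀ y ∈ s, ⁅x, y⁆ = 0) : x = 0 := by
  rw [h.eq_sum_proj (h.mem_radical_of_centralizes hx)]
  refine Finset.sum_eq_zero fun i _ =>
    (h.isDecomp.1 i).eq_zero_of_fixed (hsV i) (h.proj_mem i x) fun y hy => ?_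
  rw [← lie_skew, ← h.proj_lie i hy, ← lie_skew, hx y hy, neg_zero, map_zero, neg_zero]

end Annihilators

section CenterOfRadical

variable {g : Type*} [LieRing g] [LieAlgebra ℂ g] {s : LieSubalgebra ℂ g}
  {V : Fin 4 → Submodule ℂ g}

namespace IsLeveledDecomp

lemma three_le_centerRad (h : IsLeveledDecomp s V) : V 3 ≤ centerRad g := by
  refine fun x hx => ⟨h.le_radical 3 hx, fun y hy => ?_⟩
  have hle : ⨆ i, V i ≤ LinearMap.ker (LieModule.toEnd ℂ g g x) := iSup_le fun i v hv => by
    rw [LinearMap.mem_ker, LieModule.toEnd_apply_apply, ← lie_skew,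
      lieSpan2_eq_bot.1 (h.lie_three i) v hv x hx, neg_zero]
  exact hle (h.isDecomp.2.2 ▸ hy : y ∈ ⨆ i, V i)

lemma centerRad_eq (h : IsLeveledDecomp s V) (hV : IsCyclicTable V) : centerRad g = V 3 := by
  refine le_antisymm (fun x ⟨hx, hxc⟩ => ?_) h.three_le_centerRad
  have eq_zero {i j : Fin 4} (hij : lieSpan2 g (V i) (V j) ≠ ⊥) :
      (∀ y ∈ V j, ⁅h.proj i x, y⁆ = 0) → h.proj i x = 0 :=
    (h.isDecomp.1 i).eq_zero_of_forall_lie_eq_zero (h.isDecomp.1 j).2.1 hij (h.proj_mem i x)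
  have hsum (i : Fin 4) (y : g) (hy : y ∈ V i) :
      ⁅h.proj 0 x, y⁆ + ⁅h.proj 1 x, y⁆ + ⁅h.proj 2 x, y⁆ = 0 := by
    have hxy := hxc y (h.le_radical i hy)
    have h3 := (h.three_le_centerRad (h.proj_mem 3 x)).2 y (h.le_radical i hy)
    rwa [h.eq_sum_proj hx, Fin.sum_univ_four, add_lie, add_lie, add_lie, h3, add_zero] at hxy
  have h20 : lieSpan2 g (V 2) (V 0) = V 3 := by rw [lieSpan2_comm, h.lie_zero_two]
  have h0 : h.proj 0 x = 0 := eq_zero (hV.lie_zero_zero ▸ h.ne_bot 2) fun y hy => by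
    have h00y : ⁅h.proj 0 x, y⁆ ∈ V 2 := hV.lie_zero_zero ▸ lie_mem_lieSpan2 (h.proj_mem 0 x) hy
    have h10y : ⁅h.proj 1 x, y⁆ ∈ V 3 := by
      rw [← hV.lie_zero_one, lieSpan2_comm]
      exact lie_mem_lieSpan2 (h.proj_mem 1 x) hy
    have h20y : ⁅h.proj 2 x, y⁆ ∈ V 3 := h20 ▸ lie_mem_lieSpan2 (h.proj_mem 2 x) hy
    simpa [h.proj_apply_self h00y, h.proj_apply_of_ne (i := 2) (by decide) h10y,
      h.proj_apply_of_ne (i := 2) (by decide) h20y] using congrArg (h.proj 2) (hsum 0 y hy)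
  have h1 : h.proj 1 x = 0 := eq_zero (hV.lie_one_one ▸ h.ne_bot 3) fun y hy => by
    have h21y : ⁅h.proj 2 x, y⁆ = 0 := by
      rw [← lie_skew, lieSpan2_eq_bot.1 hV.lie_one_two y hy _ (h.proj_mem 2 x), neg_zero]
    simpa [h0, h21y] using hsum 1 y hy
  have h2 : h.proj 2 x = 0 := eq_zero (h20 ▸ h.ne_bot 3) fun y hy => by
    simpa [h0, h1] using hsum 0 y hy
  rw [h.eq_sum_proj hx, Fin.sum_univ_four, h0, h1, h2]
  simpa using h.proj_mem 3 x

end IsLeveledDecomp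
end CenterOfRadical

section WeightConditions

open LieModule Module

variable {g : Type*} [LieRing g] [LieAlgebra ℂ g] {h e f : g} {t : IsSl2Triple h e f}
  {U V W : Submodule ℂ g} {a b c z n : ℕ} {u v w x : g}

namespace IsHighestWeight

lemma pos [FiniteDimensional ℂ g] (H : IsHighestWeight t V n v)
    (hV : ∃ x ∈ t.toLieSubalgebra ℂ, ∃ y ∈ V, ⁅x, y⁆ ≠ 0) : 1 ≤ n := by
  by_contra! hn
  obtain rfl : n = 0 := Nat.lt_one_iff.1 hn
  have lower_lie (x : g) (hx : ⁅x, v⁆ = 0) : V ≤ LinearMap.ker (toEnd ℂ g g x) :=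
    H.le_span.trans <| Submodule.span_le.2 <| by
      rintro _ ⟨i, rfl⟩
      simpa [lower_zero] using hx
  obtain ⟨x, hx, y, hy, hne⟩ := hV
  refine hne ?_
  rw [← lie_skew, neg_eq_zero]
  refine forall_mem_toLieSubalgebra (W := LinearMap.ker (toEnd ℂ g g y)) ?_ ?_ ?_ x hx <;>
    rw [LinearMap.mem_ker, toEnd_apply_apply, ← lie_skew, neg_eq_zero]
  · exact lower_lie e H.lie_e_zero hy
  · exact lower_lie f ((lower_succ f 0 v).symm.trans (H.lower_eq_zero zero_lt_one)) hy
  · exact lower_lie h (by simpa [lower_zero] using H.lie_h 0) hy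

lemma exists_lie_ne_zero (H : IsHighestWeight t V n v) (hn : n ≠ 0) :
    ∃ x ∈ t.toLieSubalgebra ℂ, ∃ y ∈ V, ⁅x, y⁆ ≠ 0 := by
  refine ⟨h, Submodule.subset_span (by simp), lower f 0 v, H.lower_mem 0, ?_⟩
  rw [H.lie_h]
  exact smul_ne_zero (by simpa using hn) (H.lower_ne_zero n.zero_le)

lemma exists_hom [FiniteDimensional ℂ g] (Hv : IsHighestWeight t V n v)
    (Hw : IsHighestWeight t W n w) : ∃ φ : g →ₗ[ℂ] g, φ v = w ∧ (∀ y ∈ V, φ y ∈ W) ∧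
      ∀ x ∈ t.toLieSubalgebra ℂ, ∀ y ∈ V, φ ⁅x, y⁆ = ⁅x, φ y⁆ := by
  obtain ⟨φ, hφ⟩ := LinearMap.exists_extend
    ((Basis.span Hv.linearIndependent).constr ℂ fun i : Fin (n + 1) => lower f i w)
  have map_lower (i : ℕ) : φ (lower f i v) = lower f i w := by
    obtain hi | hi := lt_or_ge n i
    · rw [Hv.lower_eq_zero hi, Hw.lower_eq_zero hi, map_zero]
    · let j : Fin (n + 1) := ⟨i, Nat.lt_succ_of_le hi⟩
      have hj := (Basis.span Hv.linearIndependent).constr_basis ℂ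
        (fun i : Fin (n + 1) => lower f i w) j
      rwa [← hφ, LinearMap.comp_apply, Submodule.subtype_apply, Basis.span_apply] at hj
  have comm_of_lower {x : g} (hx : ∀ i, φ ⁅x, lower f i v⁆ = ⁅x, lower f i w⁆) :
      V ≤ LinearMap.eqLocus (φ ∘ₗ toEnd ℂ g g x) (toEnd ℂ g g x ∘ₗ φ) :=
    Hv.le_of_lower_mem fun i => by simpa [map_lower] using hx i
  refine ⟨φ, map_lower 0, fun y hy => ?_, fun x hx y hy => ?_⟩
  · exact Hv.le_of_lower_mem (W := W.comap φ)
      (fun i => by simpa [map_lower] using Hw.lower_mem i) hy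
  · have hker := forall_mem_toLieSubalgebra (t := t) (W := LinearMap.eqLocus
      (φ ∘ₗ (toEnd ℂ g g : g →ₗ[ℂ] Module.End ℂ g).flip y)
      ((toEnd ℂ g g : g →ₗ[ℂ] Module.End ℂ g).flip (φ y)))
    refine hker (comm_of_lower (fun i => ?_) hy) (comm_of_lower (fun i => ?_) hy)
      (comm_of_lower (fun i => ?_) hy) x hx
    · cases i with
      | zero => rw [Hv.lie_e_zero, Hw.lie_e_zero, map_zero]
      | succ i => rw [Hv.lie_e_succ, Hw.lie_e_succ, map_smul, map_lower]
    · rw [← lower_succ, ← lower_succ, map_lower]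
    · rw [Hv.lie_h, Hw.lie_h, map_smul, map_lower]

lemma isAdmissible_and_exists_lie_lower [FiniteDimensional ℂ g] (Hv : IsHighestWeight t V a v)
    (Hw : IsHighestWeight t W b w) (Hu : IsHighestWeight t U c u) (hVW : lieSpan2 g V W = U) :
    IsAdmissible a b c ∧ ∃ μ : ℂ, μ ≠ 0 ∧ ∀ i j, ⁅lower f i v, lower f j w⁆ =
      (μ * (cgCoeff b c ((a + b - c) / 2) i j : ℚ)) • lower f (i + j - (a + b - c) / 2) u := by
  obtain ⟨k, hkb, hk, hμ⟩ := Hv.exists_lie_lower_lower_eq_smul Hw Hu hVW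
  obtain ⟨l, hla, hl, -⟩ := Hw.exists_lie_lower_lower_eq_smul Hv Hu (lieSpan2_comm W V ▸ hVW)
  obtain rfl : k = (a + b - c) / 2 := by lia
  exact ⟨⟨by lia, by lia, by lia, c + (a + b - c) / 2, by lia⟩, hμ⟩

lemma isAdmissible [FiniteDimensional ℂ g] (Hv : IsHighestWeight t V a v)
    (Hw : IsHighestWeight t W b w) (Hu : IsHighestWeight t U c u) (hVW : lieSpan2 g V W = U) :
    IsAdmissible a b c :=
  (Hv.isAdmissible_and_exists_lie_lower Hw Hu hVW).1

lemma isAlternating [FiniteDimensional ℂ g] (Hv : IsHighestWeight t V a v)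
    (Hu : IsHighestWeight t U c u) (hVV : lieSpan2 g V V = U) : IsAlternating a c := by
  obtain ⟨hadm, μ, hμ, hlie⟩ := Hv.isAdmissible_and_exists_lie_lower Hv Hu hVV
  refine ⟨hadm, Nat.not_even_iff_odd.1 fun heven => ?_⟩
  set k := (a + a - c) / 2
  have h0k : ⁅lower f 0 v, lower f k v⁆ = μ • u := by
    rw [hlie, cgCoeff_antidiagonal a c (zero_add k)]
    simp [lower_zero]
  have hk0 : ⁅lower f k v, lower f 0 v⁆ = μ • u := by
    rw [hlie, cgCoeff_antidiagonal a c (add_zero k), heven.neg_one_pow]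
    simp [lower_zero]
  rw [← lie_skew, h0k, ← neg_smul] at hk0
  exact hμ (CharZero.neg_eq_self_iff.1 (smul_left_injective ℂ Hu.primitive.ne_zero hk0))

end IsHighestWeight

variable {k₁ k₂ : ℕ} {μ ν : ℂ}

lemma lie_lower_lie_lower_lower
    (hvw : ∀ i j, ⁅lower f i v, lower f j w⁆ =
      (μ * (cgCoeff b c k₁ i j : ℚ)) • lower f (i + j - k₁) u)
    (hvu : ∀ i j, ⁅lower f i v, lower f j u⁆ =
      (ν * (cgCoeff c z k₂ i j : ℚ)) • lower f (i + j - k₂) x)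
    {i j l : ℕ} (hijl : i + j + l = k₁ + k₂) :
    ⁅lower f i v, ⁅lower f j v, lower f l w⁆⁆ =
      (μ * ν * (doubleCoeff b c z k₁ k₂ i j l : ℚ)) • x := by
  rw [hvw, lie_smul, hvu, smul_smul, doubleCoeff]
  obtain hk | hk := lt_or_ge (j + l) k₁
  · simp [cgCoeff_of_lt hk]
  · rw [show i + (j + l - k₁) - k₂ = 0 by lia, lower_zero, Rat.cast_mul]
    ring_nf

lemma symmetricJacobi_of_lie_lower (a : ℕ) (hμ : μ ≠ 0) (hν : ν ≠ 0) (hx : x ≠ 0)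
    (hvw : ∀ i j, ⁅lower f i v, lower f j w⁆ =
      (μ * (cgCoeff b c k₁ i j : ℚ)) • lower f (i + j - k₁) u)
    (hvu : ∀ i j, ⁅lower f i v, lower f j u⁆ =
      (ν * (cgCoeff c z k₂ i j : ℚ)) • lower f (i + j - k₂) x)
    (hvv : ∀ i j l, ⁅⁅lower f i v, lower f j v⁆, lower f l w⁆ = 0) :
    SymmetricJacobi a b c z k₁ k₂ := by
  intro i _ j _ hij
  have hJ := leibniz_lie (lower f i v) (lower f j v) (lower f (k₁ + k₂ - i - j) w)
  rw [hvv, zero_add, lie_lower_lie_lower_lower hvw hvu (by lia),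
    lie_lower_lie_lower_lower hvw hvu (by lia)] at hJ
  exact Rat.cast_injective (mul_left_cancel₀ (mul_ne_zero hμ hν) (smul_left_injective ℂ hx hJ))

lemma cyclicJacobi_of_lie_lower (hμ : μ ≠ 0) (hν : ν ≠ 0) (hx : x ≠ 0)
    (hvv : ∀ i j, ⁅lower f i v, lower f j v⁆ =
      (μ * (cgCoeff a c k₁ i j : ℚ)) • lower f (i + j - k₁) u)
    (hvu : ∀ i j, ⁅lower f i v, lower f j u⁆ =
      (ν * (cgCoeff c z k₂ i j : ℚ)) • lower f (i + j - k₂) x) :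
    CyclicJacobi a c z k₁ k₂ := by
  intro i _ j _ hij
  have hJ := lie_jacobi (lower f i v) (lower f j v) (lower f (k₁ + k₂ - i - j) v)
  rw [lie_lower_lie_lower_lower hvv hvu (by lia), lie_lower_lie_lower_lower hvv hvu (by lia),
    lie_lower_lie_lower_lower hvv hvu (by lia), ← add_smul, ← add_smul, ← mul_add, ← mul_add,
    smul_eq_zero_iff_left hx, mul_eq_zero_iff_left (mul_ne_zero hμ hν)] at hJ
  exact_mod_cast hJ

end WeightConditions

section Sl2Levi

open Module

variable {g : Type*} [LieRing g] [LieAlgebra ℂ g]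

namespace IsLeveledDecomp

lemma exists_lie_ne_zero {s : LieSubalgebra ℂ g} {V : Fin 4 → Submodule ℂ g}
    (hV : IsLeveledDecomp s V) {i : Fin 4} (hi : i ≠ 2) : ∃ x ∈ s, ∃ v ∈ V i, ⁅x, v⁆ ≠ 0 := by
  fin_cases i
  · exact hV.exists_lie_ne_zero_of_lieSpan2_ne fun i j => (hV.ne_generator i j).1
  · exact hV.exists_lie_ne_zero_of_lieSpan2_ne fun i j => (hV.ne_generator i j).2
  · exact (hi rfl).elim
  · exact hV.exists_lie_ne_zero_of_lieSpan2_eq_bot hV.lie_three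

variable [FiniteDimensional ℂ g] {h e f : g} {t : IsSl2Triple h e f}
  {V : Fin 4 → Submodule ℂ g} {a b c z : ℕ} {va vb vc vz : g}

-- Otherwise `V 0` and `V 3` are isomorphic, and the isomorphism extends to an outer derivation.
lemma weight_two_eq_zero (hV : IsLeveledDecomp (t.toLieSubalgebra ℂ) V)
    (Ha : IsHighestWeight t (V 0) a va) (Hc : IsHighestWeight t (V 2) c vc)
    (Hz : IsHighestWeight t (V 3) a vz) : c = 0 := by
  by_contra hc
  obtain ⟨φ, hφv, hφ, hφs⟩ := Ha.exists_hom Hz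
  obtain ⟨x, hxs, hx⟩ := hV.exists_forall_eq_lie_of_hom (fun i j => (hV.ne_generator i j).1)
    hV.lie_three hφ hφs
  have hx0 : x = 0 := hV.eq_zero_of_centralizes (fun i => by
    obtain rfl | hi := eq_or_ne i 2
    · exact Hc.exists_lie_ne_zero hc
    · exact hV.exists_lie_ne_zero hi) hxs
  have hφ0 := hx va (Ha.lower_mem 0)
  rw [hφv, hx0, zero_lie] at hφ0
  exact Hz.primitive.ne_zero hφ0

lemma isSymmetricWeight (hV : IsLeveledDecomp (t.toLieSubalgebra ℂ) V) (hT : IsSymmetricTable V)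
    (Ha : IsHighestWeight t (V 0) a va) (Hb : IsHighestWeight t (V 1) b vb)
    (Hc : IsHighestWeight t (V 2) c vc) (Hz : IsHighestWeight t (V 3) z vz) :
    IsSymmetricWeight a b c z := by
  obtain ⟨habc, μ, hμ, hlie₁⟩ := Ha.isAdmissible_and_exists_lie_lower Hb Hc hT.lie_zero_one
  obtain ⟨hacz, ν, hν, hlie₂⟩ := Ha.isAdmissible_and_exists_lie_lower Hc Hz hV.lie_zero_two
  refine ⟨Ha.pos (hV.exists_lie_ne_zero (by decide)), Hb.pos (hV.exists_lie_ne_zero (by decide)),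
    Hz.pos (hV.exists_lie_ne_zero (by decide)), ?_, habc, hacz, ?_,
    symmetricJacobi_of_lie_lower a hμ hν Hz.primitive.ne_zero hlie₁ hlie₂ fun i j l => ?_⟩
  · rintro rfl
    exact hV.weight_two_eq_zero Ha Hc Hz
  · obtain ⟨h00 | h00, h11⟩ | ⟨h00, h12⟩ := hT.lie_eq
    · exact Or.inl ⟨Or.inl (Ha.isAlternating Hc h00), Hb.isAlternating Hz h11⟩
    · exact Or.inl ⟨Or.inr (Ha.isAlternating Hz h00), Hb.isAlternating Hz h11⟩
    · exact Or.inr ⟨Ha.isAlternating Hz h00, Hb.isAdmissible Hc Hz h12⟩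
  · exact lieSpan2_eq_bot.1 hT.lie_lie_zero_zero_one _
      (lie_mem_lieSpan2 (Ha.lower_mem i) (Ha.lower_mem j)) _ (Hb.lower_mem l)

lemma isCyclicWeight (hV : IsLeveledDecomp (t.toLieSubalgebra ℂ) V) (hT : IsCyclicTable V)
    (Ha : IsHighestWeight t (V 0) a va) (Hb : IsHighestWeight t (V 1) b vb)
    (Hc : IsHighestWeight t (V 2) c vc) (Hz : IsHighestWeight t (V 3) z vz) :
    IsCyclicWeight a b c z := by
  obtain ⟨-, μ, hμ, hlie₁⟩ := Ha.isAdmissible_and_exists_lie_lower Ha Hc hT.lie_zero_zero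
  obtain ⟨hacz, ν, hν, hlie₂⟩ := Ha.isAdmissible_and_exists_lie_lower Hc Hz hV.lie_zero_two
  refine ⟨Ha.pos (hV.exists_lie_ne_zero (by decide)), Hb.pos (hV.exists_lie_ne_zero (by decide)),
    Hz.pos (hV.exists_lie_ne_zero (by decide)), ?_, Ha.isAlternating Hc hT.lie_zero_zero, hacz,
    Ha.isAdmissible Hb Hz hT.lie_zero_one, Hb.isAlternating Hz hT.lie_one_one,
    cyclicJacobi_of_lie_lower hμ hν Hz.primitive.ne_zero hlie₁ hlie₂⟩
  rintro rfl
  exact hV.weight_two_eq_zero Ha Hc Hz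

theorem finrank_of_sl2 (hV : IsLeveledDecomp (t.toLieSubalgebra ℂ) V)
    (hT : IsCyclicTable V ∨ IsSymmetricTable V) :
    22 ≤ ∑ i, finrank ℂ (V i) ∧ (∑ i, finrank ℂ (V i) = 22 →
      finrank ℂ (V 0) = 7 ∧ finrank ℂ (V 1) = 5 ∧ finrank ℂ (V 2) = 7 ∧ finrank ℂ (V 3) = 3 ∧
        centerRad g = V 3) := by
  obtain ⟨a, va, Ha⟩ := exists_isHighestWeight (hV.isDecomp.1 0)
  obtain ⟨b, vb, Hb⟩ := exists_isHighestWeight (hV.isDecomp.1 1)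
  obtain ⟨c, vc, Hc⟩ := exists_isHighestWeight (hV.isDecomp.1 2)
  obtain ⟨z, vz, Hz⟩ := exists_isHighestWeight (hV.isDecomp.1 3)
  rw [Fin.sum_univ_four, Ha.finrank_eq, Hb.finrank_eq, Hc.finrank_eq, Hz.finrank_eq]
  obtain hsum | hsum := lt_or_ge 18 (a + b + c + z)
  · exact ⟨by lia, fun h22 => by lia⟩
  obtain hT | hT := hT
  · obtain ⟨rfl, rfl, rfl, rfl⟩ := (hV.isCyclicWeight hT Ha Hb Hc Hz).eq hsum
    exact ⟨le_rfl, fun _ => ⟨rfl, rfl, rfl, rfl, hV.centerRad_eq hT⟩⟩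
  · exact (not_isSymmetricWeight hsum (hV.isSymmetricWeight hT Ha Hb Hc Hz)).elim

end IsLeveledDecomp
end Sl2Levi

section Weights

open LieAlgebra LieModule Module

variable {K L : Type*} [Field K] [CharZero K] [LieRing L] [LieAlgebra K L] [FiniteDimensional K L]
  {H : LieSubalgebra K L} [H.IsCartanSubalgebra]

lemma finrank_cartan_add_card_le (S : Finset (Weight K H L)) (hS : ∀ γ ∈ S, γ.IsNonZero) :
    finrank K H + S.card ≤ finrank K L := by
  choose w hw hw0 using fun γ : Weight K H L => γ.exists_ne_zero
  have hind := LieSubmodule.iSupIndep_toSubmodule.2 (iSupIndep_genWeightSpace K H L)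
  have hli : LinearIndependent K fun γ : S => w γ :=
    (hind.comp (f := fun γ : S => ((γ : Weight K H L) : H → K)) fun a b hab =>
      Subtype.ext (DFunLike.coe_injective hab)).linearIndependent
      (fun γ : S => (genWeightSpace L (γ : Weight K H L)).toSubmodule)
      (fun γ => hw γ) fun γ => hw0 γ
  have hdisj : Disjoint H.toSubmodule (Submodule.span K (Set.range fun γ : S => w γ)) := by
    refine (hind 0).mono (fun x hx => ?_) (Submodule.span_le.2 ?_)
    · change x ∈ rootSpace H 0
      rwa [rootSpace_zero_eq, LieSubalgebra.mem_toLieSubmodule]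
    · rintro _ ⟨γ, rfl⟩
      exact Submodule.mem_iSup_of_mem (γ : H → K)
        (Submodule.mem_iSup_of_mem (fun h => hS γ γ.2 h) (hw γ))
  have := Submodule.finrank_add_finrank_le_of_disjoint hdisj
  rwa [finrank_span_eq_card hli, Fintype.card_coe] at this

lemma two_le_finrank_cartan {α β : Weight K H L}
    (h : LinearIndependent K ![(α : H → K), β]) : 2 ≤ finrank K H := by
  have hli : LinearIndependent K ![α.toLinear, β.toLinear] := by
    rw [LinearIndependent.pair_iff] at h ⊢
    exact fun x y hxy => h x y (funext fun u => LinearMap.congr_fun hxy u)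
  rw [← Subspace.dual_finrank_eq]
  simpa using hli.fintype_card_le_finrank

end Weights

section Roots

open LieAlgebra LieModule LieAlgebra.IsKilling Module

variable {K L : Type*} [Field K] [CharZero K] [LieRing L] [LieAlgebra K L] [FiniteDimensional K L]
  [IsKilling K L] {H : LieSubalgebra K L} [H.IsCartanSubalgebra] [IsTriangularizable K H L]
  {α β γ δ : Weight K H L} {n : ℕ}

lemma mem_of_mem_rootSpace (hγ : γ.IsNonZero) {S : Submodule K L} {x y : L}
    (hx : x ∈ rootSpace H γ) (hx0 : x ≠ 0) (hxS : x ∈ S) (hy : y ∈ rootSpace H γ) : y ∈ S := by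
  obtain ⟨c, hc⟩ := (finrank_eq_one_iff_of_nonzero' (⟨x, hx⟩ : rootSpace H γ)
    (by simpa using hx0)).1 (finrank_rootSpace_eq_one γ hγ) ⟨y, hy⟩
  obtain rfl : c • x = y := congrArg Subtype.val hc
  exact S.smul_mem c hxS

lemma cartan_le_of_rootSpace_le {S : LieSubalgebra K L}
    (hS : ∀ γ : Weight K H L, γ.IsNonZero → ∀ x ∈ rootSpace H γ, x ∈ S) : H ≤ S := by
  have coroots_le : (⊤ : LieIdeal K H).toSubmodule ≤
      S.toSubmodule.comap H.toSubmodule.subtype := by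
    rw [← biSup_corootSpace_eq_top H]
    simp only [LieSubmodule.iSup_toSubmodule, iSup_le_iff]
    intro γ hγ x hx
    refine Submodule.mem_comap.2 (Submodule.span_le.2 ?_ ((mem_corootSpace γ).1 hx))
    rintro _ ⟨y, hy, z, hz, rfl⟩
    exact S.lie_mem (hS γ hγ y hy) (hS (-γ) (by simpa using hγ) z (by simpa using hz))
  exact fun x hx => coroots_le (x := ⟨x, hx⟩) trivial

lemma eq_top_of_rootSpace_le {S : LieSubalgebra K L}
    (hS : ∀ γ : Weight K H L, γ.IsNonZero → ∀ x ∈ rootSpace H γ, x ∈ S) : S = ⊤ := by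
  have weightSpaces_le : (⊤ : LieSubmodule K H L).toSubmodule ≤ S.toSubmodule := by
    rw [← iSup_genWeightSpace_eq_top' K H L]
    simp only [LieSubmodule.iSup_toSubmodule, iSup_le_iff]
    intro γ y hy
    by_cases hγ : γ.IsZero
    · replace hy : y ∈ rootSpace H γ := hy
      rw [hγ.eq, rootSpace_zero_eq] at hy
      exact cartan_le_of_rootSpace_le hS (by simpa using hy)
    · exact hS γ hγ y hy
  exact eq_top_iff.2 fun x _ => weightSpaces_le (x := x) trivial

lemma finrank_cartan_add_two_mul_length_le {l : List (Weight K H L)}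
    (h0 : ∀ γ ∈ l, γ.IsNonZero) (hl : l.Pairwise fun γ δ => γ ≠ δ ∧ γ ≠ -δ) :
    finrank K H + 2 * l.length ≤ finrank K L := by
  classical
  have ne_neg_self : ∀ γ ∈ l, γ ≠ -γ := fun γ hγ h => h0 γ hγ <| funext fun u =>
    self_eq_neg.1 (DFunLike.congr_fun h u)
  have : Std.Symm fun γ δ : Weight K H L => γ ≠ -δ := ⟨fun γ δ h h' => h (by rw [h', neg_neg])⟩
  have ne_neg : ∀ γ ∈ l, ∀ δ ∈ l, γ ≠ -δ := fun γ hγ δ hδ =>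
    (hl.imp And.right).forall_of_forall ne_neg_self hγ hδ
  have nodup : (l ++ l.map Neg.neg).Nodup := by
    refine List.nodup_append'.2 ⟨hl.imp And.left, (hl.imp And.left).map _ fun γ δ h => ?_, ?_⟩
    · exact fun h' => h (neg_injective h')
    · intro γ hγ hγ'
      obtain ⟨δ, hδ, rfl⟩ := List.mem_map.1 hγ'
      exact ne_neg _ hγ δ hδ rfl
  have := finrank_cartan_add_card_le (l ++ l.map Neg.neg).toFinset fun γ hγ => by
    rw [List.mem_toFinset, List.mem_append, List.mem_map] at hγ
    obtain hγ | ⟨δ, hδ, rfl⟩ := hγ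
    · exact h0 γ hγ
    · exact (h0 δ hδ).neg
  rwa [List.toFinset_card_of_nodup nodup, List.length_append, List.length_map, ← two_mul] at this

lemma linearIndependent_pair_of_ne (hα : α.IsNonZero) (hβ : β.IsNonZero) (h1 : β ≠ α)
    (h2 : β ≠ -α) : LinearIndependent K ![(α : H → K), β] := by
  refine (LinearIndependent.pair_iff' hα).2 fun k hk => ?_
  exact (eq_neg_or_eq_of_eq_smul α β hβ k hk.symm).elim h2 h1

lemma ne_and_ne_neg_of_linearIndependent (h : LinearIndependent K ![(α : H → K), β]) :
    α ≠ β ∧ α ≠ -β := by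
  have coeffs := LinearIndependent.pair_iff.1 h
  refine ⟨?_, ?_⟩ <;> rintro rfl
  · exact one_ne_zero (coeffs 1 (-1) (by simp)).1
  · exact one_ne_zero (coeffs 1 1 (by simp)).1

end Roots

section SimpleLieAlgebras

open LieAlgebra LieModule LieAlgebra.IsKilling Module

/-- Two `𝔰𝔩₂`-triples that are related like the Chevalley generators of `𝔰𝔩₃`: the Serre relations
which do not involve a double bracket. -/
structure IsA2Pair {L : Type*} [LieRing L] (h₁ e₁ f₁ h₂ e₂ f₂ : L) : Prop where
  left : IsSl2Triple h₁ e₁ f₁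
  right : IsSl2Triple h₂ e₂ f₂
  lie_e₁_f₂ : ⁅e₁, f₂⁆ = 0
  lie_e₂_f₁ : ⁅e₂, f₁⁆ = 0
  lie_h₁_e₂ : ⁅h₁, e₂⁆ = -e₂
  lie_h₁_f₂ : ⁅h₁, f₂⁆ = f₂
  lie_h₂_e₁ : ⁅h₂, e₁⁆ = -e₁
  lie_h₂_f₁ : ⁅h₂, f₁⁆ = f₁
  lie_h₁_h₂ : ⁅h₁, h₂⁆ = 0

namespace IsA2Pair

variable {L : Type*} [LieRing L] {h₁ e₁ f₁ h₂ e₂ f₂ : L}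

lemma symm (A : IsA2Pair h₁ e₁ f₁ h₂ e₂ f₂) : IsA2Pair h₂ e₂ f₂ h₁ e₁ f₁ :=
  ⟨A.right, A.left, A.lie_e₂_f₁, A.lie_e₁_f₂, A.lie_h₂_e₁, A.lie_h₂_f₁, A.lie_h₁_e₂, A.lie_h₁_f₂,
    by rw [← lie_skew, A.lie_h₁_h₂, neg_zero]⟩

lemma lie_e₁_e₂_ne_zero (A : IsA2Pair h₁ e₁ f₁ h₂ e₂ f₂) : ⁅e₁, e₂⁆ ≠ 0 := by
  intro h
  have := leibniz_lie f₁ e₁ e₂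
  rw [h, lie_zero, ← lie_skew f₁ e₁, A.left.lie_e_f, neg_lie, A.lie_h₁_e₂, ← lie_skew f₁ e₂,
    A.lie_e₂_f₁, neg_neg, neg_zero, lie_zero, add_zero] at this
  exact A.right.e_ne_zero this.symm

lemma lie_f₁_f₂_ne_zero (A : IsA2Pair h₁ e₁ f₁ h₂ e₂ f₂) : ⁅f₁, f₂⁆ ≠ 0 := by
  intro h
  have := leibniz_lie e₁ f₁ f₂
  rw [h, lie_zero, A.left.lie_e_f, A.lie_h₁_f₂, A.lie_e₁_f₂, lie_zero, add_zero] at this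
  exact A.right.f_ne_zero this.symm

section toLieSubalgebra

variable (R : Type*) [CommRing R] [LieAlgebra R L] (A : IsA2Pair h₁ e₁ f₁ h₂ e₂ f₂)

/-- The Lie subalgebra generated by an `A₂`-pair, a copy of `𝔰𝔩₃` in characteristic zero. Only the
raising and lowering operators are listed, since `hᵢ = ⁅eᵢ, fᵢ⁆`. -/
def toLieSubalgebra (_ : IsA2Pair h₁ e₁ f₁ h₂ e₂ f₂) : LieSubalgebra R L :=
  LieSubalgebra.lieSpan R L {e₁, f₁, e₂, f₂}

lemma e₁_mem : e₁ ∈ A.toLieSubalgebra R := LieSubalgebra.subset_lieSpan (by simp)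

lemma f₁_mem : f₁ ∈ A.toLieSubalgebra R := LieSubalgebra.subset_lieSpan (by simp)

lemma symm_toLieSubalgebra : A.symm.toLieSubalgebra R = A.toLieSubalgebra R := by
  have : ({e₂, f₂, e₁, f₁} : Set L) = {e₁, f₁, e₂, f₂} := by grind
  rw [toLieSubalgebra, toLieSubalgebra, this]

lemma e₂_mem : e₂ ∈ A.toLieSubalgebra R := A.symm_toLieSubalgebra R ▸ A.symm.e₁_mem R

lemma f₂_mem : f₂ ∈ A.toLieSubalgebra R := A.symm_toLieSubalgebra R ▸ A.symm.f₁_mem R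

lemma h₁_mem : h₁ ∈ A.toLieSubalgebra R := by
  have := LieSubalgebra.lie_mem _ (A.e₁_mem R) (A.f₁_mem R)
  rwa [A.left.lie_e_f] at this

end toLieSubalgebra

end IsA2Pair

section RootSystem

variable {K L : Type*} [Field K] [LieRing L] [LieAlgebra K L] [FiniteDimensional K L]
  [IsKilling K L] {H : LieSubalgebra K L} [H.IsCartanSubalgebra] [IsTriangularizable K H L]
  {α β γ δ : Weight K H L}

/-- The root system of `L` with respect to `H` is of type `A₂`, with simple roots `α` and `β` and
highest root `δ`. -/
structure IsA2RootSystem (α β δ : Weight K H L) : Prop where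
  linearIndependent : LinearIndependent K ![(α : H → K), β]
  add_eq : (δ : H → K) = α + β
  eq_or : ∀ γ : Weight K H L, γ.IsNonZero → γ = α ∨ γ = -α ∨ γ = β ∨ γ = -β ∨ γ = δ ∨ γ = -δ

namespace IsA2RootSystem

lemma symm (S : IsA2RootSystem α β δ) : IsA2RootSystem β α δ where
  linearIndependent := LinearIndependent.pair_symm_iff.1 S.linearIndependent
  add_eq := by rw [S.add_eq, add_comm]
  eq_or γ hγ := by grind [S.eq_or γ hγ]

lemma left_isNonZero (S : IsA2RootSystem α β δ) : α.IsNonZero := S.linearIndependent.ne_zero 0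

variable [CharZero K]

lemma rootSpace_zsmul_add_eq_bot (S : IsA2RootSystem α β δ) {m : ℤ} (hm0 : m ≠ 0) (hm1 : m ≠ 1) :
    rootSpace H (m • (α : H → K) + β) = ⊥ := by
  by_contra hbot
  have coeffs := LinearIndependent.pair_iff.1 S.linearIndependent
  set γ : Weight K H L := ⟨_, hbot⟩
  have hγ : (γ : H → K) = (m : K) • (α : H → K) + β := by
    rw [Int.cast_smul_eq_zsmul]
    rfl
  have hne (c d : K) (h : ¬(c = m ∧ d = 1)) : (γ : H → K) ≠ c • (α : H → K) + d • (β : H → K) := by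
    intro h'
    obtain ⟨hc, hd⟩ := coeffs (c - m) (d - 1) (by
      rw [sub_smul, sub_smul, one_smul]
      linear_combination hγ - h')
    exact h ⟨sub_eq_zero.1 hc, sub_eq_zero.1 hd⟩
  have hγ0 : γ.IsNonZero := fun h => hne 0 0 (by simp) (by simpa using h)
  rcases S.eq_or γ hγ0 with h | h | h | h | h | h
  · exact hne 1 0 (by simp) (by simp [h])
  · exact hne (-1) 0 (by simp) (by simp [h])
  · exact hne 0 1 (by simpa [eq_comm] using hm0) (by simp [h])
  · exact hne 0 (-1) (by norm_num) (by simp [h])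
  · exact hne 1 1 (by simpa using (by exact_mod_cast hm1.symm)) (by simp [h, S.add_eq])
  · exact hne (-1) (-1) (by norm_num) (by simp [h, S.add_eq, add_comm])

lemma apply_coroot (S : IsA2RootSystem α β δ) : β (coroot α) = -1 := by
  have hpos : rootSpace H ((1 : ℤ) • (α : H → K) + β) ≠ ⊥ := by
    rw [one_smul, ← S.add_eq]
    exact δ.genWeightSpace_ne_bot
  have htwo := S.rootSpace_zsmul_add_eq_bot (m := 2) (by norm_num) (by norm_num)
  have hneg := S.rootSpace_zsmul_add_eq_bot (m := -1) (by norm_num) (by norm_num)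
  rw [rootSpace_zsmul_add_ne_bot_iff α β S.left_isNonZero] at hpos
  rw [← not_ne_iff, rootSpace_zsmul_add_ne_bot_iff α β S.left_isNonZero] at htwo hneg
  have : (chainBotCoeff α β : ℤ) - chainTopCoeff α β = -1 := by omega
  rw [apply_coroot_eq_cast α β, this, Int.cast_neg, Int.cast_one]

lemma rootSpace_neg_add_eq_bot (S : IsA2RootSystem α β δ) : rootSpace H (-(α : H → K) + β) = ⊥ := by
  simpa using S.rootSpace_zsmul_add_eq_bot (m := -1) (by norm_num) (by norm_num)

lemma exists_isA2Pair (S : IsA2RootSystem α β δ) : ∃ h₁ e₁ f₁ h₂ e₂ f₂ : L,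
    IsA2Pair h₁ e₁ f₁ h₂ e₂ f₂ ∧ e₁ ∈ rootSpace H α ∧ f₁ ∈ rootSpace H (-α) ∧
      e₂ ∈ rootSpace H β ∧ f₂ ∈ rootSpace H (-β) := by
  have hα := S.left_isNonZero
  have hβ := S.symm.left_isNonZero
  obtain ⟨h₁, e₁, f₁, t₁, he₁, hf₁⟩ := exists_isSl2Triple_of_weight_isNonZero hα
  obtain ⟨h₂, e₂, f₂, t₂, he₂, hf₂⟩ := exists_isSl2Triple_of_weight_isNonZero hβ
  obtain rfl := t₁.h_eq_coroot hα he₁ hf₁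
  obtain rfl := t₂.h_eq_coroot hβ he₂ hf₂
  have lie_coroot {χ : H → K} {x : L} (hx : x ∈ rootSpace H χ) (γ : Weight K H L) :
      ⁅(coroot γ : L), x⁆ = χ (coroot γ) • x := lie_eq_smul_of_mem_rootSpace hx (coroot γ)
  refine ⟨_, e₁, f₁, _, e₂, f₂, ⟨t₁, t₂, ?_, ?_, ?_, ?_, ?_, ?_, ?_⟩, he₁, hf₁, he₂, hf₂⟩
  · have : ⁅f₂, e₁⁆ ∈ rootSpace H (-(β : H → K) + α) :=
      lie_mem_genWeightSpace_of_mem_genWeightSpace hf₂ he₁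
    rwa [S.symm.rootSpace_neg_add_eq_bot, LieSubmodule.mem_bot, ← lie_skew, neg_eq_zero] at this
  · have : ⁅f₁, e₂⁆ ∈ rootSpace H (-(α : H → K) + β) :=
      lie_mem_genWeightSpace_of_mem_genWeightSpace hf₁ he₂
    rwa [S.rootSpace_neg_add_eq_bot, LieSubmodule.mem_bot, ← lie_skew, neg_eq_zero] at this
  · rw [lie_coroot he₂, S.apply_coroot, neg_one_smul]
  · rw [lie_coroot hf₂, Pi.neg_apply, S.apply_coroot, neg_neg, one_smul]
  · rw [lie_coroot he₁, S.symm.apply_coroot, neg_one_smul]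
  · rw [lie_coroot hf₁, Pi.neg_apply, S.symm.apply_coroot, neg_neg, one_smul]
  · rw [← LieSubalgebra.coe_bracket, trivial_lie_zero, ZeroMemClass.coe_zero]

lemma exists_isA2Pair_toLieSubalgebra_eq_top (S : IsA2RootSystem α β δ) :
    ∃ (h₁ e₁ f₁ h₂ e₂ f₂ : L) (A : IsA2Pair h₁ e₁ f₁ h₂ e₂ f₂), A.toLieSubalgebra K = ⊤ := by
  obtain ⟨h₁, e₁, f₁, h₂, e₂, f₂, A, he₁, hf₁, he₂, hf₂⟩ := S.exists_isA2Pair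
  refine ⟨h₁, e₁, f₁, h₂, e₂, f₂, A, eq_top_of_rootSpace_le (H := H) fun γ hγ x hx => ?_⟩
  have mem {y : L} (hy : y ∈ rootSpace H γ) (hy0 : y ≠ 0) (hyA : y ∈ A.toLieSubalgebra K) :
      x ∈ A.toLieSubalgebra K :=
    mem_of_mem_rootSpace hγ (S := (A.toLieSubalgebra K).toSubmodule) hy hy0 hyA hx
  have hee := lie_mem_genWeightSpace_of_mem_genWeightSpace he₁ he₂
  have hff := lie_mem_genWeightSpace_of_mem_genWeightSpace hf₁ hf₂
  rw [← S.add_eq] at hee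
  rw [← neg_add, ← S.add_eq, ← Weight.coe_neg] at hff
  rw [← Weight.coe_neg] at hf₁ hf₂
  rcases S.eq_or γ hγ with rfl | rfl | rfl | rfl | rfl | rfl
  · exact mem he₁ A.left.e_ne_zero (A.e₁_mem K)
  · exact mem hf₁ A.left.f_ne_zero (A.f₁_mem K)
  · exact mem he₂ A.right.e_ne_zero (A.e₂_mem K)
  · exact mem hf₂ A.right.f_ne_zero (A.f₂_mem K)
  · exact mem hee A.lie_e₁_e₂_ne_zero (LieSubalgebra.lie_mem _ (A.e₁_mem K) (A.e₂_mem K))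
  · exact mem hff A.lie_f₁_f₂_ne_zero (LieSubalgebra.lie_mem _ (A.f₁_mem K) (A.f₂_mem K))

end IsA2RootSystem

variable [CharZero K]

lemma exists_toLieSubalgebra_eq_top (hα : α.IsNonZero)
    (hall : ∀ β : Weight K H L, β.IsNonZero → β = α ∨ β = -α) :
    ∃ (h e f : L) (t : IsSl2Triple h e f), t.toLieSubalgebra K = ⊤ := by
  obtain ⟨h, e, f, t, he, hf⟩ := exists_isSl2Triple_of_weight_isNonZero hα
  refine ⟨h, e, f, t, eq_top_of_rootSpace_le (H := H) fun γ hγ x hx => ?_⟩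
  rcases hall γ hγ with rfl | rfl
  · exact mem_of_mem_rootSpace hγ he t.e_ne_zero (Submodule.subset_span (by simp)) hx
  · exact mem_of_mem_rootSpace hγ (by simpa using hf) t.f_ne_zero
      (Submodule.subset_span (by simp)) hx

lemma eight_le_finrank_or (hli : LinearIndependent K ![(α : H → K), β])
    (hδ : (δ : H → K) = α + β) :
    (8 ≤ finrank K L ∧ IsA2RootSystem α β δ) ∨ 10 ≤ finrank K L := by
  have hH := two_le_finrank_cartan hli
  have hαδ : LinearIndependent K ![(α : H → K), δ] := by simpa [hδ] using hli
  have hβδ : LinearIndependent K ![(β : H → K), δ] := by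
    rw [hδ, add_comm, LinearIndependent.pair_add_right_iff]
    exact LinearIndependent.pair_symm_iff.1 hli
  have nonzero : ∀ γ ∈ [α, β, δ], γ.IsNonZero := by
    simpa using ⟨hli.ne_zero 0, hli.ne_zero 1, hαδ.ne_zero 1⟩
  have pairwise : [α, β, δ].Pairwise fun γ δ => γ ≠ δ ∧ γ ≠ -δ := by
    simpa [ne_and_ne_neg_of_linearIndependent hβδ] using
      ⟨ne_and_ne_neg_of_linearIndependent hli, ne_and_ne_neg_of_linearIndependent hαδ⟩
  by_cases hall : ∀ γ : Weight K H L, γ.IsNonZero → ∃ δ' ∈ [α, β, δ], γ = δ' ∨ γ = -δ'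
  · have := finrank_cartan_add_two_mul_length_le nonzero pairwise
    refine Or.inl ⟨by simp at this; omega, hli, hδ, fun γ hγ => ?_⟩
    simpa [or_assoc] using hall γ hγ
  · push Not at hall
    obtain ⟨γ, hγ0, hγ⟩ := hall
    have := finrank_cartan_add_two_mul_length_le (l := [γ, α, β, δ])
      (List.forall_mem_cons.2 ⟨hγ0, nonzero⟩) (List.pairwise_cons.2 ⟨hγ, pairwise⟩)
    exact Or.inr (by simp at this; omega)

lemma exists_add_eq_of_apply_coroot_neg {m : ℤ} (hα : α.IsNonZero) (hm : m < 0)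
    (h : β (coroot α) = m) : ∃ δ : Weight K H L, (δ : H → K) = α + β := by
  have hroot : rootSpace H ((1 : ℤ) • (α : H → K) + β) ≠ ⊥ := by
    rw [rootSpace_zsmul_add_ne_bot_iff α β hα]
    rw [apply_coroot_eq_cast α β, Int.cast_inj] at h
    omega
  exact ⟨⟨_, hroot⟩, by simp⟩

end RootSystem

variable {L : Type*} [LieRing L] [LieAlgebra ℂ L] [FiniteDimensional ℂ L] [LieAlgebra.IsSimple ℂ L]

section Cartan

variable {H : LieSubalgebra ℂ L} [H.IsCartanSubalgebra] {α β : Weight ℂ H L}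

/- Otherwise every root is either `±α` or orthogonal to `α`, so that all reflections preserve the
line spanned by `α`, contradicting the irreducibility of the root system. -/
lemma exists_apply_coroot_ne_zero (hα : α.IsNonZero) (hβ : β.IsNonZero) (h1 : β ≠ α)
    (h2 : β ≠ -α) :
    ∃ γ : Weight ℂ H L, γ.IsNonZero ∧ γ ≠ α ∧ γ ≠ -α ∧ γ (coroot α) ≠ 0 := by
  by_contra! hex
  have hαmem := Submodule.mem_span_singleton_self (R := ℂ) α.toLinear
  have hinv (γ : LieSubalgebra.root (H := H)) :
      (rootSystem H).reflection γ α.toLinear ∈ Submodule.span ℂ {α.toLinear} := by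
    rw [RootPairing.reflection_apply]
    by_cases hγ : (γ : Weight ℂ H L) = α ∨ (γ : Weight ℂ H L) = -α
    · refine sub_mem hαmem (Submodule.smul_mem _ _ ?_)
      rw [rootSystem_root_apply]
      rcases hγ with h | h
      · rwa [h]
      · rw [h, Weight.toLinear_neg]
        exact neg_mem hαmem
    · push Not at hγ
      have h0 : (rootSystem H).pairing ⟨α, by simpa using hα⟩ γ = 0 :=
        RootPairing.pairing_eq_zero_iff.2
          (hex γ (LieSubalgebra.isNonZero_coe_root γ) hγ.1 hγ.2)
      have h0' : (rootSystem H).coroot' γ α.toLinear = 0 := h0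
      rwa [h0', zero_smul, sub_zero]
  have htop : Submodule.span ℂ {α.toLinear} = ⊤ := by
    refine RootPairing.IsIrreducible.eq_top_of_invtSubmodule_reflection (P := rootSystem H) _
      (fun γ => ?_) fun h => hα ?_
    · rw [Module.End.mem_invtSubmodule, Submodule.span_singleton_le_iff_mem]
      exact hinv γ
    · exact funext fun u => LinearMap.congr_fun (Submodule.span_singleton_eq_bot.1 h) u
  obtain ⟨k, hk⟩ := Submodule.mem_span_singleton.1 (htop ▸ Submodule.mem_top : β.toLinear ∈ _)
  exact (eq_neg_or_eq_of_eq_smul α β hβ k (funext fun u => (LinearMap.congr_fun hk u).symm)).elim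
    h2 h1

lemma exists_add_eq_of_ne (hα : α.IsNonZero) (hβ : β.IsNonZero) (h1 : β ≠ α) (h2 : β ≠ -α) :
    ∃ γ δ : Weight ℂ H L, LinearIndependent ℂ ![(α : H → ℂ), γ] ∧ (δ : H → ℂ) = α + γ := by
  obtain ⟨γ, hγ, hγ1, hγ2, hne⟩ := exists_apply_coroot_ne_zero hα hβ h1 h2
  rw [apply_coroot_eq_cast α γ, Int.cast_ne_zero] at hne
  rcases hne.lt_or_gt with hneg | hpos
  · obtain ⟨δ, hδ⟩ := exists_add_eq_of_apply_coroot_neg hα hneg (apply_coroot_eq_cast α γ)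
    exact ⟨γ, δ, linearIndependent_pair_of_ne hα hγ hγ1 hγ2, hδ⟩
  · obtain ⟨δ, hδ⟩ := exists_add_eq_of_apply_coroot_neg (β := -γ) hα (neg_lt_zero.2 hpos)
      (by rw [Weight.coe_neg, Pi.neg_apply, apply_coroot_eq_cast α γ, Int.cast_neg])
    exact ⟨-γ, δ, by simpa using linearIndependent_pair_of_ne hα hγ hγ1 hγ2, hδ⟩

end Cartan

lemma exists_weight_isNonZero (H : LieSubalgebra ℂ L) [H.IsCartanSubalgebra] :
    ∃ α : Weight ℂ H L, α.IsNonZero := by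
  by_contra! hno
  have htop : (⊥ : LieSubalgebra ℂ L) = ⊤ :=
    eq_top_of_rootSpace_le (H := H) fun γ hγ => (hγ (hno γ)).elim
  refine LieAlgebra.IsSimple.non_abelian (R := ℂ) (L := L) ⟨fun a b => ?_⟩
  have ha : a ∈ (⊥ : LieSubalgebra ℂ L) := by
    rw [htop]
    exact LieSubalgebra.mem_top a
  rw [(LieSubalgebra.mem_bot a).1 ha, zero_lie]

variable (L) in
theorem exists_toLieSubalgebra_eq_top_or_eight_le_finrank_or :
    (∃ (h e f : L) (t : IsSl2Triple h e f), t.toLieSubalgebra ℂ = ⊤) ∨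
      (8 ≤ finrank ℂ L ∧ ∃ (h₁ e₁ f₁ h₂ e₂ f₂ : L) (A : IsA2Pair h₁ e₁ f₁ h₂ e₂ f₂),
        A.toLieSubalgebra ℂ = ⊤) ∨ 10 ≤ finrank ℂ L := by
  obtain ⟨x, hx⟩ := exists_isCartanSubalgebra_engel ℂ L
  obtain ⟨α, hα⟩ := exists_weight_isNonZero (LieSubalgebra.engel ℂ x)
  by_cases hall : ∀ β : Weight ℂ (LieSubalgebra.engel ℂ x) L, β.IsNonZero → β = α ∨ β = -α
  · exact Or.inl (exists_toLieSubalgebra_eq_top hα hall)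
  · push Not at hall
    obtain ⟨β, hβ, h1, h2⟩ := hall
    obtain ⟨γ, δ, hli, hδ⟩ := exists_add_eq_of_ne hα hβ h1 h2
    exact Or.inr <| (eight_le_finrank_or hli hδ).imp_left fun ⟨h8, S⟩ =>
      ⟨h8, S.exists_isA2Pair_toLieSubalgebra_eq_top⟩

end SimpleLieAlgebras

section NontrivialModules

open Module LieModule

lemma lie_top_top_eq_top {R L : Type*} [CommRing R] [LieRing L] [LieAlgebra R L]
    [LieAlgebra.IsSimple R L] : ⁅(⊤ : LieIdeal R L), (⊤ : LieIdeal R L)⁆ = ⊤ := by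
  refine (LieAlgebra.IsSimple.eq_bot_or_eq_top _).resolve_left fun h =>
    LieAlgebra.IsSimple.non_abelian (R := R) (L := L) ⟨fun x y => ?_⟩
  exact (LieSubmodule.mem_bot _).1 (h ▸ LieSubmodule.lie_mem_lie (LieSubmodule.mem_top x)
    (LieSubmodule.mem_top y))

-- The action is faithful and takes values in the endomorphisms of trace zero.
lemma finrank_lt_finrank_sq {K L M : Type*} [Field K] [CharZero K] [LieRing L] [LieAlgebra K L]
    [LieAlgebra.IsSimple K L] [AddCommGroup M] [Module K M] [FiniteDimensional K M]
    [LieRingModule L M] [LieModule K L M] {x : L} {m : M} (hxm : ⁅x, m⁆ ≠ 0) :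
    finrank K L < finrank K M ^ 2 := by
  have hinj : LinearMap.ker (toEnd K L M : L →ₗ[K] End K M) = ⊥ := by
    obtain h | h := LieAlgebra.IsSimple.eq_bot_or_eq_top (R := K) (LieModule.ker K L M)
    · exact (LieSubmodule.toSubmodule_eq_bot _).2 h
    · exact (hxm ((LieModule.mem_ker K L M x).1 (h ▸ LieSubmodule.mem_top x) m)).elim
  have htrace (y : L) : LinearMap.trace K M (toEnd K L M y) = 0 :=
    trace_toEnd_eq_zero_of_mem_lcs K L M le_rfl (x := y) (by
      rw [LieModule.lowerCentralSeries_succ, lowerCentralSeries_zero, lie_top_top_eq_top]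
      exact LieSubmodule.mem_top y)
  have hne : LinearMap.range (toEnd K L M : L →ₗ[K] End K M) ≠ ⊤ := fun htop => by
    obtain ⟨y, hy⟩ := LinearMap.range_eq_top.1 htop 1
    have hy0 := htrace y
    rw [show toEnd K L M y = 1 from hy, LinearMap.trace_one, Nat.cast_eq_zero] at hy0
    have := finrank_zero_iff.1 hy0
    exact hxm (Subsingleton.elim _ _)
  have hlt := Submodule.finrank_lt hne
  rwa [LinearMap.finrank_range_of_inj (LinearMap.ker_eq_bot.1 hinj), finrank_linearMap,
    ← sq] at hlt

variable {g : Type*} [LieRing g] [LieAlgebra ℂ g] {s : LieSubalgebra ℂ g}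

lemma IsIrreducibleSMod.exists_eq_span_singleton {U : Submodule ℂ g} (hU : IsIrreducibleSMod g s U)
    (htriv : ∀ x ∈ s, ∀ v ∈ U, ⁅x, v⁆ = 0) : ∃ c, U = Submodule.span ℂ {c} := by
  obtain ⟨c, hc, hc0⟩ := Submodule.exists_mem_ne_zero_of_ne_bot hU.1
  have hle : Submodule.span ℂ {c} ≤ U := (Submodule.span_singleton_le_iff_mem c U).2 hc
  have hinv : Invariant g s (Submodule.span ℂ {c}) := fun x hx w hw => by
    rw [htriv x hx w (hle hw)]
    exact zero_mem _
  exact ⟨c, (hU.le_of_mem hinv hc0 hc (Submodule.mem_span_singleton_self c)).antisymm hle⟩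

lemma IsSympatheticDecomp.finrank_levi_lt [FiniteDimensional ℂ g] {k : ℕ}
    {V : Fin k → Submodule ℂ g} (h : IsSympatheticDecomp s V) {i : Fin k}
    (hi : ∃ x ∈ s, ∃ v ∈ V i, ⁅x, v⁆ ≠ 0) : finrank ℂ s < finrank ℂ (V i) ^ 2 := by
  obtain ⟨x, hx, v, hv, hxv⟩ := hi
  have := h.isSimpleLevi.1
  let N : LieSubmodule ℂ s g := { V i with lie_mem := fun {y _} hw => h.lie_mem y.2 hw }
  exact finrank_lt_finrank_sq (K := ℂ) (L := s) (M := N) (x := ⟨x, hx⟩) (m := ⟨v, hv⟩)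
    fun h0 => hxv (congrArg Subtype.val h0)

namespace IsLeveledDecomp

variable {V : Fin 4 → Submodule ℂ g} {c : g}

lemma eq_zero_of_lie_eq_zero (h : IsLeveledDecomp s V) (hc : V 2 = Submodule.span ℂ {c}) {a : g}
    (ha : a ∈ V 0) (h0 : ⁅a, c⁆ = 0) : a = 0 := by
  refine (h.isDecomp.1 0).eq_zero_of_forall_lie_eq_zero (h.isDecomp.1 2).2.1
    (by rw [h.lie_zero_two]; exact h.ne_bot 3) ha fun y hy => ?_
  obtain ⟨r, rfl⟩ := Submodule.mem_span_singleton.1 (hc ▸ hy)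
  rw [lie_smul, h0, smul_zero]

lemma exists_eq_smul_of_isSymmetricTable (h : IsLeveledDecomp s V) (hV : IsSymmetricTable V)
    (hc : V 2 = Submodule.span ℂ {c}) : ∃ a, ∀ x ∈ V 0, ∃ r : ℂ, x = r • a := by
  have exists_lie_eq {x y : g} (hx : x ∈ V 0) (hy : y ∈ V 1) : ∃ r : ℂ, r • c = ⁅x, y⁆ :=
    Submodule.mem_span_singleton.1 (hc ▸ hV.lie_zero_one ▸ lie_mem_lieSpan2 hx hy)
  obtain ⟨a, ha, b, hb, hab⟩ : ∃ a ∈ V 0, ∃ b ∈ V 1, ⁅a, b⁆ ≠ 0 :=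
    exists_lie_ne_zero_of_lieSpan2_ne_bot (by rw [hV.lie_zero_one]; exact h.ne_bot 2)
  obtain ⟨p, hp⟩ := exists_lie_eq ha hb
  have hp0 : p ≠ 0 := by
    rintro rfl
    exact hab (by rw [← hp, zero_smul])
  refine ⟨a, fun x hx => ?_⟩
  obtain ⟨q, hq⟩ := exists_lie_eq hx hb
  have hjac := leibniz_lie x a b
  rw [lieSpan2_eq_bot.1 hV.lie_lie_zero_zero_one _ (lie_mem_lieSpan2 hx ha) b hb, ← hp, ← hq,
    zero_add, lie_smul, lie_smul] at hjac
  have h0 : p • x - q • a = 0 :=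
    h.eq_zero_of_lie_eq_zero hc (sub_mem (Submodule.smul_mem _ _ hx) (Submodule.smul_mem _ _ ha))
      (by rw [sub_lie, smul_lie, smul_lie, hjac, sub_self])
  exact ⟨p⁻¹ * q, by rw [mul_smul, ← sub_eq_zero.1 h0, inv_smul_smul₀ hp0]⟩

lemma exists_eq_smul_add_smul_of_isCyclicTable (h : IsLeveledDecomp s V) (hV : IsCyclicTable V)
    (hc : V 2 = Submodule.span ℂ {c}) :
    ∃ a b, ∀ x ∈ V 0, ∃ q r : ℂ, x = q • a + r • b := by
  have exists_lie_eq {x y : g} (hx : x ∈ V 0) (hy : y ∈ V 0) : ∃ r : ℂ, r • c = ⁅x, y⁆ :=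
    Submodule.mem_span_singleton.1 (hc ▸ hV.lie_zero_zero ▸ lie_mem_lieSpan2 hx hy)
  obtain ⟨a, ha, b, hb, hab⟩ : ∃ a ∈ V 0, ∃ b ∈ V 0, ⁅a, b⁆ ≠ 0 :=
    exists_lie_ne_zero_of_lieSpan2_ne_bot (by rw [hV.lie_zero_zero]; exact h.ne_bot 2)
  obtain ⟨p, hp⟩ := exists_lie_eq ha hb
  have hp0 : p ≠ 0 := by
    rintro rfl
    exact hab (by rw [← hp, zero_smul])
  refine ⟨a, b, fun x hx => ?_⟩
  obtain ⟨q, hq⟩ := exists_lie_eq hx ha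
  obtain ⟨r, hr⟩ := exists_lie_eq hx hb
  have hjac := leibniz_lie x a b
  rw [← hp, ← hq, ← hr, lie_smul, lie_smul, smul_lie, ← lie_skew c b] at hjac
  have h0 : p • x - (r • a - q • b) = 0 := by
    refine h.eq_zero_of_lie_eq_zero hc (sub_mem (Submodule.smul_mem _ _ hx)
      (sub_mem (Submodule.smul_mem _ _ ha) (Submodule.smul_mem _ _ hb))) ?_
    rw [sub_lie, sub_lie, smul_lie, smul_lie, smul_lie, hjac]
    module
  refine ⟨p⁻¹ * r, -(p⁻¹ * q), ?_⟩
  rw [neg_smul, mul_smul, mul_smul, ← sub_eq_add_neg, ← smul_sub, ← sub_eq_zero.1 h0,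
    inv_smul_smul₀ hp0]

-- If `s` acted trivially on `V 2 = ℂ c`, then `a ↦ ⁅a, c⁆` would be injective on `V 0`, and the
-- Jacobi identity would bound the dimension of `V 0` by two.
lemma exists_lie_two_ne_zero [FiniteDimensional ℂ g] (h : IsLeveledDecomp s V)
    (hT : IsCyclicTable V ∨ IsSymmetricTable V) (h4 : 4 ≤ finrank ℂ s) :
    ∃ x ∈ s, ∃ v ∈ V 2, ⁅x, v⁆ ≠ 0 := by
  by_contra! htriv
  obtain ⟨c, hc⟩ := (h.isDecomp.1 2).exists_eq_span_singleton htriv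
  obtain ⟨a, b, hab⟩ : ∃ a b, ∀ x ∈ V 0, ∃ q r : ℂ, x = q • a + r • b := by
    obtain hV | hV := hT
    · exact h.exists_eq_smul_add_smul_of_isCyclicTable hV hc
    · obtain ⟨a, ha⟩ := h.exists_eq_smul_of_isSymmetricTable hV hc
      exact ⟨a, 0, fun x hx => (ha x hx).imp fun q hq => ⟨0, by rw [hq, smul_zero, add_zero]⟩⟩
  have hle : V 0 ≤ Submodule.span ℂ (Set.range ![a, b]) := fun x hx => by
    obtain ⟨q, r, rfl⟩ := hab x hx
    simpa [Submodule.mem_span_pair] using ⟨r, q, add_comm _ _⟩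
  have h2 : finrank ℂ (V 0) ≤ 2 :=
    (Submodule.finrank_mono hle).trans (finrank_range_le_card (R := ℂ) (M := g) ![a, b])
  have := h.finrank_levi_lt (h.exists_lie_ne_zero (i := 0) (by decide))
  nlinarith

lemma finrank_levi_lt_finrank_sq [FiniteDimensional ℂ g] (h : IsLeveledDecomp s V)
    (hT : IsCyclicTable V ∨ IsSymmetricTable V) (h4 : 4 ≤ finrank ℂ s) (i : Fin 4) :
    finrank ℂ s < finrank ℂ (V i) ^ 2 := by
  refine h.finrank_levi_lt ?_
  obtain rfl | hi := eq_or_ne i 2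
  · exact h.exists_lie_two_ne_zero hT h4
  · exact h.exists_lie_ne_zero hi

end IsLeveledDecomp

end NontrivialModules

section A2Modules

open Module LieModule

variable {g : Type*} [LieRing g] [LieAlgebra ℂ g]

section WeightClass

variable {N : ℕ} {H x y : g} {c d : ZMod N}

/-- The sum of the eigenspaces of `ad H` for the integral eigenvalues in the residue class `c`
modulo `N`. -/
noncomputable def weightClass (N : ℕ) (H : g) (c : ZMod N) : Submodule ℂ g :=
  ⨆ n ∈ {n : ℤ | (n : ZMod N) = c}, Module.End.eigenspace (toEnd ℂ g g H) (n : ℂ)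

lemma mem_weightClass {n : ℤ} (hn : n = c) (hx : ⁅H, x⁆ = (n : ℂ) • x) : x ∈ weightClass N H c :=
  Submodule.mem_iSup_of_mem n <| Submodule.mem_iSup_of_mem hn <| Module.End.mem_eigenspace_iff.2 hx

lemma weightClass_le {W : Submodule ℂ g}
    (h : ∀ n : ℤ, n = c → ∀ x, ⁅H, x⁆ = (n : ℂ) • x → x ∈ W) : weightClass N H c ≤ W :=
  iSup₂_le fun n hn x hx => h n hn x (Module.End.mem_eigenspace_iff.1 hx)

lemma lie_mem_weightClass (hx : x ∈ weightClass N H c) (hy : y ∈ weightClass N H d) :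
    ⁅x, y⁆ ∈ weightClass N H (c + d) := by
  refine weightClass_le (W := (weightClass N H (c + d)).comap
    ((toEnd ℂ g g : g →ₗ[ℂ] Module.End ℂ g).flip y))
    (fun m hm x hx => ?_) hx
  refine weightClass_le (W := (weightClass N H (c + d)).comap (toEnd ℂ g g x))
    (fun n hn y hy => ?_) hy
  refine mem_weightClass (n := m + n) (by rw [Int.cast_add, hm, hn]) ?_
  rw [toEnd_apply_apply, leibniz_lie, hx, hy, smul_lie, lie_smul, Int.cast_add, add_smul]

lemma eq_of_mem_weightClass (hx0 : x ≠ 0) (hc : x ∈ weightClass N H c)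
    (hd : x ∈ weightClass N H d) : c = d := by
  by_contra hne
  have := ((Module.End.eigenspaces_iSupIndep (toEnd ℂ g g H)).comp
    (Int.cast_injective (α := ℂ))).disjoint_biSup_biSup
    (s := {n : ℤ | (n : ZMod N) = c}) (t := {n : ℤ | (n : ZMod N) = d})
    (Set.disjoint_left.2 fun n hc hd => hne (hc.symm.trans hd))
  exact hx0 (Submodule.disjoint_def.1 this x hc hd)

end WeightClass

lemma le_finrank_of_lie_eq_smul [FiniteDimensional ℂ g] {n : ℕ} {W : Submodule ℂ g} {H : g}
    {μ : Fin n → ℂ} (hμ : Function.Injective μ) {u : Fin n → g} (hu : ∀ i, u i ∈ W)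
    (hu0 : ∀ i, u i ≠ 0) (h : ∀ i, ⁅H, u i⁆ = μ i • u i) : n ≤ finrank ℂ W := by
  have hli := Module.End.eigenvectors_linearIndependent' (toEnd ℂ g g H) μ hμ u fun i =>
    ⟨Module.End.mem_eigenspace_iff.2 (h i), hu0 i⟩
  have hli' : LinearIndependent ℂ fun i => (⟨u i, hu i⟩ : W) := hli.of_comp W.subtype
  simpa using hli'.fintype_card_le_finrank

lemma invariant_lieSpan {S : Set g} {W : Submodule ℂ g} (h : ∀ x ∈ S, ∀ w ∈ W, ⁅x, w⁆ ∈ W) :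
    Invariant g (LieSubalgebra.lieSpan ℂ g S) W := by
  intro x hx
  induction hx using LieSubalgebra.lieSpan_induction with
  | mem x hx => exact h x hx
  | zero => simp
  | add x y _ _ hx hy => exact fun w hw => add_lie x y w ▸ add_mem (hx w hw) (hy w hw)
  | smul c x _ hx => exact fun w hw => smul_lie c x w ▸ W.smul_mem c (hx w hw)
  | lie x y _ _ hx hy =>
    exact fun w hw => lie_lie x y w ▸ sub_mem (hx _ (hy w hw)) (hy _ (hx w hw))

namespace IsA2Pair

variable {h₁ e₁ f₁ h₂ e₂ f₂ : g}

lemma invariant (A : IsA2Pair h₁ e₁ f₁ h₂ e₂ f₂) {W : Submodule ℂ g} (he₁ : ∀ w ∈ W, ⁅e₁, w⁆ ∈ W)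
    (hf₁ : ∀ w ∈ W, ⁅f₁, w⁆ ∈ W) (he₂ : ∀ w ∈ W, ⁅e₂, w⁆ ∈ W) (hf₂ : ∀ w ∈ W, ⁅f₂, w⁆ ∈ W) :
    Invariant g (A.toLieSubalgebra ℂ) W :=
  invariant_lieSpan (by simpa using ⟨he₁, hf₁, he₂, hf₂⟩)

-- The element `h₁ + 2 h₂` grades `𝔰𝔩₃` modulo `3` trivially: it takes the values `0` and `3` on the
-- simple roots.
lemma invariant_weightClass (A : IsA2Pair h₁ e₁ f₁ h₂ e₂ f₂) (c : ZMod 3) :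
    Invariant g (A.toLieSubalgebra ℂ) (weightClass 3 (h₁ + (2 : ℂ) • h₂) c) := by
  have stable {x : g} {n : ℤ} (hn : (n : ZMod 3) = 0)
      (hx : ⁅h₁ + (2 : ℂ) • h₂, x⁆ = (n : ℂ) • x) :
      ∀ w ∈ weightClass 3 (h₁ + (2 : ℂ) • h₂) c, ⁅x, w⁆ ∈ weightClass 3 (h₁ + (2 : ℂ) • h₂) c :=
    fun w hw => by simpa using lie_mem_weightClass (mem_weightClass hn hx) hw
  refine A.invariant (stable (n := 0) rfl ?_) (stable (n := 0) rfl ?_) (stable (n := 3) rfl ?_)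
    (stable (n := -3) rfl ?_)
  · rw [add_lie, smul_lie, A.left.lie_h_e_smul ℂ, A.lie_h₂_e₁]
    push_cast
    module
  · rw [add_lie, smul_lie, A.left.lie_lie_smul_f ℂ, A.lie_h₂_f₁]
    push_cast
    module
  · rw [add_lie, smul_lie, A.right.lie_h_e_smul ℂ, A.lie_h₁_e₂]
    push_cast
    module
  · rw [add_lie, smul_lie, A.right.lie_lie_smul_f ℂ, A.lie_h₁_f₂]
    push_cast
    module

end IsA2Pair

/-- `v` is a highest weight vector of weight `(p, q)` for an `A₂`-pair acting on `g`. -/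
structure IsA2HighestWeight {h₁ e₁ f₁ h₂ e₂ f₂ : g} (A : IsA2Pair h₁ e₁ f₁ h₂ e₂ f₂) (p q : ℕ)
    (v : g) : Prop where
  left : A.left.HasPrimitiveVectorWith v (p : ℂ)
  right : A.right.HasPrimitiveVectorWith v (q : ℂ)

namespace IsA2Pair

variable {h₁ e₁ f₁ h₂ e₂ f₂ : g}

lemma lie_h₁_add_h₂_lie_e₁ (A : IsA2Pair h₁ e₁ f₁ h₂ e₂ f₂) {μ : ℂ} {v : g}
    (hv : ⁅h₁ + h₂, v⁆ = μ • v) :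
    ⁅h₁ + h₂, ⁅e₁, v⁆⁆ = (μ + 1) • ⁅e₁, v⁆ := by
  rw [leibniz_lie, hv, add_lie, A.left.lie_h_e_smul ℂ, A.lie_h₂_e₁, lie_smul, add_lie, smul_lie,
    neg_lie]
  module

lemma exists_isA2HighestWeight [FiniteDimensional ℂ g] (A : IsA2Pair h₁ e₁ f₁ h₂ e₂ f₂)
    {W : Submodule ℂ g} (hW : W ≠ ⊥)
    (hinv : Invariant g (A.toLieSubalgebra ℂ) W) :
    ∃ p q, ∃ v ∈ W, IsA2HighestWeight A p q v := by
  have hh₁ := hinv h₁ (A.h₁_mem ℂ)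
  have hh₂ := hinv h₂ (A.symm_toLieSubalgebra ℂ ▸ A.symm.h₁_mem ℂ)
  obtain ⟨μ, ⟨w, hw, hw0, hμ⟩, hmax⟩ := exists_lie_eq_smul_of_maximal_re (h := h₁ + h₂) hW
    fun w hw => add_lie h₁ h₂ w ▸ add_mem (hh₁ w hw) (hh₂ w hw)
  set U := W ⊓ Module.End.eigenspace (toEnd ℂ g g (h₁ + h₂)) μ with hU
  have mem_U {x : g} : x ∈ U ↔ x ∈ W ∧ ⁅h₁ + h₂, x⁆ = μ • x := by
    rw [hU, Submodule.mem_inf, Module.End.mem_eigenspace_iff, toEnd_apply_apply]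
  obtain ⟨ν, ⟨v, hvU, hv0, hν⟩, -⟩ := exists_lie_eq_smul_of_maximal_re (h := h₁)
    ((Submodule.ne_bot_iff U).2 ⟨w, mem_U.2 ⟨hw, hμ⟩, hw0⟩) fun x hx => mem_U.2
      ⟨hh₁ x (mem_U.1 hx).1, by
        rw [leibniz_lie, add_lie, lie_self, A.symm.lie_h₁_h₂, (mem_U.1 hx).2, add_zero, zero_lie,
          zero_add, lie_smul]⟩
  obtain ⟨hvW, hv⟩ := mem_U.1 hvU
  have hν₂ : ⁅h₂, v⁆ = (μ - ν) • v := by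
    rw [sub_smul, ← hv, ← hν, add_lie, add_sub_cancel_left]
  have he₁ : ⁅e₁, v⁆ = 0 := hmax (μ + 1) (by simp) _ (hinv e₁ (A.e₁_mem ℂ) v hvW)
    (A.lie_h₁_add_h₂_lie_e₁ hv)
  have he₂ : ⁅e₂, v⁆ = 0 := hmax (μ + 1) (by simp) _ (hinv e₂ (A.e₂_mem ℂ) v hvW) <| by
    rw [add_comm h₁] at hv ⊢
    exact A.symm.lie_h₁_add_h₂_lie_e₁ hv
  have P : A.left.HasPrimitiveVectorWith v ν := ⟨hv0, hν, he₁⟩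
  have Q : A.right.HasPrimitiveVectorWith v (μ - ν) := ⟨hv0, hν₂, he₂⟩
  obtain ⟨p, rfl⟩ := P.exists_nat
  obtain ⟨q, hq⟩ := Q.exists_nat
  exact ⟨p, q, v, hvW, P, hq ▸ Q⟩

end IsA2Pair

namespace IsA2HighestWeight

variable {h₁ e₁ f₁ h₂ e₂ f₂ : g} {A : IsA2Pair h₁ e₁ f₁ h₂ e₂ f₂} {p q : ℕ} {v : g}
  {W : Submodule ℂ g}

lemma symm (h : IsA2HighestWeight A p q v) : IsA2HighestWeight A.symm q p v := ⟨h.right, h.left⟩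

lemma lie_h₁_lower (h : IsA2HighestWeight A p q v) (j : ℕ) :
    ⁅h₁, lower f₁ j v⁆ = ((p : ℂ) - 2 * j) • lower f₁ j v :=
  h.left.lie_h_pow_toEnd_f j

lemma lie_h₂_lower (h : IsA2HighestWeight A p q v) (j : ℕ) :
    ⁅h₂, lower f₁ j v⁆ = ((q + j : ℕ) : ℂ) • lower f₁ j v := by
  induction j with
  | zero => simpa only [lower_zero, add_zero] using h.right.lie_h
  | succ j ih =>
    rw [lower_succ, leibniz_lie, A.lie_h₂_f₁, ih, lie_smul]
    push_cast
    module

lemma lie_e₂_lower (h : IsA2HighestWeight A p q v) (j : ℕ) : ⁅e₂, lower f₁ j v⁆ = 0 := by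
  induction j with
  | zero => exact h.right.lie_e
  | succ j ih => rw [lower_succ, leibniz_lie, A.lie_e₂_f₁, ih, zero_lie, lie_zero, add_zero]

lemma hasPrimitiveVectorWith_lower (h : IsA2HighestWeight A p q v) {j : ℕ} (hj : j ≤ p) :
    A.right.HasPrimitiveVectorWith (lower f₁ j v) ((q + j : ℕ) : ℂ) :=
  ⟨h.left.pow_toEnd_f_ne_zero_of_eq_nat rfl hj, h.lie_h₂_lower j, h.lie_e₂_lower j⟩

lemma lower_lower_ne_zero (h : IsA2HighestWeight A p q v) {j k : ℕ} (hj : j ≤ p)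
    (hk : k ≤ q + j) : lower f₂ k (lower f₁ j v) ≠ 0 :=
  (h.hasPrimitiveVectorWith_lower hj).pow_toEnd_f_ne_zero_of_eq_nat rfl hk

/- On a root `a α₁ + b α₂` the coweight `11 h₁ + 7 h₂` takes the value `15 a + 3 b`; it separates
the weights of the vectors `lower f₂ k (lower f₁ j v)` with `k < 5`. -/
lemma lie_lower_lower (h : IsA2HighestWeight A p q v) (j k : ℕ) :
    ⁅(11 : ℂ) • h₁ + (7 : ℂ) • h₂, lower f₂ k (lower f₁ j v)⁆ =
      (11 * (p : ℂ) + 7 * q - (15 * j + 3 * k : ℕ)) • lower f₂ k (lower f₁ j v) := by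
  induction k with
  | zero =>
    rw [lower_zero, add_lie, smul_lie, smul_lie, h.lie_h₁_lower, h.lie_h₂_lower]
    push_cast
    module
  | succ k ih =>
    rw [lower_succ, leibniz_lie, ih, lie_smul, add_lie, smul_lie, smul_lie, A.lie_h₁_f₂,
      A.right.lie_lie_smul_f ℂ, add_lie, smul_lie, smul_lie, neg_lie, smul_lie]
    push_cast
    module

lemma le_finrank [FiniteDimensional ℂ g] (h : IsA2HighestWeight A p q v)
    (hW : Invariant g (A.toLieSubalgebra ℂ) W) (hv : v ∈ W) {n : ℕ} {J K : Fin n → ℕ}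
    (hinj : Function.Injective fun i => 15 * J i + 3 * K i) (hJ : ∀ i, J i ≤ p)
    (hK : ∀ i, K i ≤ q + J i) : n ≤ finrank ℂ W := by
  refine le_finrank_of_lie_eq_smul (μ := fun i => 11 * (p : ℂ) + 7 * q - (15 * J i + 3 * K i : ℕ))
    (fun i j hij => hinj ?_)
    (fun i => lower_mem (hW f₂ (A.f₂_mem ℂ)) (lower_mem (hW f₁ (A.f₁_mem ℂ)) hv (J i)) (K i))
    (fun i => h.lower_lower_ne_zero (hJ i) (hK i)) (fun i => h.lie_lower_lower (J i) (K i))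
  exact Nat.cast_injective (R := ℂ) (sub_right_injective hij)

lemma five_le_finrank_of_le [FiniteDimensional ℂ g] (h : IsA2HighestWeight A p q v)
    (hW : Invariant g (A.toLieSubalgebra ℂ) W) (hv : v ∈ W) (hpq : (1 ≤ p ∧ 1 ≤ q) ∨ 3 ≤ p) :
    5 ≤ finrank ℂ W := by
  rcases hpq with ⟨hp, hq⟩ | hp
  · exact h.le_finrank hW hv (J := ![0, 0, 1, 1, 1]) (K := ![0, 1, 0, 1, 2]) (by decide)
      (fun i => by fin_cases i <;> dsimp <;> lia) fun i => by fin_cases i <;> dsimp <;> lia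
  · exact h.le_finrank hW hv (J := ![0, 1, 1, 2, 2]) (K := ![0, 0, 1, 0, 1]) (by decide)
      (fun i => by fin_cases i <;> dsimp <;> lia) fun i => by fin_cases i <;> dsimp <;> lia

lemma five_le_finrank [FiniteDimensional ℂ g] (h : IsA2HighestWeight A p q v)
    (hW : Invariant g (A.toLieSubalgebra ℂ) W) (hv : v ∈ W) (h0 : p ≠ 0 ∨ q ≠ 0)
    (h3 : (p + 2 * q : ZMod 3) = 0) : 5 ≤ finrank ℂ W := by
  have hdvd : 3 ∣ p + 2 * q := (ZMod.natCast_eq_zero_iff _ 3).1 (by exact_mod_cast h3)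
  by_cases hpq : (1 ≤ p ∧ 1 ≤ q) ∨ 3 ≤ p
  · exact h.five_le_finrank_of_le hW hv hpq
  · exact h.symm.five_le_finrank_of_le (A.symm_toLieSubalgebra ℂ ▸ hW) hv (by omega)

lemma le_weightClass (h : IsA2HighestWeight A p q v)
    (hW : IsIrreducibleSMod g (A.toLieSubalgebra ℂ) W) (hv : v ∈ W) :
    W ≤ weightClass 3 (h₁ + (2 : ℂ) • h₂) (p + 2 * q) := by
  refine hW.le_of_mem (A.invariant_weightClass _) h.left.ne_zero hv ?_
  refine mem_weightClass (n := p + 2 * q) (by push_cast; rfl) ?_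
  rw [add_lie, smul_lie, h.left.lie_h, h.right.lie_h]
  push_cast
  module

lemma finrank_eq_one [FiniteDimensional ℂ g] (h : IsA2HighestWeight A 0 0 v)
    (hW : IsIrreducibleSMod g (A.toLieSubalgebra ℂ) W) (hv : v ∈ W) : finrank ℂ W = 1 := by
  have hf₁ : ⁅f₁, v⁆ = 0 := by simpa using h.left.pow_toEnd_f_eq_zero_of_eq_nat rfl
  have hf₂ : ⁅f₂, v⁆ = 0 := by simpa using h.right.pow_toEnd_f_eq_zero_of_eq_nat rfl
  have stable {x : g} (hx : ⁅x, v⁆ = 0) :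
      ∀ w ∈ Submodule.span ℂ {v}, ⁅x, w⁆ ∈ Submodule.span ℂ {v} := fun w hw => by
    obtain ⟨r, rfl⟩ := Submodule.mem_span_singleton.1 hw
    rw [lie_smul, hx, smul_zero]
    exact zero_mem _
  have hle := hW.le_of_mem
    (A.invariant (stable h.left.lie_e) (stable hf₁) (stable h.right.lie_e) (stable hf₂))
    h.left.ne_zero hv (Submodule.mem_span_singleton_self v)
  rw [hle.antisymm ((Submodule.span_singleton_le_iff_mem v W).2 hv),
    finrank_span_singleton h.left.ne_zero]

end IsA2HighestWeight

lemma add_eq_of_lieSpan2_eq {N : ℕ} {H : g} {c d k : ZMod N} {A B C : Submodule ℂ g}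
    (hA : A ≤ weightClass N H c) (hB : B ≤ weightClass N H d) (hC : C ≤ weightClass N H k)
    (h : lieSpan2 g A B = C) (hne : C ≠ ⊥) : c + d = k := by
  obtain ⟨x, hx, y, hy, hxy⟩ := exists_lie_ne_zero_of_lieSpan2_ne_bot (h ▸ hne)
  exact eq_of_mem_weightClass hxy (lie_mem_weightClass (hA hx) (hB hy))
    (hC (h ▸ lie_mem_lieSpan2 hx hy))

namespace IsLeveledDecomp

variable {s : LieSubalgebra ℂ g} {V : Fin 4 → Submodule ℂ g}

-- In both multiplication tables the weights satisfy a linear system over `ℤ / 3` whose only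
-- solution is zero.
lemma weightClass_eq_zero (hV : IsLeveledDecomp s V) (hT : IsCyclicTable V ∨ IsSymmetricTable V)
    {H : g} {c : Fin 4 → ZMod 3} (hc : ∀ i, V i ≤ weightClass 3 H (c i)) (i : Fin 4) :
    c i = 0 := by
  have add_eq {i j k : Fin 4} (h : lieSpan2 g (V i) (V j) = V k) : c i + c j = c k :=
    add_eq_of_lieSpan2_eq (hc i) (hc j) (hc k) h (hV.ne_bot k)
  have h02 := add_eq hV.lie_zero_two
  suffices c 0 = 0 ∧ c 1 = 0 ∧ c 2 = 0 ∧ c 3 = 0 by fin_cases i <;> simp [this]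
  obtain hT | hT := hT
  · have h00 := add_eq hT.lie_zero_zero
    have h01 := add_eq hT.lie_zero_one
    have h11 := add_eq hT.lie_one_one
    clear add_eq hc
    generalize c 0 = a, c 1 = b, c 2 = u, c 3 = v at *
    decide +revert
  · have h01 := add_eq hT.lie_zero_one
    have hor := hT.lie_eq.imp
      (fun ⟨h00, h11⟩ => And.intro (h00.imp (fun h => add_eq h) fun h => add_eq h) (add_eq h11))
      fun ⟨h00, h12⟩ => And.intro (add_eq h00) (add_eq h12)
    clear add_eq hc
    generalize c 0 = a, c 1 = b, c 2 = u, c 3 = v at *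
    decide +revert

lemma five_le_finrank_of_isA2Pair [FiniteDimensional ℂ g] {h₁ e₁ f₁ h₂ e₂ f₂ : g}
    {A : IsA2Pair h₁ e₁ f₁ h₂ e₂ f₂} (hV : IsLeveledDecomp (A.toLieSubalgebra ℂ) V)
    (hT : IsCyclicTable V ∨ IsSymmetricTable V) (h8 : 8 ≤ finrank ℂ (A.toLieSubalgebra ℂ))
    (i : Fin 4) : 5 ≤ finrank ℂ (V i) := by
  have hirr (i : Fin 4) := hV.isDecomp.1 i
  choose p q v hvV hv using fun i => A.exists_isA2HighestWeight (hirr i).1 (hirr i).2.1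
  refine (hv i).five_le_finrank (hirr i).2.1 (hvV i) ?_ <|
    hV.weightClass_eq_zero hT (fun j => (hv j).le_weightClass (hirr j) (hvV j)) i
  by_contra! h0
  have h1 : finrank ℂ (V i) = 1 :=
    IsA2HighestWeight.finrank_eq_one (by simpa only [h0] using hv i) (hirr i) (hvV i)
  have := hV.finrank_levi_lt_finrank_sq hT (by omega) i
  rw [h1] at this
  omega

end IsLeveledDecomp
end A2Modules

section Main

open Module

lemma finrank_iSup_of_iSupIndep {K M ι : Type*} [Field K] [AddCommGroup M] [Module K M]
    [FiniteDimensional K M] [Fintype ι] {p : ι → Submodule K M} (hp : iSupIndep p) :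
    finrank K ↥(⨆ i, p i) = ∑ i, finrank K (p i) := by
  classical
  have hinj : Function.Injective (DirectSum.coeLinearMap p) := hp.dfinsupp_lsum_injective
  rw [← DirectSum.range_coeLinearMap, LinearMap.finrank_range_of_inj hinj, finrank_directSum]

lemma IsSympatheticDecomp.finrank_eq {g : Type*} [LieRing g] [LieAlgebra ℂ g]
    [FiniteDimensional ℂ g] {k : ℕ} {s : LieSubalgebra ℂ g} {V : Fin k → Submodule ℂ g}
    (h : IsSympatheticDecomp s V) : finrank ℂ g = finrank ℂ s + ∑ i, finrank ℂ (V i) := by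
  rw [← finrank_iSup_of_iSupIndep h.isDecomp.2.1, h.isDecomp.2.2]
  exact (Submodule.finrank_add_eq_of_isCompl h.isSimpleLevi.2).symm

section Sl

open LieAlgebra.SpecialLinear

lemma finrank_sl_add_one (n K : Type*) [Fintype n] [DecidableEq n] [Nonempty n] [Field K] :
    finrank K (sl n K) + 1 = Fintype.card n * Fintype.card n := by
  have h := LinearMap.finrank_range_add_finrank_ker (Matrix.traceLinearMap n K K)
  rw [LinearMap.range_eq_top.2 Matrix.trace_surjective, finrank_top, finrank_self,
    finrank_matrix, finrank_self, mul_one, add_comm] at h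
  exact h

lemma finrank_sl_two (K : Type*) [Field K] : finrank K (sl (Fin 2) K) = 3 :=
  Nat.succ_injective (finrank_sl_add_one (Fin 2) K)

section CommRing

variable {R L : Type*} [CommRing R]

lemma apply_one_one (A : sl (Fin 2) R) : A.1 1 1 = -A.1 0 0 := by
  have htrace : Matrix.trace A.1 = 0 := A.2
  rw [Matrix.trace_fin_two] at htrace
  exact eq_neg_of_add_eq_zero_right htrace

variable [LieRing L] [LieAlgebra R L] {h e f : L}

variable (R) in
/-- The homomorphism from `𝔰𝔩₂` that maps the standard triple to a given `𝔰𝔩₂`-triple. -/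
def slTwoHom (t : IsSl2Triple h e f) : sl (Fin 2) R →ₗ⁅R⁆ L where
  toFun A := A.1 0 1 • e + A.1 1 0 • f + A.1 0 0 • h
  map_add' A B := by
    simp only [AddMemClass.coe_add, Matrix.add_apply]
    module
  map_smul' c A := by
    simp only [SetLike.val_smul, Matrix.smul_apply, smul_eq_mul, RingHom.id_apply]
    module
  map_lie' {A B} := by
    have hfe : ⁅f, e⁆ = -h := by rw [← lie_skew, t.lie_e_f]
    have heh : ⁅e, h⁆ = -((2 : R) • e) := by rw [← lie_skew, t.lie_h_e_smul R]
    have hfh : ⁅f, h⁆ = (2 : R) • f := by rw [← lie_skew, t.lie_lie_smul_f R, neg_neg]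
    simp only [sl_bracket, Matrix.sub_apply, Matrix.mul_apply, Fin.sum_univ_two, apply_one_one,
      lie_add, add_lie, lie_smul, smul_lie, lie_self, t.lie_e_f, hfe, heh, hfh, t.lie_h_e_smul R,
      t.lie_lie_smul_f R]
    module

lemma slTwoHom_apply (t : IsSl2Triple h e f) (A : sl (Fin 2) R) :
    slTwoHom R t A = A.1 0 1 • e + A.1 1 0 • f + A.1 0 0 • h := rfl

lemma slTwoHom_surjective {t : IsSl2Triple h e f} (ht : t.toLieSubalgebra R = ⊤) :
    Function.Surjective (slTwoHom R t) := fun x => by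
  obtain ⟨a, b, c, rfl⟩ := t.mem_toLieSubalgebra_iff.1 (ht ▸ LieSubalgebra.mem_top x)
  refine ⟨⟨!![c, a; b, -c], LinearMap.mem_ker.2 (by simp [Matrix.trace_fin_two])⟩, ?_⟩
  simp [slTwoHom_apply, t.lie_e_f]

end CommRing

section Field

variable {K L : Type*} [Field K] [CharZero K] [LieRing L] [LieAlgebra K L] {h e f : L}

variable (K) in
lemma linearIndependent_of_isSl2Triple (t : IsSl2Triple h e f) :
    LinearIndependent K ![e, f, h] := by
  have hinj : Function.Injective ![(2 : K), -2, 0] := by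
    simp [Function.Injective, Fin.forall_fin_succ, self_eq_neg, neg_eq_self]
  refine Module.End.eigenvectors_linearIndependent' (LieModule.toEnd K L L h) _ hinj _
    fun i => ⟨Module.End.mem_eigenspace_iff.2 ?_, ?_⟩
  · fin_cases i
    · exact t.lie_h_e_smul K
    · simpa using t.lie_lie_smul_f K
    · simp
  · fin_cases i
    exacts [t.e_ne_zero, t.f_ne_zero, t.h_ne_zero]

lemma slTwoHom_injective (t : IsSl2Triple h e f) : Function.Injective (slTwoHom K t) := by
  refine (injective_iff_map_eq_zero _).2 fun A hA => ?_
  have hcoord := Fintype.linearIndependent_iff.1 (linearIndependent_of_isSl2Triple K t)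
    ![A.1 0 1, A.1 1 0, A.1 0 0] (by simpa [Fin.sum_univ_three, slTwoHom_apply] using hA)
  have h01 : A.1 0 1 = 0 := hcoord 0
  have h10 : A.1 1 0 = 0 := hcoord 1
  have h00 : A.1 0 0 = 0 := hcoord 2
  ext i j
  fin_cases i <;> fin_cases j <;> simp [h01, h10, h00, apply_one_one]

/-- The identification with `𝔰𝔩₂` of a Lie algebra spanned by an `𝔰𝔩₂`-triple. -/
noncomputable def slTwoEquiv {t : IsSl2Triple h e f} (ht : t.toLieSubalgebra K = ⊤) :
    sl (Fin 2) K ≃ₗ⁅K⁆ L :=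
  LieEquiv.ofBijective (slTwoHom K t) ⟨slTwoHom_injective t, slTwoHom_surjective ht⟩

end Field
end Sl

section Map

variable {R L L' : Type*} [CommRing R] [LieRing L] [LieAlgebra R L] [LieRing L'] [LieAlgebra R L']
  {φ : L →ₗ⁅R⁆ L'}

lemma isSl2Triple_map (hφ : Function.Injective φ) {h e f : L} (t : IsSl2Triple h e f) :
    IsSl2Triple (φ h) (φ e) (φ f) where
  h_ne_zero := (map_ne_zero_iff φ hφ).2 t.h_ne_zero
  lie_e_f := by rw [← LieHom.map_lie, t.lie_e_f]
  lie_h_e_nsmul := by rw [← LieHom.map_lie, t.lie_h_e_nsmul, map_nsmul]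
  lie_h_f_nsmul := by rw [← LieHom.map_lie, t.lie_h_f_nsmul, map_neg, map_nsmul]

lemma toLieSubalgebra_isSl2Triple_map (hφ : Function.Injective φ) {h e f : L}
    (t : IsSl2Triple h e f) :
    (isSl2Triple_map hφ t).toLieSubalgebra R = (t.toLieSubalgebra R).map φ := by
  refine LieSubalgebra.toSubmodule_injective ?_
  change Submodule.span R _ = (Submodule.span R _).map (φ : L →ₗ[R] L')
  simp [Submodule.map_span, Set.image_insert_eq]

namespace IsA2Pair

variable {h₁ e₁ f₁ h₂ e₂ f₂ : L}

lemma map (hφ : Function.Injective φ) (A : IsA2Pair h₁ e₁ f₁ h₂ e₂ f₂) :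
    IsA2Pair (φ h₁) (φ e₁) (φ f₁) (φ h₂) (φ e₂) (φ f₂) where
  left := isSl2Triple_map hφ A.left
  right := isSl2Triple_map hφ A.right
  lie_e₁_f₂ := by rw [← LieHom.map_lie, A.lie_e₁_f₂, map_zero]
  lie_e₂_f₁ := by rw [← LieHom.map_lie, A.lie_e₂_f₁, map_zero]
  lie_h₁_e₂ := by rw [← LieHom.map_lie, A.lie_h₁_e₂, map_neg]
  lie_h₁_f₂ := by rw [← LieHom.map_lie, A.lie_h₁_f₂]
  lie_h₂_e₁ := by rw [← LieHom.map_lie, A.lie_h₂_e₁, map_neg]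
  lie_h₂_f₁ := by rw [← LieHom.map_lie, A.lie_h₂_f₁]
  lie_h₁_h₂ := by rw [← LieHom.map_lie, A.lie_h₁_h₂, map_zero]

lemma toLieSubalgebra_map (hφ : Function.Injective φ) (A : IsA2Pair h₁ e₁ f₁ h₂ e₂ f₂) :
    (A.map hφ).toLieSubalgebra R = (A.toLieSubalgebra R).map φ := by
  simp [toLieSubalgebra, LieSubalgebra.map_lieSpan, Set.image_insert_eq]

end IsA2Pair
end Map

lemma map_incl_top {R L : Type*} [CommRing R] [LieRing L] [LieAlgebra R L]
    (s : LieSubalgebra R L) : (⊤ : LieSubalgebra R s).map s.incl = s := by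
  rw [← LieHom.range_eq_map, LieSubalgebra.incl_range]

namespace IsLeveledDecomp

variable {g : Type*} [LieRing g] [LieAlgebra ℂ g] [FiniteDimensional ℂ g] {s : LieSubalgebra ℂ g}
  {V : Fin 4 → Submodule ℂ g}

lemma finrank_of_toLieSubalgebra_eq_top (hV : IsLeveledDecomp s V)
    (hT : IsCyclicTable V ∨ IsSymmetricTable V) {h e f : s} {t : IsSl2Triple h e f}
    (ht : t.toLieSubalgebra ℂ = ⊤) :
    22 ≤ ∑ i, finrank ℂ (V i) ∧ (∑ i, finrank ℂ (V i) = 22 →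
      finrank ℂ (V 0) = 7 ∧ finrank ℂ (V 1) = 5 ∧ finrank ℂ (V 2) = 7 ∧ finrank ℂ (V 3) = 3 ∧
        centerRad g = V 3) := by
  have hs := toLieSubalgebra_isSl2Triple_map (φ := s.incl) Subtype.val_injective t
  rw [ht, map_incl_top] at hs
  exact finrank_of_sl2 (hs.symm ▸ hV) hT

lemma five_le_finrank_of_toLieSubalgebra_eq_top (hV : IsLeveledDecomp s V)
    (hT : IsCyclicTable V ∨ IsSymmetricTable V) (h8 : 8 ≤ finrank ℂ s)
    {h₁ e₁ f₁ h₂ e₂ f₂ : s} {A : IsA2Pair h₁ e₁ f₁ h₂ e₂ f₂} (hA : A.toLieSubalgebra ℂ = ⊤)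
    (i : Fin 4) : 5 ≤ finrank ℂ (V i) := by
  have hs := A.toLieSubalgebra_map (φ := s.incl) Subtype.val_injective
  rw [hA, map_incl_top] at hs
  exact five_le_finrank_of_isA2Pair (hs.symm ▸ hV) hT (by rwa [hs]) i

lemma exists_toLieSubalgebra_eq_top_or_lt_finrank (hV : IsLeveledDecomp s V)
    (hT : IsCyclicTable V ∨ IsSymmetricTable V) :
    (∃ (h e f : s) (t : IsSl2Triple h e f), t.toLieSubalgebra ℂ = ⊤) ∨ 25 < finrank ℂ g := by
  have := hV.isSimpleLevi.1
  refine (exists_toLieSubalgebra_eq_top_or_eight_le_finrank_or s).imp_right fun hs => ?_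
  rw [hV.finrank_eq, Fin.sum_univ_four]
  obtain ⟨h8, h₁, e₁, f₁, h₂, e₂, f₂, A, hA⟩ | h10 := hs
  · have h5 := hV.five_le_finrank_of_toLieSubalgebra_eq_top hT h8 hA
    linarith [h5 0, h5 1, h5 2, h5 3]
  · have h4 (i : Fin 4) : 4 ≤ finrank ℂ (V i) := by
      nlinarith [hV.finrank_levi_lt_finrank_sq hT (by lia) i]
    linarith [h4 0, h4 1, h4 2, h4 3]

theorem twentyFive_le_finrank_and_of_eq (hV : IsLeveledDecomp s V)
    (hT : IsCyclicTable V ∨ IsSymmetricTable V) :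
    25 ≤ finrank ℂ g ∧ (finrank ℂ g = 25 →
      Nonempty (s ≃ₗ⁅ℂ⁆ LieAlgebra.SpecialLinear.sl (Fin 2) ℂ) ∧
        finrank ℂ (V 0) = 7 ∧ finrank ℂ (V 1) = 5 ∧ finrank ℂ (V 2) = 7 ∧ finrank ℂ (V 3) = 3 ∧
          centerRad g = V 3) := by
  obtain ⟨h, e, f, t, ht⟩ | hlt := hV.exists_toLieSubalgebra_eq_top_or_lt_finrank hT
  · have h3 : finrank ℂ s = 3 := (slTwoEquiv ht).toLinearEquiv.finrank_eq ▸ finrank_sl_two ℂ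
    obtain ⟨h22, hdim⟩ := hV.finrank_of_toLieSubalgebra_eq_top hT ht
    rw [hV.finrank_eq, h3]
    exact ⟨by lia, fun h25 => ⟨⟨(slTwoEquiv ht).symm⟩, hdim (by lia)⟩⟩
  · exact ⟨hlt.le, fun h25 => (hlt.ne' h25).elim⟩

end IsLeveledDecomp
end Main

end Symp

/-- a non-semisimple sympathetic Lie algebra with simple Levi subalgebra and
4 simple modules satisfying the convention has dimension ≥ 25, with equality iff the Levi
subalgebra is `sl₂(ℂ)` and the modules have dimensions 7, 5, 7, 3 (highest weights
6, 4, 6, 2), the centre of the radical being the 3-dimensional one. -/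
theorem stmt16 (g : Type*) [LieRing g] [LieAlgebra ℂ g] [FiniteDimensional ℂ g]
    (hsymp : Symp.IsSympathetic g)
    (hnss : LieAlgebra.radical ℂ g ≠ ⊥)
    (s : LieSubalgebra ℂ g) (hs : Symp.IsSimpleLevi g s)
    (V : Fin 4 → Submodule ℂ g) (hdec : Symp.IsDecomp g s V)
    (hconv : Symp.Convention g V) :
    25 ≤ Module.finrank ℂ g ∧
    (Module.finrank ℂ g = 25 ↔
      Nonempty (s ≃ₗ⁅ℂ⁆ LieAlgebra.SpecialLinear.sl (Fin 2) ℂ) ∧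
      ∃ e : Equiv.Perm (Fin 4),
        Module.finrank ℂ (V (e 0)) = 7 ∧
        Module.finrank ℂ (V (e 1)) = 5 ∧
        Module.finrank ℂ (V (e 2)) = 7 ∧
        Module.finrank ℂ (V (e 3)) = 3 ∧
        Symp.centerRad g = V (e 3)) := by
  have hV : Symp.IsSympatheticDecomp s V := ⟨hsymp, hs, hdec, hconv⟩
  obtain ⟨e, hVe, hT⟩ := hV.exists_perm_table
  obtain ⟨h25, heq⟩ := hVe.twentyFive_le_finrank_and_of_eq hT
  refine ⟨h25, fun h => (heq h).imp_right fun hdim => ⟨e, hdim⟩, ?_⟩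
  rintro ⟨⟨E⟩, e', h0, h1, h2, h3, -⟩
  rw [hV.finrank_eq, E.toLinearEquiv.finrank_eq, Symp.finrank_sl_two,
    ← Equiv.sum_comp e' fun i => Module.finrank ℂ (V i), Fin.sum_univ_four, h0, h1, h2, h3]
  rfl
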